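/- Assume the stated hypotheses on Ω, and let M > 0. For every ε > 0 there exists a constant C > 0, depending only on ε, M, Ω, n, p, with the following property: for every function f : Ω → ℝ that is bounded by M and Lipschitz with constant at most M, and every u ∈ C²(Ω) ∩ C(Ω̄) satisfying −Δu = |∇u|^p + f in Ω and u = 0 on ∂Ω, one has |∇u(x)| ≤ (1+ε) d_p δ(x)^{−β} + C for all x ∈ Ω. -/

import Mathlib

open Set Metric Filter RealInnerProductSpace

noncomputable section

set_option linter.unusedVariables false

/-- A set `Ω ⊆ ℝⁿ` has boundary of class `C²`: near each boundary point, `Ω` is the strict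
sublevel set of a `C²` function with nonvanishing gradient (equivalently, after a rigid motion,
the boundary is locally the graph of a `C²` function with `Ω` strictly on one side). -/
def IsC2Boundary {n : ℕ} (Ω : Set (EuclideanSpace ℝ (Fin n))) : Prop :=
  ∀ x ∈ frontier Ω, ∃ f : EuclideanSpace ℝ (Fin n) → ℝ, ∃ U ∈ nhds x,
    ContDiffOn ℝ 2 f U ∧ (∀ y ∈ U, fderiv ℝ f y ≠ 0) ∧
    U ∩ Ω = U ∩ {y | f y < 0} ∧ U ∩ frontier Ω = U ∩ {y | f y = 0}

/-- The Laplacian of `u : ℝⁿ → ℝ`, as the sum of the second derivatives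
`∂²u/∂xᵢ²` (computed via iterated Fréchet derivatives). -/
def lap {n : ℕ} (u : EuclideanSpace ℝ (Fin n) → ℝ) (x : EuclideanSpace ℝ (Fin n)) : ℝ :=
  ∑ i : Fin n, fderiv ℝ (fun y => fderiv ℝ u y (EuclideanSpace.single i (1 : ℝ))) x
    (EuclideanSpace.single i (1 : ℝ))


section Aux

open Topology

/-- Necessary second order condition at a local maximum, in one variable. -/
lemma line_test {ψ ψ1 : ℝ → ℝ} {c : ℝ} (hmax : IsLocalMax ψ 0)
    (h1 : ∀ᶠ t in 𝓝 (0:ℝ), HasDerivAt ψ (ψ1 t) t) (h2 : HasDerivAt ψ1 c 0) :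
    ψ1 0 = 0 ∧ c ≤ 0 := by
  have h0 : ψ1 0 = 0 := hmax.hasDerivAt_eq_zero h1.self_of_nhds
  refine ⟨h0, ?_⟩
  by_contra hc
  push Not at hc
  have hd : deriv ψ =ᶠ[𝓝 0] ψ1 := h1.mono fun t ht => ht.deriv
  have hdd : deriv (deriv ψ) 0 = c := by
    rw [hd.deriv_eq]; exact h2.deriv
  have hmin : IsLocalMin ψ 0 := by
    refine isLocalMin_of_deriv_deriv_pos (by rw [hdd]; exact hc) ?_ ?_
    · rw [hd.self_of_nhds, h0]
    · exact h1.self_of_nhds.continuousAt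
  have hconst : ψ =ᶠ[𝓝 0] fun _ => ψ 0 := by
    filter_upwards [hmax, hmin] with t h1 h2
    exact le_antisymm h1 h2
  have : deriv (deriv ψ) 0 = 0 := by
    have e1 : deriv ψ =ᶠ[𝓝 0] fun _ => 0 := by
      have := hconst.deriv
      simpa using this
    rw [e1.deriv_eq]; simp
  linarith

/-- classical solutions, with explicit gradient and Hessian -/
structure Sol {n : ℕ} (p : ℝ) (S : Set (EuclideanSpace ℝ (Fin n)))
    (v g : EuclideanSpace ℝ (Fin n) → ℝ)
    (G : EuclideanSpace ℝ (Fin n) → EuclideanSpace ℝ (Fin n))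
    (H : EuclideanSpace ℝ (Fin n) → EuclideanSpace ℝ (Fin n) →L[ℝ] EuclideanSpace ℝ (Fin n)) :
    Prop where
  isOpen : IsOpen S
  hv : ∀ x ∈ S, HasFDerivAt v (innerSL ℝ (G x)) x
  hG : ∀ x ∈ S, HasFDerivAt G (H x) x
  eq : ∀ x ∈ S, ∑ i : Fin n, ⟪H x (EuclideanSpace.single i (1:ℝ)), EuclideanSpace.single i (1:ℝ)⟫
    = -(‖G x‖ ^ p + g x)

lemma sum_inner_sq {n : ℕ} (ν : EuclideanSpace ℝ (Fin n)) :
    ∑ i : Fin n, ⟪ν, EuclideanSpace.single i (1:ℝ)⟫ ^ 2 = ‖ν‖ ^ 2 := by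
  rw [EuclideanSpace.norm_sq_eq]
  refine Finset.sum_congr rfl fun i _ => ?_
  simp [EuclideanSpace.inner_single_right]

lemma sum_inner_smul {n : ℕ} (ν : EuclideanSpace ℝ (Fin n)) :
    ∑ i : Fin n, ⟪ν, EuclideanSpace.single i (1:ℝ)⟫ • (EuclideanSpace.single i (1:ℝ)) = ν := by
  have := (EuclideanSpace.basisFun (Fin n) ℝ).sum_repr' ν
  simpa [real_inner_comm] using this

variable {n : ℕ} {p : ℝ} {S : Set (EuclideanSpace ℝ (Fin n))}
  {v g : EuclideanSpace ℝ (Fin n) → ℝ}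
  {G : EuclideanSpace ℝ (Fin n) → EuclideanSpace ℝ (Fin n)}
  {H : EuclideanSpace ℝ (Fin n) → EuclideanSpace ℝ (Fin n) →L[ℝ] EuclideanSpace ℝ (Fin n)}

lemma hasDerivAt_line (x ξ : EuclideanSpace ℝ (Fin n)) (t : ℝ) :
    HasDerivAt (fun t : ℝ => x + t • ξ) ξ t := by
  simpa using ((hasDerivAt_id t).smul_const ξ).const_add x

lemma tendsto_line (x ξ : EuclideanSpace ℝ (Fin n)) :
    Tendsto (fun t : ℝ => x + t • ξ) (𝓝 0) (𝓝 x) := by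
  have := (hasDerivAt_line x ξ 0).continuousAt.tendsto
  simpa using this

lemma Sol.line1 (hs : Sol p S v g G H) {x : EuclideanSpace ℝ (Fin n)} (hx : x ∈ S)
    (ξ : EuclideanSpace ℝ (Fin n)) :
    ∀ᶠ t in 𝓝 (0:ℝ), HasDerivAt (fun t : ℝ => v (x + t • ξ)) ⟪G (x + t • ξ), ξ⟫ t := by
  have h := (tendsto_line x ξ).eventually (hs.isOpen.mem_nhds hx)
  filter_upwards [h] with t ht
  exact (hs.hv _ ht).comp_hasDerivAt t (hasDerivAt_line x ξ t)

lemma Sol.line2 (hs : Sol p S v g G H) {x : EuclideanSpace ℝ (Fin n)} (hx : x ∈ S)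
    (ξ : EuclideanSpace ℝ (Fin n)) :
    HasDerivAt (fun t : ℝ => ⟪G (x + t • ξ), ξ⟫) ⟪H x ξ, ξ⟫ 0 := by
  have h1 : HasDerivAt (fun t : ℝ => G (x + t • ξ)) (H x ξ) 0 := by
    have hG := hs.hG x hx
    have h3 : HasFDerivAt G (H x) (x + (0:ℝ) • ξ) := by simpa using hG
    exact h3.comp_hasDerivAt (0:ℝ) (hasDerivAt_line x ξ 0)
  have := h1.inner ℝ (hasDerivAt_const (0:ℝ) ξ)
  simpa using this

lemma Sol.contG (hs : Sol p S v g G H) : ContinuousOn G S := fun x hx =>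
  (hs.hG x hx).continuousAt.continuousWithinAt

lemma Sol.contv (hs : Sol p S v g G H) : ContinuousOn v S := fun x hx =>
  (hs.hv x hx).continuousAt.continuousWithinAt

/-- convexity of `‖·‖ ^ p` -/
lemma conv_pow (hp : 2 < p) (P X : EuclideanSpace ℝ (Fin n)) :
    ‖P‖ ^ p + p * ‖P‖ ^ (p - 2) * ⟪P, X - P⟫ ≤ ‖X‖ ^ p := by
  rcases eq_or_ne P 0 with rfl | hP
  · simp [Real.zero_rpow (by linarith : p ≠ 0), Real.zero_rpow (by linarith : p - 2 ≠ 0)]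
    positivity
  have ha : 0 < ‖P‖ := norm_pos_iff.mpr hP
  have hb : 0 ≤ ‖X‖ := norm_nonneg X
  set a := ‖P‖ with ha_def
  set b := ‖X‖ with hb_def
  have h1 : ⟪P, X - P⟫ ≤ a * b - a ^ 2 := by
    rw [inner_sub_right, real_inner_self_eq_norm_sq]
    have := real_inner_le_norm P X
    linarith
  have h2 : 1 + p * (b / a - 1) ≤ (1 + (b / a - 1)) ^ p := by
    apply one_add_mul_self_le_rpow_one_add
    · have : 0 ≤ b / a := by positivity
      linarith
    · linarith
  have h3 : (1 + (b / a - 1)) ^ p = b ^ p / a ^ p := by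
    rw [← Real.div_rpow hb ha.le]; congr 1; ring
  rw [h3] at h2
  have hap : 0 < a ^ p := Real.rpow_pos_of_pos ha p
  have h4 : a ^ p * (1 + p * (b / a - 1)) ≤ b ^ p := by
    rw [le_div_iff₀ hap] at h2; linarith
  have h5 : a ^ p = a ^ (p - 2) * a ^ 2 := by
    rw [← Real.rpow_natCast a 2, ← Real.rpow_add ha]; norm_num
  have h6 : 0 < a ^ (p - 2) := Real.rpow_pos_of_pos ha _
  have h7 : p * a ^ (p - 2) * ⟪P, X - P⟫ ≤ p * a ^ (p - 2) * (a * b - a ^ 2) :=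
    mul_le_mul_of_nonneg_left h1 (by positivity)
  have h8 : a ^ p * (1 + p * (b / a - 1)) = a ^ p + p * a ^ (p - 2) * (a * b - a ^ 2) := by
    rw [h5]; field_simp
  linarith

/-- consequence of convexity -/
lemma conv_pow' (hp : 2 < p) (P X : EuclideanSpace ℝ (Fin n)) :
    ‖P‖ ^ p - ‖X‖ ^ p ≤ p * ‖P‖ ^ (p - 1) * ‖P - X‖ := by
  have h := conv_pow hp P X
  have h1 : ⟪P, P - X⟫ ≤ ‖P‖ * ‖P - X‖ := real_inner_le_norm _ _
  have h2 : ⟪P, X - P⟫ = - ⟪P, P - X⟫ := by rw [← inner_neg_right]; simp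
  rcases eq_or_ne P 0 with rfl | hP
  · have : (0:ℝ) ≤ ‖X‖ ^ p := by positivity
    simp [Real.zero_rpow (by linarith : p ≠ 0), Real.zero_rpow (by linarith : p - 1 ≠ 0)]
    exact this
  have ha : 0 < ‖P‖ := norm_pos_iff.mpr hP
  have h5 : ‖P‖ ^ (p - 1) = ‖P‖ ^ (p - 2) * ‖P‖ := by
    nth_rewrite 3 [← Real.rpow_one ‖P‖]
    rw [← Real.rpow_add ha]; congr 1; ring
  have h6 : 0 < ‖P‖ ^ (p - 2) := Real.rpow_pos_of_pos ha _
  rw [h5]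
  have h7 : p * ‖P‖ ^ (p - 2) * ⟪P, P - X⟫ ≤ p * ‖P‖ ^ (p - 2) * (‖P‖ * ‖P - X‖) :=
    mul_le_mul_of_nonneg_left h1 (by positivity)
  rw [h2] at h
  linarith

end Aux

section Aux2

open Topology

variable {n : ℕ} {p : ℝ} {S : Set (EuclideanSpace ℝ (Fin n))}
  {v g : EuclideanSpace ℝ (Fin n) → ℝ}
  {G : EuclideanSpace ℝ (Fin n) → EuclideanSpace ℝ (Fin n)}
  {H : EuclideanSpace ℝ (Fin n) → EuclideanSpace ℝ (Fin n) →L[ℝ] EuclideanSpace ℝ (Fin n)}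

lemma Sol.mvt (hs : Sol p S v g G H) {x w : EuclideanSpace ℝ (Fin n)} {h : ℝ} (hh : 0 < h)
    (hseg : ∀ t ∈ Icc 0 h, x + t • w ∈ S) :
    ∃ t ∈ Ioo 0 h, ⟪G (x + t • w), w⟫ = (v (x + h • w) - v x) / h := by
  have hd : ∀ t ∈ Icc 0 h, HasDerivAt (fun t : ℝ => v (x + t • w)) ⟪G (x + t • w), w⟫ t := by
    intro t ht
    exact (hs.hv _ (hseg t ht)).comp_hasDerivAt t (hasDerivAt_line x w t)
  obtain ⟨c, hc, hc2⟩ := exists_hasDerivAt_eq_slope (fun t : ℝ => v (x + t • w))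
    (fun t => ⟪G (x + t • w), w⟫) hh
    (fun t ht => (hd t ht).continuousAt.continuousWithinAt)
    (fun t ht => hd t (Ioo_subset_Icc_self ht))
  refine ⟨c, hc, ?_⟩
  simpa using hc2

lemma hasDerivAt_normsq_line (x ξ : EuclideanSpace ℝ (Fin n)) (t : ℝ) :
    HasDerivAt (fun t : ℝ => ‖x + t • ξ‖ ^ 2) (2 * ⟪x + t • ξ, ξ⟫) t :=
  (hasDerivAt_line x ξ t).norm_sq

lemma hasDerivAt_inner_line (b x ξ : EuclideanSpace ℝ (Fin n)) (t : ℝ) :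
    HasDerivAt (fun t : ℝ => ⟪b, x + t • ξ⟫) ⟪b, ξ⟫ t := by
  have := (hasDerivAt_const t b).inner ℝ (hasDerivAt_line x ξ t)
  simpa using this

lemma hasDerivAt_inner_line' (x ξ : EuclideanSpace ℝ (Fin n)) (t : ℝ) :
    HasDerivAt (fun t : ℝ => ⟪x + t • ξ, ξ⟫) (‖ξ‖ ^ 2) t := by
  have := (hasDerivAt_line x ξ t).inner ℝ (hasDerivAt_const t ξ)
  simpa using this

/-- The algebraic contradiction at the maximum point of the difference quotient. -/
lemma lin_alg (hp : 2 < p) {L h k : ℝ} {F2 q gx gy : ℝ} (hh : 0 < h) (hk : -1 ≤ h * k)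
    {X Y N w : EuclideanSpace ℝ (Fin n)} (hL : 0 ≤ L) (hgy : |gy| ≤ L)
    (hgl : |gx - gy| ≤ L * (h * ‖w‖))
    (hgrad : (1 + h * k) • Y - X = h • N)
    (hlap : (1 + h * k) ^ 2 * (-(‖Y‖ ^ p + gy)) + (‖X‖ ^ p + gx) ≤ h * (F2 + q)) :
    ((p - 2) * k - h * k ^ 2) * ‖Y‖ ^ p
      - p * ‖(1 + h * k) • Y‖ ^ (p - 2) * ⟪(1 + h * k) • Y, N⟫ - L * ‖w‖
      - |2 * k + h * k ^ 2| * L ≤ F2 + q := by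
  set P := (1 + h * k) • Y with hP
  have h1 := conv_pow hp P X
  have h2 : X - P = -(h • N) := by rw [← hgrad]; abel
  rw [h2, inner_neg_right, inner_smul_right] at h1
  have hk1 : 0 ≤ 1 + h * k := by linarith
  have h3 : ‖P‖ ^ p = (1 + h * k) ^ p * ‖Y‖ ^ p := by
    rw [hP, norm_smul, Real.norm_of_nonneg hk1, Real.mul_rpow hk1 (norm_nonneg _)]
  have h4 : 1 + p * (h * k) ≤ (1 + h * k) ^ p :=
    one_add_mul_self_le_rpow_one_add hk (by linarith)
  have hYp : 0 ≤ ‖Y‖ ^ p := by positivity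
  have h5 : (1 + p * (h * k)) * ‖Y‖ ^ p ≤ ‖P‖ ^ p := by
    rw [h3]; exact mul_le_mul_of_nonneg_right h4 hYp
  have h6 : (2 * k + h * k ^ 2) * gy ≤ |2 * k + h * k ^ 2| * L := by
    calc (2 * k + h * k ^ 2) * gy ≤ |(2 * k + h * k ^ 2) * gy| := le_abs_self _
      _ = |2 * k + h * k ^ 2| * |gy| := abs_mul _ _
      _ ≤ _ := mul_le_mul_of_nonneg_left hgy (abs_nonneg _)
  have h7 : -(L * (h * ‖w‖)) ≤ gx - gy := neg_le_of_abs_le hgl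
  have key : h * (((p - 2) * k - h * k ^ 2) * ‖Y‖ ^ p
      - p * ‖P‖ ^ (p - 2) * ⟪P, N⟫ - L * ‖w‖
      - |2 * k + h * k ^ 2| * L) ≤ h * (F2 + q) := by
    have h8 := mul_le_mul_of_nonneg_left h6 hh.le
    nlinarith
  exact le_of_mul_le_mul_left key hh

set_option maxHeartbeats 2000000 in
lemma Sol.lin (hp : 2 < p) (hs : Sol p S v g G H) {L : ℝ} (hL : 0 ≤ L)
    (hgb : ∀ x ∈ S, |g x| ≤ L) (hgl : ∀ x ∈ S, ∀ y ∈ S, |g x - g y| ≤ L * ‖x - y‖)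
    {x1 : EuclideanSpace ℝ (Fin n)} (hx1 : x1 ∈ S) (e b ν : EuclideanSpace ℝ (Fin n)) (k q : ℝ)
    (F F1 F2 : ℝ → ℝ) (hν : ‖ν‖ = 1)
    (hF : ∀ᶠ t in 𝓝 ⟪ν, x1⟫, HasDerivAt F (F1 t) t)
    (hF1 : ∀ᶠ t in 𝓝 ⟪ν, x1⟫, HasDerivAt F1 (F2 t) t) (hF2 : ContinuousAt F2 ⟪ν, x1⟫)
    (hmax : ∀ᶠ x in 𝓝 x1,
      ⟪G x, e + k • (x - x1)⟫ ≤ F ⟪ν, x⟫ + ⟪b, x - x1⟫ + q / 2 * ‖x - x1‖ ^ 2)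
    (heq : ⟪G x1, e⟫ = F ⟪ν, x1⟫) :
    (p - 2) * k * ‖G x1‖ ^ p - p * ‖G x1‖ ^ (p - 2) * ⟪G x1, F1 ⟪ν, x1⟫ • ν + b⟫
      - L * ‖e‖ - 2 * |k| * L ≤ F2 ⟪ν, x1⟫ + n * q := by
  by_contra hcon
  push Not at hcon
  set gap := (p - 2) * k * ‖G x1‖ ^ p - p * ‖G x1‖ ^ (p - 2) * ⟪G x1, F1 ⟪ν, x1⟫ • ν + b⟫
      - L * ‖e‖ - 2 * |k| * L - (F2 ⟪ν, x1⟫ + n * q) with hgap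
  have hgap0 : 0 < gap := by rw [hgap]; linarith
  obtain ⟨σ, hσ, hσg⟩ : ∃ σ : ℝ, 0 < σ ∧ n * (2 * σ) < gap := by
    refine ⟨gap / (2 * (n + 1)), by positivity, ?_⟩
    have : (n:ℝ) * (2 * (gap / (2 * (n + 1)))) = gap * (n / (n + 1)) := by field_simp
    rw [this]
    have h2 : (n:ℝ) / (n + 1) < 1 := by rw [div_lt_one (by positivity)]; linarith
    nlinarith
  -- the continuous function
  let Q : EuclideanSpace ℝ (Fin n) × EuclideanSpace ℝ (Fin n) × ℝ → ℝ := fun z =>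
    ((p - 2) * k - z.2.2 * k ^ 2) * ‖G z.2.1‖ ^ p
      - p * ‖(1 + z.2.2 * k) • G z.2.1‖ ^ (p - 2) *
        ⟪(1 + z.2.2 * k) • G z.2.1, F1 ⟪ν, z.1⟫ • ν + b + (q + 2 * σ) • (z.1 - x1)⟫
      - L * ‖e + k • (z.1 - x1)‖ - |2 * k + z.2.2 * k ^ 2| * L
      - (F2 ⟪ν, z.1⟫ + n * (q + 2 * σ))
  have hGc : ContinuousAt G x1 := (hs.hG x1 hx1).continuousAt
  have hQc : ContinuousAt Q (x1, x1, 0) := by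
    have cx : ContinuousAt (fun z : EuclideanSpace ℝ (Fin n) × EuclideanSpace ℝ (Fin n) × ℝ => z.1)
      (x1, x1, 0) := continuousAt_fst
    have cy : ContinuousAt (fun z : EuclideanSpace ℝ (Fin n) × EuclideanSpace ℝ (Fin n) × ℝ => z.2.1)
      (x1, x1, 0) := by fun_prop
    have ch : ContinuousAt (fun z : EuclideanSpace ℝ (Fin n) × EuclideanSpace ℝ (Fin n) × ℝ => z.2.2)
      (x1, x1, 0) := by fun_prop
    have cG : ContinuousAt (fun z : EuclideanSpace ℝ (Fin n) × EuclideanSpace ℝ (Fin n) × ℝ =>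
      G z.2.1) (x1, x1, 0) := ContinuousAt.comp (x := (x1, x1, (0:ℝ))) (by simpa using hGc) cy
    have cin : ContinuousAt (fun z : EuclideanSpace ℝ (Fin n) × EuclideanSpace ℝ (Fin n) × ℝ =>
      ⟪ν, z.1⟫) (x1, x1, 0) := continuousAt_const.inner cx
    have cF1 : ContinuousAt (fun z : EuclideanSpace ℝ (Fin n) × EuclideanSpace ℝ (Fin n) × ℝ =>
      F1 ⟪ν, z.1⟫) (x1, x1, 0) :=
      ContinuousAt.comp (g := F1) (x := (x1, x1, (0:ℝ)))
        (by simpa using hF1.self_of_nhds.continuousAt) cin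
    have cF2 : ContinuousAt (fun z : EuclideanSpace ℝ (Fin n) × EuclideanSpace ℝ (Fin n) × ℝ =>
      F2 ⟪ν, z.1⟫) (x1, x1, 0) :=
      ContinuousAt.comp (g := F2) (x := (x1, x1, (0:ℝ))) (by simpa using hF2) cin
    have cP : ContinuousAt (fun z : EuclideanSpace ℝ (Fin n) × EuclideanSpace ℝ (Fin n) × ℝ =>
      (1 + z.2.2 * k) • G z.2.1) (x1, x1, 0) :=
      (continuousAt_const.add (ch.mul continuousAt_const)).smul cG
    have cN : ContinuousAt (fun z : EuclideanSpace ℝ (Fin n) × EuclideanSpace ℝ (Fin n) × ℝ =>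
      F1 ⟪ν, z.1⟫ • ν + b + (q + 2 * σ) • (z.1 - x1)) (x1, x1, 0) :=
      ((cF1.smul continuousAt_const).add continuousAt_const).add (by fun_prop)
    have cE : ContinuousAt (fun z : EuclideanSpace ℝ (Fin n) × EuclideanSpace ℝ (Fin n) × ℝ =>
      e + k • (z.1 - x1)) (x1, x1, 0) := by fun_prop
    refine ((((ContinuousAt.mul ?_ ?_).sub (ContinuousAt.mul ?_ ?_)).sub ?_).sub ?_).sub ?_
    · exact continuousAt_const.sub (ch.mul continuousAt_const)
    · exact cG.norm.rpow_const (Or.inr (by linarith))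
    · exact continuousAt_const.mul (cP.norm.rpow_const (Or.inr (by linarith)))
    · exact cP.inner cN
    · exact continuousAt_const.mul cE.norm
    · exact ((continuousAt_const.add (ch.mul continuousAt_const)).abs).mul continuousAt_const
    · exact cF2.add continuousAt_const
  have hQ0 : 0 < Q (x1, x1, 0) := by
    have : Q (x1, x1, 0) = gap - n * (2 * σ) := by
      simp only [Q, hgap]
      simp [abs_mul]
      ring
    rw [this]; linarith
  have hQe := hQc.eventually (lt_mem_nhds hQ0)
  -- collect all the local conditions
  have hS : ∀ᶠ x in 𝓝 x1, x ∈ S := hs.isOpen.mem_nhds hx1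
  have tin : Tendsto (fun x : EuclideanSpace ℝ (Fin n) => ⟪ν, x⟫) (𝓝 x1) (𝓝 ⟪ν, x1⟫) :=
    (continuousAt_const.inner continuousAt_id).tendsto
  have hFx := tin.eventually (hF.and hF1)
  have hFx' := hFx
  obtain ⟨r1, hr1, hr1'⟩ := Metric.eventually_nhds_iff_ball.mp (hS.and (hFx.and hmax))
  obtain ⟨r2, hr2, hr2'⟩ := Metric.eventually_nhds_iff_ball.mp hQe
  set r := min r1 r2 with hr
  have hr0 : 0 < r := lt_min hr1 hr2
  set ρ := r / 2 with hρ
  have hρ0 : 0 < ρ := by positivity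
  have hρr : ρ < r := by rw [hρ]; linarith
  have hball : ∀ x ∈ ball x1 r, x ∈ S := fun x hx =>
    (hr1' x (ball_subset_ball (min_le_left _ _) hx)).1
  -- uniform continuity of G
  set ρ' := (ρ + r) / 2 with hρ'
  have hρρ' : ρ < ρ' := by rw [hρ']; linarith
  have hρ'r : ρ' < r := by rw [hρ']; linarith
  have hKc : IsCompact (closedBall x1 ρ') := isCompact_closedBall _ _
  have hGu : UniformContinuousOn G (closedBall x1 ρ') :=
    hKc.uniformContinuousOn_of_continuous
      (hs.contG.mono fun x hx => hball x (closedBall_subset_ball hρ'r hx))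
  set W := ‖e‖ + |k| * r + 1 with hW
  have hW0 : 0 < W := by positivity
  obtain ⟨d, hd0, hd⟩ := Metric.uniformContinuousOn_iff.mp hGu (σ * ρ ^ 2 / 2 / W) (by positivity)
  -- choice of h
  obtain ⟨h, hh0, hh1, hh2, hh3, hh4⟩ : ∃ h : ℝ, 0 < h ∧ h < r2 ∧ h * W < d ∧ h * W < ρ' - ρ ∧
      h * |k| < 1 := by
    have hc : ∀ c : ℝ, Tendsto (fun h : ℝ => h * c) (𝓝[>] 0) (𝓝 0) := by
      intro c
      have : Tendsto (fun h : ℝ => h * c) (𝓝 0) (𝓝 (0 * c)) := tendsto_id.mul_const c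
      rw [zero_mul] at this
      exact this.mono_left nhdsWithin_le_nhds
    have e1 := (hc 1).eventually (gt_mem_nhds hr2)
    have e2 := (hc W).eventually (gt_mem_nhds hd0)
    have e3 := (hc W).eventually (gt_mem_nhds (sub_pos.mpr hρρ'))
    have e4 := (hc |k|).eventually (gt_mem_nhds one_pos)
    have e5 : ∀ᶠ h : ℝ in 𝓝[>] 0, 0 < h := self_mem_nhdsWithin
    obtain ⟨h, a1, a2, a3, a4, a5⟩ := (e1.and (e2.and (e3.and (e4.and e5)))).exists
    exact ⟨h, a5, by simpa using a1, a2, a3, a4⟩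
  -- the points
  have hwn : ∀ x ∈ closedBall x1 ρ, ‖e + k • (x - x1)‖ ≤ W := by
    intro x hx
    rw [mem_closedBall, dist_eq_norm] at hx
    calc ‖e + k • (x - x1)‖ ≤ ‖e‖ + ‖k • (x - x1)‖ := norm_add_le _ _
      _ = ‖e‖ + |k| * ‖x - x1‖ := by rw [norm_smul, Real.norm_eq_abs]
      _ ≤ W := by
        rw [hW]
        have := mul_le_mul_of_nonneg_left (hx.trans hρr.le) (abs_nonneg k)
        linarith
  have hyin : ∀ x ∈ closedBall x1 ρ, ∀ t ∈ Icc 0 h, x + t • (e + k • (x - x1)) ∈ closedBall x1 ρ' ∧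
      dist (x + t • (e + k • (x - x1))) x < d := by
    intro x hx t ht
    have h1 : ‖t • (e + k • (x - x1))‖ ≤ h * W := by
      rw [norm_smul, Real.norm_of_nonneg ht.1]
      exact mul_le_mul ht.2 (hwn x hx) (norm_nonneg _) hh0.le
    rw [mem_closedBall, dist_eq_norm] at hx
    refine ⟨?_, ?_⟩
    · rw [mem_closedBall, dist_eq_norm]
      have : x + t • (e + k • (x - x1)) - x1 = (x - x1) + t • (e + k • (x - x1)) := by abel
      rw [this]
      have := norm_add_le (x - x1) (t • (e + k • (x - x1)))
      linarith
    · rw [dist_eq_norm, add_sub_cancel_left]; linarith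
  have happ : ∀ x ∈ closedBall x1 ρ,
      |(v (x + h • (e + k • (x - x1))) - v x) / h - ⟪G x, e + k • (x - x1)⟫| < σ * ρ ^ 2 / 2 := by
    intro x hx
    obtain ⟨t, ht, hteq⟩ := hs.mvt (x := x) (w := e + k • (x - x1)) hh0
      (fun t ht => hball _ (closedBall_subset_ball hρ'r (hyin x hx t ht).1))
    rw [← hteq, ← inner_sub_left]
    obtain ⟨hy1, hy2⟩ := hyin x hx t (Ioo_subset_Icc_self ht)
    have hxx : x ∈ closedBall x1 ρ' := closedBall_subset_closedBall hρρ'.le hx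
    have h2 := hd _ hy1 _ hxx hy2
    rw [dist_eq_norm] at h2
    calc _ ≤ ‖G (x + t • (e + k • (x - x1))) - G x‖ * ‖e + k • (x - x1)‖ :=
          abs_real_inner_le_norm _ _
      _ ≤ ‖G (x + t • (e + k • (x - x1))) - G x‖ * W :=
          mul_le_mul_of_nonneg_left (hwn x hx) (norm_nonneg _)
      _ < σ * ρ ^ 2 / 2 / W * W := mul_lt_mul_of_pos_right h2 hW0
      _ = σ * ρ ^ 2 / 2 := by field_simp
  -- maximum point
  let D : EuclideanSpace ℝ (Fin n) → ℝ := fun x =>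
    (v (x + h • (e + k • (x - x1))) - v x) / h
      - (F ⟪ν, x⟫ + ⟪b, x - x1⟫ + (q / 2 + σ) * ‖x - x1‖ ^ 2)
  have hDc : ContinuousOn D (closedBall x1 ρ) := by
    have c0 : ContinuousOn (fun x : EuclideanSpace ℝ (Fin n) => x + h • (e + k • (x - x1)))
        (closedBall x1 ρ) := by fun_prop
    have c1 : ContinuousOn (fun x => v (x + h • (e + k • (x - x1)))) (closedBall x1 ρ) := by
      refine hs.contv.comp c0 fun x hx => ?_
      exact hball _ (closedBall_subset_ball hρ'r (hyin x hx h ⟨hh0.le, le_rfl⟩).1)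
    have c2 : ContinuousOn v (closedBall x1 ρ) :=
      hs.contv.mono fun x hx => hball x (closedBall_subset_ball hρr hx)
    have c3 : ContinuousOn (fun x => F ⟪ν, x⟫) (closedBall x1 ρ) := by
      intro x hx
      have hx' := (hr1' x (ball_subset_ball (min_le_left _ _) (closedBall_subset_ball hρr hx))).2.1
      have hx'' : ContinuousAt F ⟪ν, x⟫ := hx'.1.continuousAt
      exact (ContinuousAt.comp (f := fun x => ⟪ν, x⟫) hx''
        (continuousAt_const.inner continuousAt_id)).continuousWithinAt
    refine ((c1.sub c2).div_const h).sub ((c3.add ?_).add ?_)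
    · fun_prop
    · fun_prop
  obtain ⟨x, hxK, hxmax⟩ := (isCompact_closedBall x1 ρ).exists_isMaxOn
    ⟨x1, mem_closedBall_self hρ0.le⟩ hDc
  have hD1 : -(σ * ρ ^ 2 / 2) < D x1 := by
    have := happ x1 (mem_closedBall_self hρ0.le)
    rw [abs_lt] at this
    simp only [D]
    simp only [sub_self, smul_zero, add_zero, inner_zero_right, norm_zero] at this ⊢
    rw [← heq]
    norm_num
    linarith [this.1]
  have hxint : x ∈ ball x1 ρ := by
    by_contra hxn
    have hxe : ‖x - x1‖ = ρ := by
      rw [mem_closedBall, dist_eq_norm] at hxK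
      rw [mem_ball, dist_eq_norm] at hxn
      push Not at hxn
      exact le_antisymm hxK hxn
    have h1 := happ x hxK
    rw [abs_lt] at h1
    have h2 := (hr1' x (ball_subset_ball (min_le_left _ _) (closedBall_subset_ball hρr hxK))).2.2
    have h3 : D x1 ≤ D x := hxmax (mem_closedBall_self hρ0.le)
    have h4 : D x < -(σ * ρ ^ 2 / 2) := by
      simp only [D]
      rw [hxe] at h2 ⊢
      have h5 := h1.2
      have h6 : (q / 2 + σ) * ρ ^ 2 = q / 2 * ρ ^ 2 + 2 * (σ * ρ ^ 2 / 2) := by ring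
      rw [h6]
      linarith
    linarith
  have hloc : IsLocalMax D x := by
    have : closedBall x1 ρ ∈ 𝓝 x := mem_of_superset (isOpen_ball.mem_nhds hxint) ball_subset_closedBall
    exact hxmax.isLocalMax this
  have hxr : x ∈ ball x1 r := closedBall_subset_ball hρr hxK
  have hxS : x ∈ S := hball x hxr
  set y := x + h • (e + k • (x - x1)) with hy
  have hyr : y ∈ ball x1 r := closedBall_subset_ball hρ'r (hyin x hxK h ⟨hh0.le, le_rfl⟩).1
  have hyS : y ∈ S := hball y hyr
  have hFx : ∀ᶠ x' in 𝓝 x, HasDerivAt F (F1 ⟪ν, x'⟫) ⟪ν, x'⟫ := by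
    have : ball x1 r ∈ 𝓝 x := isOpen_ball.mem_nhds hxr
    filter_upwards [this] with x' hx'
    exact (hr1' x' (ball_subset_ball (min_le_left _ _) hx')).2.1.1
  have hF1x : HasDerivAt F1 (F2 ⟪ν, x⟫) ⟪ν, x⟫ :=
    (hr1' x (ball_subset_ball (min_le_left _ _) hxr)).2.1.2
  -- line tests
  have hlt : ∀ ξ : EuclideanSpace ℝ (Fin n),
      ((⟪G y, (1 + h * k) • ξ⟫ - ⟪G x, ξ⟫) / h
        - (F1 ⟪ν, x⟫ * ⟪ν, ξ⟫ + ⟪b, ξ⟫ + (q / 2 + σ) * (2 * ⟪x - x1, ξ⟫)) = 0) ∧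
      ((⟪H y ((1 + h * k) • ξ), (1 + h * k) • ξ⟫ - ⟪H x ξ, ξ⟫) / h
        - (F2 ⟪ν, x⟫ * ⟪ν, ξ⟫ * ⟪ν, ξ⟫ + (q / 2 + σ) * (2 * ‖ξ‖ ^ 2)) ≤ 0) := by
    intro ξ
    have hpt : ∀ t : ℝ, x + t • ξ + h • (e + k • (x + t • ξ - x1)) = y + t • ((1 + h * k) • ξ) := by
      intro t; rw [hy]; module
    have hm : IsLocalMax (fun t : ℝ => D (x + t • ξ)) 0 := by
      have := (tendsto_line x ξ).eventually hloc
      simpa [IsLocalMax, IsMaxFilter] using this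
    have hsub : ∀ t : ℝ, x + t • ξ - x1 = (x - x1) + t • ξ := fun t => by abel
    have hm' : IsLocalMax (fun t : ℝ => (v (y + t • ((1 + h * k) • ξ)) - v (x + t • ξ)) / h
      - (F ⟪ν, x + t • ξ⟫ + ⟪b, (x - x1) + t • ξ⟫ + (q / 2 + σ) * ‖(x - x1) + t • ξ‖ ^ 2)) 0 := by
      have : (fun t : ℝ => D (x + t • ξ)) = (fun t : ℝ => (v (y + t • ((1 + h * k) • ξ)) - v (x + t • ξ)) / h
      - (F ⟪ν, x + t • ξ⟫ + ⟪b, (x - x1) + t • ξ⟫ + (q / 2 + σ) * ‖(x - x1) + t • ξ‖ ^ 2)) := by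
        funext t
        simp only [D]
        rw [hpt, hsub]
      rwa [this] at hm
    have := line_test (ψ1 := fun t => (⟪G (y + t • ((1 + h * k) • ξ)), (1 + h * k) • ξ⟫
        - ⟪G (x + t • ξ), ξ⟫) / h
        - (F1 ⟪ν, x + t • ξ⟫ * ⟪ν, ξ⟫ + ⟪b, ξ⟫ + (q / 2 + σ) * (2 * ⟪x - x1 + t • ξ, ξ⟫)))
        (c := ((⟪H y ((1 + h * k) • ξ), (1 + h * k) • ξ⟫ - ⟪H x ξ, ξ⟫) / h
        - (F2 ⟪ν, x⟫ * ⟪ν, ξ⟫ * ⟪ν, ξ⟫ + (q / 2 + σ) * (2 * ‖ξ‖ ^ 2)))) hm' ?_ ?_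
    · simpa using this
    · filter_upwards [hs.line1 hyS ((1 + h * k) • ξ), hs.line1 hxS ξ,
        (tendsto_line x ξ).eventually hFx] with t a1 a2 a3
      have a4 := a3.comp t (hasDerivAt_inner_line ν x ξ t)
      exact ((a1.sub a2).div_const h).sub ((a4.add (hasDerivAt_inner_line b (x - x1) ξ t)).add
        ((hasDerivAt_normsq_line (x - x1) ξ t).const_mul _))
    · have a1 := hs.line2 hyS ((1 + h * k) • ξ)
      have a2 := hs.line2 hxS ξ
      have a3 : HasDerivAt (fun t : ℝ => F1 ⟪ν, x + t • ξ⟫) (F2 ⟪ν, x⟫ * ⟪ν, ξ⟫) 0 := by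
        have hz : HasDerivAt F1 (F2 ⟪ν, x⟫) ⟪ν, x + (0:ℝ) • ξ⟫ := by simpa using hF1x
        exact hz.comp 0 (hasDerivAt_inner_line ν x ξ 0)
      have a4 := ((a3.mul_const ⟪ν, ξ⟫).add_const ⟪b, ξ⟫).add
        (((hasDerivAt_inner_line' (x - x1) ξ 0).const_mul 2).const_mul (q / 2 + σ))
      exact ((a1.sub a2).div_const h).sub a4
  have hhne : h ≠ 0 := hh0.ne'
  have hgrad : (1 + h * k) • G y - G x = h • (F1 ⟪ν, x⟫ • ν + b + (q + 2 * σ) • (x - x1)) := by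
    refine ext_inner_right ℝ fun ξ => ?_
    have := (hlt ξ).1
    simp only [inner_sub_left, inner_add_left, inner_smul_left, inner_smul_right,
      RCLike.conj_to_real] at this ⊢
    field_simp at this
    linarith
  have hsum := Finset.sum_le_sum (s := Finset.univ) fun (i : Fin n) _ =>
    (hlt (EuclideanSpace.single i (1:ℝ))).2
  have hlap : (1 + h * k) ^ 2 * (-(‖G y‖ ^ p + g y)) + (‖G x‖ ^ p + g x) ≤
      h * (F2 ⟪ν, x⟫ + n * (q + 2 * σ)) := by
    have e1 : ∑ i : Fin n, ((⟪H y ((1 + h * k) • EuclideanSpace.single i (1:ℝ)),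
        (1 + h * k) • EuclideanSpace.single i (1:ℝ)⟫
        - ⟪H x (EuclideanSpace.single i (1:ℝ)), EuclideanSpace.single i (1:ℝ)⟫) / h
        - (F2 ⟪ν, x⟫ * ⟪ν, EuclideanSpace.single i (1:ℝ)⟫ * ⟪ν, EuclideanSpace.single i (1:ℝ)⟫
          + (q / 2 + σ) * (2 * ‖(EuclideanSpace.single i (1:ℝ) : EuclideanSpace ℝ (Fin n))‖ ^ 2)))
        = ((1 + h * k) ^ 2 * (-(‖G y‖ ^ p + g y)) + (‖G x‖ ^ p + g x)) / h
          - (F2 ⟪ν, x⟫ + n * (q + 2 * σ)) := by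
      have s1 := hs.eq y hyS
      have s2 := hs.eq x hxS
      have s3 := sum_inner_sq ν
      rw [hν] at s3
      have : ∀ i : Fin n, ((⟪H y ((1 + h * k) • EuclideanSpace.single i (1:ℝ)),
        (1 + h * k) • EuclideanSpace.single i (1:ℝ)⟫
        - ⟪H x (EuclideanSpace.single i (1:ℝ)), EuclideanSpace.single i (1:ℝ)⟫) / h
        - (F2 ⟪ν, x⟫ * ⟪ν, EuclideanSpace.single i (1:ℝ)⟫ * ⟪ν, EuclideanSpace.single i (1:ℝ)⟫
          + (q / 2 + σ) * (2 * ‖(EuclideanSpace.single i (1:ℝ) : EuclideanSpace ℝ (Fin n))‖ ^ 2)))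
        = (1 + h * k) ^ 2 / h *
            ⟪H y (EuclideanSpace.single i (1:ℝ)), EuclideanSpace.single i (1:ℝ)⟫
          - 1 / h * ⟪H x (EuclideanSpace.single i (1:ℝ)), EuclideanSpace.single i (1:ℝ)⟫
          - F2 ⟪ν, x⟫ * ⟪ν, EuclideanSpace.single i (1:ℝ)⟫ ^ 2 - (q + 2 * σ) := by
        intro i
        simp only [map_smul, inner_smul_left, inner_smul_right, RCLike.conj_to_real,
          PiLp.norm_single, norm_one]
        field_simp
        ring
      rw [Finset.sum_congr rfl fun i _ => this i]
      simp only [Finset.sum_sub_distrib, ← Finset.mul_sum, s1, s2, s3]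
      simp
      field_simp
      ring
    rw [e1] at hsum
    simp only [Finset.sum_const_zero] at hsum
    rw [sub_nonpos, div_le_iff₀ hh0] at hsum
    linarith
  have hxy : ‖x - y‖ = h * ‖e + k • (x - x1)‖ := by
    rw [hy, sub_add_cancel_left, norm_neg, norm_smul, Real.norm_of_nonneg hh0.le]
  have hkk : -1 ≤ h * k := by
    have := mul_le_mul_of_nonneg_left (neg_abs_le k) hh0.le
    linarith
  have hfin := lin_alg hp hh0 hkk (w := e + k • (x - x1)) hL (hgb y hyS)
    (by have := hgl x hxS y hyS; rwa [hxy] at this) hgrad hlap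
  have hQp : 0 < Q (x, y, h) := by
    apply hr2'
    rw [mem_ball, Prod.dist_eq, Prod.dist_eq]
    have h1 : dist x x1 < r2 := lt_of_lt_of_le hxr (min_le_right _ _)
    have h2 : dist y x1 < r2 := lt_of_lt_of_le hyr (min_le_right _ _)
    have h3 : dist h 0 < r2 := by rw [Real.dist_eq, sub_zero, abs_of_pos hh0]; exact hh1
    exact max_lt h1 (max_lt h2 h3)
  simp only [Q] at hQp
  linarith

end Aux2

section Aux3

open Topology

variable {n : ℕ} {p : ℝ}

lemma bern_scalar {β s T : ℝ} (hβ0 : 0 < β) (hβ1 : β ≤ 1) (hs : |s| ≤ 1 / 2) :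
    (1 - s) ^ (-β) ≤ 1 + β * s + 2 * β * s ^ 2 := by
  rw [abs_le] at hs
  have h1 : 0 < 1 - s := by linarith
  have h2 : (1 - s) ^ (-β) = (1 / (1 - s)) ^ β := by
    rw [one_div, Real.inv_rpow h1.le, Real.rpow_neg h1.le]
  have h3 : (1 / (1 - s)) ^ β ≤ 1 + β * (1 / (1 - s) - 1) := by
    have h0 : 0 < 1 / (1 - s) := by positivity
    have := rpow_one_add_le_one_add_mul_self (s := 1 / (1 - s) - 1) (p := β)
      (by linarith) hβ0.le hβ1
    simpa using this
  have h4 : 1 / (1 - s) ≤ 1 + s + 2 * s ^ 2 := by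
    rw [div_le_iff₀ h1]
    nlinarith [sq_nonneg s]
  rw [h2]
  nlinarith

lemma bern_prod {β s T a : ℝ} (hβ0 : 0 < β) (hβ1 : β ≤ 1) (hs : |s| ≤ 1 / 2) :
    (1 + β * s + 2 * β * s ^ 2) * (1 - T) ≤ 1 + β * s - T + 2 * s ^ 2 + 2 * |s| * |T| := by
  have h1 : |β * s + 2 * β * s ^ 2| ≤ 2 * |s| := by
    have e1 : β * s + 2 * β * s ^ 2 = s * (β + 2 * β * s) := by ring
    rw [e1, abs_mul]
    have h2 : |β + 2 * β * s| ≤ 2 := by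
      rw [abs_le] at hs ⊢
      constructor <;> nlinarith [hs.1, hs.2]
    nlinarith [abs_nonneg s]
  have h2 : -(T * (β * s + 2 * β * s ^ 2)) ≤ |T| * (2 * |s|) := by
    calc -(T * (β * s + 2 * β * s ^ 2)) ≤ |T * (β * s + 2 * β * s ^ 2)| := neg_le_abs _
      _ = |T| * |β * s + 2 * β * s ^ 2| := abs_mul _ _
      _ ≤ _ := mul_le_mul_of_nonneg_left h1 (abs_nonneg _)
  nlinarith [sq_nonneg s]

/-- the quadratic upper bound for the Bernstein test function -/
lemma bern_quad {β κ ζ1 z : ℝ} (hβ0 : 0 < β) (hβ1 : β ≤ 1) (hκ : 0 ≤ κ) (hζ : 0 < ζ1) (hζ1 : ζ1 ≤ 1)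
    (x1 e ξ : EuclideanSpace ℝ (Fin n)) (he : ‖e‖ = 1) (hx1 : ‖x1‖ ≤ 1)
    (h1 : ‖ξ‖ ≤ 1) (h2 : κ * ‖ξ‖ ≤ 1) (h3 : 3 * ‖ξ‖ / ζ1 ≤ 1 / 2) :
    (1 - (2 * ⟪x1, ξ⟫ + ‖ξ‖ ^ 2) / ζ1) ^ (-β) * ‖e + (-κ) • ξ‖ ≤
      1 + ⟪(2 * β / ζ1) • x1 - κ • e, ξ⟫ + 24 * (1 / ζ1 ^ 2 + κ ^ 2) * ‖ξ‖ ^ 2 := by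
  set s := (2 * ⟪x1, ξ⟫ + ‖ξ‖ ^ 2) / ζ1 with hs
  set T := κ * ⟪e, ξ⟫ - κ ^ 2 * ‖ξ‖ ^ 2 / 2 with hT
  have hξ0 := norm_nonneg ξ
  have i1 : |⟪x1, ξ⟫| ≤ ‖ξ‖ := by
    have := abs_real_inner_le_norm x1 ξ
    nlinarith
  have i2 : |⟪e, ξ⟫| ≤ ‖ξ‖ := by
    have := abs_real_inner_le_norm e ξ
    rw [he] at this; linarith
  have hsabs : |s| ≤ 3 * ‖ξ‖ / ζ1 := by
    rw [hs, abs_div, abs_of_pos hζ]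
    apply div_le_div_of_nonneg_right _ hζ.le
    rw [abs_le] at i1 ⊢
    constructor <;> nlinarith
  have hs2 : |s| ≤ 1 / 2 := hsabs.trans h3
  have hTabs : |T| ≤ 3 / 2 * (κ * ‖ξ‖) := by
    have a1 : |κ * ⟪e, ξ⟫| ≤ κ * ‖ξ‖ := by
      rw [abs_mul, abs_of_nonneg hκ]; exact mul_le_mul_of_nonneg_left i2 hκ
    have a2 : 0 ≤ κ ^ 2 * ‖ξ‖ ^ 2 / 2 := by positivity
    have a3 : κ ^ 2 * ‖ξ‖ ^ 2 / 2 ≤ 1 / 2 * (κ * ‖ξ‖) := by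
      have : 0 ≤ κ * ‖ξ‖ := by positivity
      nlinarith
    rw [abs_le] at a1 ⊢
    constructor <;> linarith [a1.1, a1.2]
  have hnorm : ‖e + (-κ) • ξ‖ ≤ 1 - T := by
    have : ‖e + (-κ) • ξ‖ ^ 2 = 1 - 2 * T := by
      rw [norm_add_sq_real, he, norm_smul, inner_smul_right, Real.norm_eq_abs, abs_neg,
        abs_of_nonneg hκ, hT]; ring
    have h0 : 0 ≤ 1 - T := by nlinarith [sq_nonneg ‖e + (-κ) • ξ‖]
    refine abs_le_of_sq_le_sq' ?_ h0 |>.2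
    nlinarith [sq_nonneg T]
  have hpow := bern_scalar (T := T) hβ0 hβ1 hs2
  have hpos : 0 ≤ (1 - s) ^ (-β) := Real.rpow_nonneg (by rw [abs_le] at hs2; linarith) _
  have hA : (1 - s) ^ (-β) * ‖e + (-κ) • ξ‖ ≤ (1 + β * s + 2 * β * s ^ 2) * (1 - T) :=
    mul_le_mul hpow hnorm (norm_nonneg _) (hpos.trans hpow)
  have hB := bern_prod (T := T) (a := 0) hβ0 hβ1 hs2
  have hb : ⟪(2 * β / ζ1) • x1 - κ • e, ξ⟫ = 2 * β / ζ1 * ⟪x1, ξ⟫ - κ * ⟪e, ξ⟫ := by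
    simp [inner_sub_left, inner_smul_left]
  have hβs : β * s = 2 * β / ζ1 * ⟪x1, ξ⟫ + β * ‖ξ‖ ^ 2 / ζ1 := by
    rw [hs]; field_simp
  set I := 1 / ζ1 with hI
  have hI1 : 1 ≤ I := by rw [hI, le_div_iff₀ hζ]; linarith
  have e1 : 3 * ‖ξ‖ / ζ1 = 3 * ‖ξ‖ * I := by rw [hI]; ring
  have e2 : 1 / ζ1 ^ 2 = I ^ 2 := by rw [hI]; ring
  have e3 : β * ‖ξ‖ ^ 2 / ζ1 ≤ I ^ 2 * ‖ξ‖ ^ 2 := by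
    have : β * ‖ξ‖ ^ 2 / ζ1 = β * I * ‖ξ‖ ^ 2 := by rw [hI]; ring
    rw [this]
    apply mul_le_mul_of_nonneg_right _ (by positivity)
    nlinarith
  rw [e1] at hsabs
  have hsq : s ^ 2 ≤ (3 * ‖ξ‖ * I) ^ 2 := by
    rw [← sq_abs]; exact pow_le_pow_left₀ (abs_nonneg _) hsabs 2
  have hst : |s| * |T| ≤ (3 * ‖ξ‖ * I) * (3 / 2 * (κ * ‖ξ‖)) :=
    mul_le_mul hsabs hTabs (abs_nonneg _) (by positivity)
  rw [hb, e2]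
  have hTT : -T = -(κ * ⟪e, ξ⟫) + κ ^ 2 * ‖ξ‖ ^ 2 / 2 := by rw [hT]; ring
  have h9 : 0 ≤ ‖ξ‖ ^ 2 * (I - κ) ^ 2 := by positivity
  have h10 : 0 ≤ ‖ξ‖ ^ 2 * I ^ 2 := by positivity
  have h11 : 0 ≤ ‖ξ‖ ^ 2 * κ ^ 2 := by positivity
  have k1 : (3 * ‖ξ‖ * I) ^ 2 = 9 * (‖ξ‖ ^ 2 * I ^ 2) := by ring
  have k2 : (3 * ‖ξ‖ * I) * (3 / 2 * (κ * ‖ξ‖)) = 9 / 4 * (‖ξ‖ ^ 2 * I ^ 2 + ‖ξ‖ ^ 2 * κ ^ 2 - ‖ξ‖ ^ 2 * (I - κ) ^ 2) := by ring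
  have k3 : 24 * (I ^ 2 + κ ^ 2) * ‖ξ‖ ^ 2 = 24 * (‖ξ‖ ^ 2 * I ^ 2) + 24 * (‖ξ‖ ^ 2 * κ ^ 2) := by ring
  have k4 : 2 * |s| * |T| = 2 * (|s| * |T|) := by ring
  have k5 : κ ^ 2 * ‖ξ‖ ^ 2 / 2 = 1 / 2 * (‖ξ‖ ^ 2 * κ ^ 2) := by ring
  have k6 : I ^ 2 * ‖ξ‖ ^ 2 = ‖ξ‖ ^ 2 * I ^ 2 := by ring
  rw [k1] at hsq
  rw [k2] at hst
  rw [k6] at e3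
  rw [k5] at hTT
  have hC := hA.trans hB
  rw [k4, hβs] at hC
  rw [k3]
  linarith

set_option maxHeartbeats 2000000 in
lemma bernstein_bound (n : ℕ) {p β M : ℝ} (hp : 2 < p) (hβ : β = 1 / (p - 1)) (hM : 0 ≤ M) :
    ∃ C > 0, ∀ (S : Set (EuclideanSpace ℝ (Fin n))) (v g : EuclideanSpace ℝ (Fin n) → ℝ)
      (G : EuclideanSpace ℝ (Fin n) → EuclideanSpace ℝ (Fin n))
      (H : EuclideanSpace ℝ (Fin n) → EuclideanSpace ℝ (Fin n) →L[ℝ] EuclideanSpace ℝ (Fin n)),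
      Sol p S v g G H → closedBall 0 1 ⊆ S → (∀ x ∈ S, |g x| ≤ M) →
      (∀ x ∈ S, ∀ y ∈ S, |g x - g y| ≤ M * ‖x - y‖) → ‖G 0‖ ≤ C := by
  have hp1 : 0 < p - 1 := by linarith
  have hβ0 : 0 < β := by rw [hβ]; positivity
  have hβ1 : β ≤ 1 := by rw [hβ, div_le_one hp1]; linarith
  set γ : ℝ := 1 / (48 * (n + 1)) with hγ
  have hγ0 : 0 < γ := by positivity
  set X0 := (2 * β * p + 2 * M * γ + M + 48 * n) / γ + 1 with hX0
  have hX00 : 1 ≤ X0 := by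
    have : 0 ≤ (2 * β * p + 2 * M * γ + M + 48 * n) / γ := by
      have : 0 < p := by linarith
      positivity
    rw [hX0]; linarith
  refine ⟨X0, by linarith, ?_⟩
  intro S v g G H hs hS hgb hgl
  by_contra hcon
  push Not at hcon
  have hcont : ContinuousOn (fun x => ‖G x‖ * (1 - ‖x‖ ^ 2) ^ β)
      (closedBall (0 : EuclideanSpace ℝ (Fin n)) 1) := by
    refine (hs.contG.mono hS).norm.mul ?_
    refine ContinuousOn.rpow_const (by fun_prop) fun x _ => Or.inr hβ0.le
  obtain ⟨x1, hx1K, hx1max⟩ := (isCompact_closedBall (0 : EuclideanSpace ℝ (Fin n)) 1).exists_isMaxOn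
    ⟨0, mem_closedBall_self zero_le_one⟩ hcont
  set ζ1 := 1 - ‖x1‖ ^ 2 with hζ1
  set Gn := ‖G x1‖ with hGn
  set Θ := Gn * ζ1 ^ β with hΘ
  have hΘ0 : X0 < Θ := by
    have : ‖G 0‖ * (1 - ‖(0 : EuclideanSpace ℝ (Fin n))‖ ^ 2) ^ β ≤ Θ :=
      hx1max (mem_closedBall_self zero_le_one)
    simp at this
    linarith
  have hx1n : ‖x1‖ ≤ 1 := by simpa using hx1K
  have hζnn : 0 ≤ ζ1 := by rw [hζ1]; nlinarith [norm_nonneg x1]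
  have hζpos : 0 < ζ1 := by
    rcases hζnn.lt_or_eq with h | h
    · exact h
    · exfalso
      rw [hΘ, ← h, Real.zero_rpow hβ0.ne'] at hΘ0
      linarith
  have hζle : ζ1 ≤ 1 := by rw [hζ1]; nlinarith [norm_nonneg x1]
  have hζβ : ζ1 ^ β ≤ 1 := Real.rpow_le_one hζnn hζle hβ0.le
  have hζβ0 : 0 < ζ1 ^ β := Real.rpow_pos_of_pos hζpos β
  have hGn1 : 1 ≤ Gn := by
    have : 0 ≤ Gn := norm_nonneg _
    nlinarith
  have hGn0 : 0 < Gn := by linarith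
  set X := Gn ^ (p - 1) * ζ1 with hX
  have hXΘ : X = Θ ^ (p - 1) := by
    rw [hΘ, Real.mul_rpow hGn0.le hζβ0.le, ← Real.rpow_mul hζnn, hβ, one_div_mul_cancel hp1.ne',
      Real.rpow_one]
  have hΘX : Θ ≤ X := by
    rw [hXΘ]
    calc Θ = Θ ^ (1:ℝ) := (Real.rpow_one _).symm
      _ ≤ Θ ^ (p - 1) := Real.rpow_le_rpow_of_exponent_le (by linarith) (by linarith)
  have hX1 : X0 < X := by linarith
  have hXpos : 0 < X := by linarith
  set κ := γ * X / ζ1 with hκ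
  have hκ0 : 0 ≤ κ := by positivity
  set e := (1 / Gn) • G x1 with he
  have hen : ‖e‖ = 1 := by
    rw [he, norm_smul, Real.norm_of_nonneg (by positivity), ← hGn]; field_simp
  have hGe : G x1 = Gn • e := by rw [he, smul_smul]; field_simp; simp
  have hx1lt : ‖x1‖ < 1 := by
    by_contra h
    push Not at h
    have : ‖x1‖ = 1 := le_antisymm hx1n h
    rw [hζ1, this] at hζpos
    norm_num at hζpos
  have hloc : ∀ᶠ x in 𝓝 x1, ⟪G x, e + (-κ) • (x - x1)⟫ ≤ (fun _ => Gn) ⟪e, x⟫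
      + ⟪Gn • ((2 * β / ζ1) • x1 - κ • e), x - x1⟫
      + (48 * Gn * (1 / ζ1 ^ 2 + κ ^ 2)) / 2 * ‖x - x1‖ ^ 2 := by
    have t0 : Tendsto (fun x : EuclideanSpace ℝ (Fin n) => ‖x - x1‖) (𝓝 x1) (𝓝 0) := by
      have : ContinuousAt (fun x : EuclideanSpace ℝ (Fin n) => ‖x - x1‖) x1 := by fun_prop
      simpa [ContinuousAt] using this
    have tc : ∀ c : ℝ, Tendsto (fun x : EuclideanSpace ℝ (Fin n) => c * ‖x - x1‖) (𝓝 x1) (𝓝 0) := by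
      intro c; simpa using t0.const_mul c
    have a1 := (tc 1).eventually (gt_mem_nhds one_pos)
    have a2 := (tc κ).eventually (gt_mem_nhds one_pos)
    have a3 := (tc (3 / ζ1)).eventually (gt_mem_nhds (show (0:ℝ) < 1 / 2 by norm_num))
    have a4 : ∀ᶠ x in 𝓝 x1, ‖x‖ < 1 :=
      (continuous_norm.continuousAt (x := x1)).eventually (gt_mem_nhds hx1lt)
    filter_upwards [a1, a2, a3, a4] with x b1 b2 b3 b4
    set ξ := x - x1 with hξ
    have hxe : x = x1 + ξ := by rw [hξ]; abel
    have hq := bern_quad (κ := κ) (z := 0) hβ0 hβ1 hκ0 hζpos hζle x1 e ξ hen hx1n (by linarith) b2.le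
      (by have : 3 * ‖ξ‖ / ζ1 = 3 / ζ1 * ‖ξ‖ := by ring
          rw [this]; exact b3.le)
    have hm : ‖G x‖ * (1 - ‖x‖ ^ 2) ^ β ≤ Θ := hx1max (by simpa using b4.le)
    have hζx : 1 - ‖x‖ ^ 2 = ζ1 * (1 - (2 * ⟪x1, ξ⟫ + ‖ξ‖ ^ 2) / ζ1) := by
      rw [hxe, norm_add_sq_real, hζ1]
      have : (1 - ‖x1‖ ^ 2) ≠ 0 := hζpos.ne'
      field_simp
      ring
    set u := 1 - (2 * ⟪x1, ξ⟫ + ‖ξ‖ ^ 2) / ζ1 with hu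
    have hupos : 0 < u := by
      have : 0 < ζ1 * u := by rw [← hζx]; nlinarith [norm_nonneg x]
      exact pos_of_mul_pos_right this hζnn
    have huβ : 0 < u ^ β := Real.rpow_pos_of_pos hupos β
    have hGx : ‖G x‖ ≤ Gn * u ^ (-β) := by
      rw [hζx, Real.mul_rpow hζnn hupos.le, hΘ] at hm
      rw [Real.rpow_neg hupos.le, ← div_eq_mul_inv, le_div_iff₀ huβ]
      have : ζ1 ^ β * (‖G x‖ * u ^ β) ≤ ζ1 ^ β * Gn := by linarith
      exact le_of_mul_le_mul_left this hζβ0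
    have h5 : ⟪G x, e + (-κ) • ξ⟫ ≤ ‖G x‖ * ‖e + (-κ) • ξ‖ := real_inner_le_norm _ _
    have h6 : ‖G x‖ * ‖e + (-κ) • ξ‖ ≤ Gn * u ^ (-β) * ‖e + (-κ) • ξ‖ :=
      mul_le_mul_of_nonneg_right hGx (norm_nonneg _)
    have h7 := mul_le_mul_of_nonneg_left hq hGn0.le
    rw [inner_smul_left, RCLike.conj_to_real]
    show _ ≤ Gn + _ + _
    linarith
  have hlin := hs.lin hp hM hgb hgl (x1 := x1) (hS hx1K) e (Gn • ((2 * β / ζ1) • x1 - κ • e)) e (-κ)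
    (48 * Gn * (1 / ζ1 ^ 2 + κ ^ 2)) (fun _ => Gn) (fun _ => 0) (fun _ => 0) hen
    (Eventually.of_forall fun t => hasDerivAt_const t Gn)
    (Eventually.of_forall fun t => hasDerivAt_const t 0) continuousAt_const hloc
    (by rw [hGe, inner_smul_left, real_inner_self_eq_norm_sq, hen]; simp)
  rw [← hGn, hen, abs_neg, abs_of_nonneg hκ0, zero_smul, zero_add, inner_smul_right] at hlin
  have hin : ⟪G x1, (2 * β / ζ1) • x1 - κ • e⟫ ≤ Gn * (2 * β / ζ1 - κ) := by
    rw [hGe, inner_smul_left, inner_sub_right, inner_smul_right, inner_smul_right,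
      real_inner_self_eq_norm_sq, hen, RCLike.conj_to_real]
    have h1 : ⟪e, x1⟫ ≤ 1 := by
      have := real_inner_le_norm e x1
      rw [hen] at this; linarith
    apply mul_le_mul_of_nonneg_left _ hGn0.le
    have h2 : 0 ≤ 2 * β / ζ1 := by positivity
    nlinarith
  have hpw : Gn ^ (p - 2) * (Gn * Gn) = Gn ^ p := by
    have : Gn * Gn = Gn ^ (2:ℝ) := by rw [Real.rpow_two]; ring
    rw [this, ← Real.rpow_add hGn0]; congr 1; ring
  have hpX : Gn ^ p = Gn * X / ζ1 := by
    rw [hX]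
    have : Gn ^ p = Gn ^ (p - 1) * Gn := by
      nth_rewrite 3 [← Real.rpow_one Gn]
      rw [← Real.rpow_add hGn0]; congr 1; ring
    rw [this]; field_simp
  have hGp2 : 0 < Gn ^ (p - 2) := Real.rpow_pos_of_pos hGn0 _
  have hstep : p * Gn ^ (p - 2) * (Gn * ⟪G x1, (2 * β / ζ1) • x1 - κ • e⟫) ≤
      p * Gn ^ p * (2 * β / ζ1 - κ) := by
    have : p * Gn ^ (p - 2) * (Gn * ⟪G x1, (2 * β / ζ1) • x1 - κ • e⟫) ≤
      p * Gn ^ (p - 2) * (Gn * (Gn * (2 * β / ζ1 - κ))) :=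
      mul_le_mul_of_nonneg_left (mul_le_mul_of_nonneg_left hin hGn0.le) (by positivity)
    rw [← hpw]
    linarith
  have hmain : 2 * κ * Gn ^ p ≤ 2 * β * p * Gn ^ p / ζ1 + M + 2 * κ * M
      + n * (48 * Gn * (1 / ζ1 ^ 2 + κ ^ 2)) := by
    have e1 : p * Gn ^ p * (2 * β / ζ1 - κ) = 2 * β * p * Gn ^ p / ζ1 - p * κ * Gn ^ p := by ring
    rw [e1] at hstep
    linarith
  -- multiply by ζ1^2 / Gn
  have hmain2 : 2 * γ * X ^ 2 ≤ 2 * β * p * X + (M + 2 * M * γ * X) + 48 * n * (1 + γ ^ 2 * X ^ 2) := by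
    have hm3 := mul_le_mul_of_nonneg_right hmain (show 0 ≤ ζ1 ^ 2 / Gn by positivity)
    have e1 : 2 * κ * Gn ^ p * (ζ1 ^ 2 / Gn) = 2 * γ * X ^ 2 := by
      rw [hpX, hκ]; field_simp
    have e2 : (2 * β * p * Gn ^ p / ζ1 + M + 2 * κ * M
      + n * (48 * Gn * (1 / ζ1 ^ 2 + κ ^ 2))) * (ζ1 ^ 2 / Gn)
      = 2 * β * p * X + (M * ζ1 ^ 2 + 2 * M * γ * X * ζ1) / Gn + 48 * n * (1 + γ ^ 2 * X ^ 2) := by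
      rw [hpX, hκ]; field_simp; ring
    rw [e1, e2] at hm3
    have e3 : (M * ζ1 ^ 2 + 2 * M * γ * X * ζ1) / Gn ≤ M + 2 * M * γ * X := by
      rw [div_le_iff₀ hGn0]
      have a1 : M * ζ1 ^ 2 ≤ M := by
        have : ζ1 ^ 2 ≤ 1 := pow_le_one₀ hζnn hζle
        nlinarith
      have a2 : 2 * M * γ * X * ζ1 ≤ 2 * M * γ * X := by
        have : 0 ≤ 2 * M * γ * X := by positivity
        nlinarith
      have a3 : 0 ≤ M + 2 * M * γ * X := by positivity
      nlinarith
    linarith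
  have h48 : 48 * n * γ ≤ 1 := by
    rw [hγ]
    have : (48 * n * (1 / (48 * (n + 1))) : ℝ) = n / (n + 1) := by field_simp
    rw [this, div_le_one (by positivity)]; linarith
  have h49 : 48 * n * (γ ^ 2 * X ^ 2) ≤ γ * X ^ 2 := by
    have : 0 ≤ γ * X ^ 2 := by positivity
    nlinarith
  have hX1' : 1 ≤ X := by linarith
  have hc0 : 0 ≤ M + 48 * n := by positivity
  have h50 : γ * X * X ≤ (2 * β * p + 2 * M * γ + M + 48 * n) * X := by nlinarith
  have h51 : γ * X ≤ 2 * β * p + 2 * M * γ + M + 48 * n := le_of_mul_le_mul_right h50 hXpos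
  have h52 : X ≤ (2 * β * p + 2 * M * γ + M + 48 * n) / γ := by
    rw [le_div_iff₀ hγ0]; linarith
  linarith

end Aux3

section Aux4

open Topology

/-- the upper half ball -/
def HB {n : ℕ} (ν : EuclideanSpace ℝ (Fin n)) (A : ℝ) : Set (EuclideanSpace ℝ (Fin n)) :=
  {x | 0 < ⟪ν, x⟫ ∧ ‖x‖ < A}

/-- the blown-up problem -/
structure Model {n : ℕ} (p β C0 A η : ℝ) (ν : EuclideanSpace ℝ (Fin n))
    (v g : EuclideanSpace ℝ (Fin n) → ℝ)
    (G : EuclideanSpace ℝ (Fin n) → EuclideanSpace ℝ (Fin n))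
    (H : EuclideanSpace ℝ (Fin n) → EuclideanSpace ℝ (Fin n) →L[ℝ] EuclideanSpace ℝ (Fin n)) :
    Prop where
  sol : Sol p (HB ν A) v g G H
  hν : ‖ν‖ = 1
  hη : 0 ≤ η
  hgb : ∀ x ∈ HB ν A, |g x| ≤ η
  hgl : ∀ x ∈ HB ν A, ∀ y ∈ HB ν A, |g x - g y| ≤ η * ‖x - y‖
  hGb : ∀ x ∈ HB ν A, ‖G x‖ ≤ C0 * ⟪ν, x⟫ ^ (-β)
  hvu : ∀ x ∈ HB ν A, v x ≤ C0 * (⟪ν, x⟫ + 2 * η) ^ (1 - β)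
  hvl : ∀ x ∈ HB ν A, -η ≤ v x

variable {n : ℕ} {p β C0 A η : ℝ} {ν : EuclideanSpace ℝ (Fin n)}
  {v g : EuclideanSpace ℝ (Fin n) → ℝ}
  {G : EuclideanSpace ℝ (Fin n) → EuclideanSpace ℝ (Fin n)}
  {H : EuclideanSpace ℝ (Fin n) → EuclideanSpace ℝ (Fin n) →L[ℝ] EuclideanSpace ℝ (Fin n)}

lemma cont_in (ν : EuclideanSpace ℝ (Fin n)) : Continuous fun x : EuclideanSpace ℝ (Fin n) => ⟪ν, x⟫ := by
  fun_prop

lemma isOpen_HB (ν : EuclideanSpace ℝ (Fin n)) (A : ℝ) : IsOpen (HB ν A) := by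
  exact IsOpen.and (isOpen_lt continuous_const (cont_in ν)) (isOpen_lt continuous_norm continuous_const)

lemma rpow_anti {x y b : ℝ} (hx : 0 < x) (hxy : x ≤ y) (hb : 0 ≤ b) : y ^ (-b) ≤ x ^ (-b) :=
  Real.rpow_le_rpow_of_nonpos hx hxy (by linarith)

/-- the final numerical contradiction in `normal_core` -/
lemma normal_num {p β a s Gn z κ A' τ ix xn C0 : ℝ} (hp : 2 < p) (hβ : β * (p - 1) = 1)
    (hβ0 : 0 < β) (ha : 0 < a) (hs : 0 < s) (hzs : a * s ^ (-β) ≤ z) (hzG : z ≤ Gn)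
    (hC0 : 0 < C0) (hτ : 0 < τ) (hτx : τ ≤ xn) (hG : Gn ≤ C0 * xn ^ (-β)) (hκ : 0 ≤ κ)
    (hA' : 0 ≤ A') (hix : ix ≤ Gn * A')
    (hm : -(p * Gn ^ (p - 2) * ((a * (-β) * s ^ (-β - 1)) * z + 2 * κ * ix)) - η * 1 - 2 * 0 * η ≤
      a * (-β) * (-β - 1) * s ^ (-β - 2) + n * (2 * κ)) :
    a * (β + 1) * (a ^ (p - 1) - β) * s ^ (-β - 2) ≤
      2 * n * κ + 2 * κ * p * C0 ^ (p - 1) * A' / τ + η := by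
  have hsβ : 0 < s ^ (-β) := Real.rpow_pos_of_pos hs _
  have hz0 : 0 < z := lt_of_lt_of_le (by positivity) hzs
  have hG0 : 0 < Gn := lt_of_lt_of_le hz0 hzG
  have hxn : 0 < xn := lt_of_lt_of_le hτ hτx
  have h1 : a ^ (p - 1) * s ^ (-1 : ℝ) ≤ Gn ^ (p - 2) * z := by
    have e1 : a ^ (p - 1) * s ^ (-1 : ℝ) = (a * s ^ (-β)) ^ (p - 1) := by
      rw [Real.mul_rpow ha.le hsβ.le, ← Real.rpow_mul hs.le]
      congr 2; linarith
    have e2 : z ^ (p - 1) = z ^ (p - 2) * z := by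
      nth_rewrite 3 [← Real.rpow_one z]
      rw [← Real.rpow_add hz0]; congr 1; ring
    rw [e1]
    calc (a * s ^ (-β)) ^ (p - 1) ≤ z ^ (p - 1) :=
          Real.rpow_le_rpow (by positivity) hzs (by linarith)
      _ = z ^ (p - 2) * z := e2
      _ ≤ _ := mul_le_mul_of_nonneg_right (Real.rpow_le_rpow hz0.le hzG (by linarith)) hz0.le
  have h2 : Gn ^ (p - 2) * ix ≤ C0 ^ (p - 1) * A' / τ := by
    have e2 : Gn ^ (p - 1) = Gn ^ (p - 2) * Gn := by
      nth_rewrite 3 [← Real.rpow_one Gn]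
      rw [← Real.rpow_add hG0]; congr 1; ring
    have hGp : Gn ^ (p - 1) ≤ C0 ^ (p - 1) * τ⁻¹ := by
      calc Gn ^ (p - 1) ≤ (C0 * xn ^ (-β)) ^ (p - 1) :=
            Real.rpow_le_rpow hG0.le hG (by linarith)
        _ = C0 ^ (p - 1) * xn ^ (-1 : ℝ) := by
            rw [Real.mul_rpow hC0.le (by positivity), ← Real.rpow_mul hxn.le]
            congr 2; linarith
        _ ≤ C0 ^ (p - 1) * τ⁻¹ := by
            apply mul_le_mul_of_nonneg_left _ (by positivity)
            rw [Real.rpow_neg_one]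
            exact inv_anti₀ hτ hτx
    calc Gn ^ (p - 2) * ix ≤ Gn ^ (p - 2) * (Gn * A') := mul_le_mul_of_nonneg_left hix (by positivity)
      _ = Gn ^ (p - 1) * A' := by rw [e2]; ring
      _ ≤ C0 ^ (p - 1) * τ⁻¹ * A' := mul_le_mul_of_nonneg_right hGp hA'
      _ = _ := by ring
  have hpβ : p * β = β + 1 := by linarith
  have h3 : (a * (β + 1)) * s ^ (-β - 1) * (a ^ (p - 1) * s ^ (-1 : ℝ)) ≤
      (a * (β + 1)) * s ^ (-β - 1) * (Gn ^ (p - 2) * z) :=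
    mul_le_mul_of_nonneg_left h1 (by positivity)
  have e3 : s ^ (-β - 1) * s ^ (-1 : ℝ) = s ^ (-β - 2) := by
    rw [← Real.rpow_add hs]; congr 1; ring
  have e4 : (a * (β + 1)) * s ^ (-β - 1) * (a ^ (p - 1) * s ^ (-1 : ℝ)) =
      a * (β + 1) * a ^ (p - 1) * s ^ (-β - 2) := by rw [← e3]; ring
  rw [e4] at h3
  have h4 : 2 * κ * p * (Gn ^ (p - 2) * ix) ≤ 2 * κ * p * (C0 ^ (p - 1) * A' / τ) :=
    mul_le_mul_of_nonneg_left h2 (by positivity)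
  have e5 : p * Gn ^ (p - 2) * ((a * (-β) * s ^ (-β - 1)) * z + 2 * κ * ix) =
      -((a * (β + 1)) * s ^ (-β - 1) * (Gn ^ (p - 2) * z)) + 2 * κ * p * (Gn ^ (p - 2) * ix) := by
    rw [← hpβ]; ring
  rw [e5] at hm
  have e6 : 2 * κ * p * C0 ^ (p - 1) * A' / τ = 2 * κ * p * (C0 ^ (p - 1) * A' / τ) := by ring
  rw [e6]
  linarith

set_option maxHeartbeats 1000000 in
lemma normal_core (hp : 2 < p) (hβ : β * (p - 1) = 1) (hβ0 : 0 < β) (hC0 : 0 < C0)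
    (hm : Model p β C0 A η ν v g G H) {a τ q L A' κ : ℝ} (ha : 0 < a) (haβ : β < a ^ (p - 1))
    (hτ : 0 < τ) (hq : 0 < q) (hτq : τ + q ≤ 1) (hL : 1 ≤ L) (hA' : 1 ≤ A') (hA : A' < A)
    (hqa : C0 * τ ^ (-β) ≤ a * q ^ (-β)) (hκ : κ * A' ^ 2 = C0 * τ ^ (-β))
    (hfin : 2 * n * κ + 2 * κ * p * C0 ^ (p - 1) * A' / τ + η <
      a * (β + 1) * (a ^ (p - 1) - β) * L ^ (-β - 2)) :
    ⟪G ν, ν⟫ ≤ a * (1 - τ) ^ (-β) + C0 * L ^ (-β) + κ := by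
  by_contra hcon
  push Not at hcon
  have hκ0 : 0 ≤ κ := by
    have : 0 ≤ C0 * τ ^ (-β) := by positivity
    rw [← hκ] at this
    exact nonneg_of_mul_nonneg_left this (by positivity)
  set K : Set (EuclideanSpace ℝ (Fin n)) := closedBall 0 A' ∩ {x | τ + q ≤ ⟪ν, x⟫ ∧ ⟪ν, x⟫ ≤ L} with hK
  have hKc : IsCompact K := by
    refine (isCompact_closedBall _ _).inter_right ?_
    exact IsClosed.inter (isClosed_le continuous_const (cont_in ν))
      (isClosed_le (cont_in ν) continuous_const)
  have hKS : K ⊆ HB ν A := by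
    intro x hx
    refine ⟨by linarith [hx.2.1], ?_⟩
    have : ‖x‖ ≤ A' := by simpa using hx.1
    linarith
  have hνν : ⟪ν, ν⟫ = (1:ℝ) := by rw [real_inner_self_eq_norm_sq, hm.hν]; norm_num
  have hνK : ν ∈ K := by
    refine ⟨by simpa [hm.hν] using hA', ?_⟩
    rw [mem_ofPred_eq, hνν]
    exact ⟨hτq, hL⟩
  let Z : EuclideanSpace ℝ (Fin n) → ℝ := fun x =>
    ⟪G x, ν⟫ - (a * (⟪ν, x⟫ - τ) ^ (-β) + C0 * L ^ (-β) + κ * ‖x‖ ^ 2)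
  have hZc : ContinuousOn Z K := by
    have c1 : ContinuousOn (fun x => ⟪G x, ν⟫) K :=
      (hm.sol.contG.mono hKS).inner continuousOn_const
    have c2 : ContinuousOn (fun x : EuclideanSpace ℝ (Fin n) => (⟪ν, x⟫ - τ) ^ (-β)) K := by
      refine ContinuousOn.rpow_const (by fun_prop) fun x hx => Or.inl ?_
      have := hx.2.1
      linarith
    have c3 : ContinuousOn (fun x : EuclideanSpace ℝ (Fin n) => κ * ‖x‖ ^ 2) K := by fun_prop
    exact c1.sub (((continuousOn_const.mul c2).add continuousOn_const).add c3)
  obtain ⟨x1, hx1K, hx1max⟩ := hKc.exists_isMaxOn ⟨ν, hνK⟩ hZc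
  have hZ1 : 0 < Z x1 := by
    have h1 : Z ν ≤ Z x1 := hx1max hνK
    have h2 : Z ν = ⟪G ν, ν⟫ - (a * (1 - τ) ^ (-β) + C0 * L ^ (-β) + κ) := by
      simp only [Z, hνν, hm.hν]; norm_num
    linarith
  have hx1S := hKS hx1K
  have hzG : ⟪G x1, ν⟫ ≤ ‖G x1‖ := by
    have := real_inner_le_norm (G x1) ν
    rwa [hm.hν, mul_one] at this
  have hGb := hm.hGb x1 hx1S
  have hx1n : ‖x1‖ ≤ A' := by simpa using hx1K.1
  have hxn1 := hx1K.2.1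
  have hxn2 := hx1K.2.2
  set s := ⟪ν, x1⟫ - τ with hs
  have hs0 : 0 < s := by rw [hs]; linarith
  have hφ1 : 0 ≤ a * s ^ (-β) := by positivity
  have hφ2 : 0 ≤ C0 * L ^ (-β) := by positivity
  have hφ3 : 0 ≤ κ * ‖x1‖ ^ 2 := by positivity
  have hZ1' : a * s ^ (-β) + C0 * L ^ (-β) + κ * ‖x1‖ ^ 2 < ⟪G x1, ν⟫ := by
    have : Z x1 = ⟪G x1, ν⟫ - (a * s ^ (-β) + C0 * L ^ (-β) + κ * ‖x1‖ ^ 2) := rfl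
    linarith
  have hGτ : ‖G x1‖ ≤ C0 * τ ^ (-β) :=
    hGb.trans (mul_le_mul_of_nonneg_left (rpow_anti hτ (by linarith) hβ0.le) hC0.le)
  have hlt1 : τ + q < ⟪ν, x1⟫ := by
    rcases hxn1.lt_or_eq with h | h
    · exact h
    · exfalso
      have hsq : s = q := by rw [hs, ← h]; ring
      rw [hsq] at hZ1' hφ1
      linarith
  have hlt2 : ⟪ν, x1⟫ < L := by
    rcases hxn2.lt_or_eq with h | h
    · exact h
    · exfalso
      rw [h] at hGb
      linarith
  have hlt3 : ‖x1‖ < A' := by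
    rcases hx1n.lt_or_eq with h | h
    · exact h
    · exfalso
      rw [h, hκ] at hZ1'
      linarith
  have hKn : K ∈ 𝓝 x1 := by
    have o1 : IsOpen {x : EuclideanSpace ℝ (Fin n) | τ + q < ⟪ν, x⟫ ∧ ⟪ν, x⟫ < L ∧ ‖x‖ < A'} :=
      IsOpen.and (isOpen_lt continuous_const (cont_in ν))
        (IsOpen.and (isOpen_lt (cont_in ν) continuous_const) (isOpen_lt continuous_norm continuous_const))
    refine mem_of_superset (o1.mem_nhds ⟨hlt1, hlt2, hlt3⟩) ?_
    intro x hx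
    exact ⟨by simpa using hx.2.2.le, hx.1.le, hx.2.1.le⟩
  have hpos : ∀ᶠ t in 𝓝 ⟪ν, x1⟫, 0 < t - τ := by
    have : τ < ⟪ν, x1⟫ := by linarith
    filter_upwards [lt_mem_nhds this] with t ht
    linarith
  have hder : ∀ (c r t : ℝ), 0 < t - τ →
      HasDerivAt (fun t : ℝ => c * (t - τ) ^ r) (c * r * (t - τ) ^ (r - 1)) t := by
    intro c r t ht
    have h1 : HasDerivAt (fun t : ℝ => t - τ) 1 t := (hasDerivAt_id t).sub_const τ
    have := (h1.rpow_const (p := r) (Or.inl ht.ne')).const_mul c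
    exact this.congr_deriv (by ring)
  have hlin := hm.sol.lin hp hm.hη hm.hgb hm.hgl hx1S ν ((2 * κ) • x1) ν 0 (2 * κ)
    (fun t => a * (t - τ) ^ (-β) + (C0 * L ^ (-β) + κ * ‖x1‖ ^ 2 + Z x1))
    (fun t => a * (-β) * (t - τ) ^ (-β - 1))
    (fun t => a * (-β) * (-β - 1) * (t - τ) ^ (-β - 2)) hm.hν
    (by filter_upwards [hpos] with t ht
        exact (hder a (-β) t ht).add_const _)
    (by filter_upwards [hpos] with t ht
        have := hder (a * (-β)) (-β - 1) t ht
        rwa [show -β - 1 - 1 = -β - 2 by ring] at this)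
    (by
      refine (hder (a * (-β) * (-β - 1)) (-β - 2) _ ?_).continuousAt
      exact hs0)
    (by
      filter_upwards [hKn] with x hx
      have h1 : Z x ≤ Z x1 := hx1max hx
      have h2 : ‖x‖ ^ 2 = ‖x1‖ ^ 2 + 2 * ⟪x1, x - x1⟫ + ‖x - x1‖ ^ 2 := by
        rw [← norm_add_sq_real]; congr 2; abel
      have h3 : Z x = ⟪G x, ν⟫ - (a * (⟪ν, x⟫ - τ) ^ (-β) + C0 * L ^ (-β) + κ * ‖x‖ ^ 2) := rfl
      rw [h3, h2] at h1
      simp only [zero_smul, add_zero, inner_smul_left, RCLike.conj_to_real]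
      linarith)
    (by
      have h3 : Z x1 = ⟪G x1, ν⟫ - (a * (⟪ν, x1⟫ - τ) ^ (-β) + C0 * L ^ (-β) + κ * ‖x1‖ ^ 2) := rfl
      simp only [h3]; ring)
  simp only [hm.hν, abs_zero, inner_add_right, inner_smul_right, ← hs] at hlin
  have hix : ⟪G x1, x1⟫ ≤ ‖G x1‖ * A' :=
    (real_inner_le_norm _ _).trans (mul_le_mul_of_nonneg_left hx1n (norm_nonneg _))
  have hnum := normal_num (n := n) (η := η) hp hβ hβ0 ha hs0 (by linarith) hzG hC0 hτ (by linarith) hGb hκ0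
    (by linarith : 0 ≤ A') hix (by linarith)
  have hsL : L ^ (-β - 2) ≤ s ^ (-β - 2) :=
    Real.rpow_le_rpow_of_nonpos hs0 (by rw [hs]; linarith) (by linarith)
  have hc0 : 0 ≤ a * (β + 1) * (a ^ (p - 1) - β) :=
    mul_nonneg (by positivity) (by linarith)
  have := mul_le_mul_of_nonneg_left hsL hc0
  linarith

end Aux4

section Aux5

open Topology

variable {n : ℕ} {p β C0 A η : ℝ} {ν : EuclideanSpace ℝ (Fin n)}
  {v g : EuclideanSpace ℝ (Fin n) → ℝ}
  {G : EuclideanSpace ℝ (Fin n) → EuclideanSpace ℝ (Fin n)}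
  {H : EuclideanSpace ℝ (Fin n) → EuclideanSpace ℝ (Fin n) →L[ℝ] EuclideanSpace ℝ (Fin n)}

lemma Model.powbound (hp : 2 < p) (hβ : β * (p - 1) = 1) (hC0 : 0 < C0)
    (hm : Model p β C0 A η ν v g G H) {x : EuclideanSpace ℝ (Fin n)} (hx : x ∈ HB ν A) {c : ℝ}
    (hc : 0 < c) (hcx : c ≤ ⟪ν, x⟫) : ‖G x‖ ^ (p - 1) ≤ C0 ^ (p - 1) / c := by
  have hxn : 0 < ⟪ν, x⟫ := hx.1
  calc ‖G x‖ ^ (p - 1) ≤ (C0 * ⟪ν, x⟫ ^ (-β)) ^ (p - 1) :=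
        Real.rpow_le_rpow (norm_nonneg _) (hm.hGb x hx) (by linarith)
    _ = C0 ^ (p - 1) * ⟪ν, x⟫ ^ (-1 : ℝ) := by
        rw [Real.mul_rpow hC0.le (by positivity), ← Real.rpow_mul hxn.le]
        congr 2; linarith
    _ ≤ C0 ^ (p - 1) * c⁻¹ := by
        apply mul_le_mul_of_nonneg_left _ (by positivity)
        rw [Real.rpow_neg_one]
        exact inv_anti₀ hc hcx
    _ = _ := by ring

lemma inner_ge_of_nonneg {e x : EuclideanSpace ℝ (Fin n)} (heν : 0 ≤ ⟪ν, e⟫) {t : ℝ} (ht : 0 ≤ t) :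
    ⟪ν, x⟫ ≤ ⟪ν, x + t • e⟫ := by
  rw [inner_add_right, inner_smul_right]
  have := mul_nonneg ht heν
  linarith

set_option maxHeartbeats 1000000 in
lemma shift_core (hp : 2 < p) (hβ : β * (p - 1) = 1) (hβ0 : 0 < β) (hβ1 : β < 1) (hC0 : 0 < C0)
    (hm : Model p β C0 A η ν v g G H) {e : EuclideanSpace ℝ (Fin n)} (he : ‖e‖ = 1)
    (heν : 0 ≤ ⟪ν, e⟫) {τ c L A' κ b m C1 : ℝ} (hτ : 0 < τ) (hτ1 : τ ≤ 1)
    (hc : 0 < c) (hcL : c ≤ L) (hA : A' + 1 < A) (hη1 : η ≤ 1)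
    (hκ0 : 0 ≤ κ) (hκ : C0 * (L + 2) ^ (1 - β) + 1 ≤ κ * A' ^ 2) (hA' : 0 ≤ A')
    (hC1 : C1 = p * (C0 ^ (p - 1) / c))
    (hb : 2 * n * κ + 2 * η + C1 * (2 * κ * A') < b)
    (hm1 : C0 * (c + 2 * η) ^ (1 - β) + η ≤ m) (hm2 : C0 * L ^ (-β) ≤ m)
    {x0 : EuclideanSpace ℝ (Fin n)} (hx0c : c ≤ ⟪ν, x0⟫) (hx0L : ⟪ν, x0⟫ ≤ L) (hx0A : ‖x0‖ ≤ A') :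
    v x0 - v (x0 + τ • e) ≤ m + κ * ‖x0‖ ^ 2 +
      b * (Real.exp ((C1 + 1) * L) - Real.exp ((C1 + 1) * ⟪ν, x0⟫)) := by
  by_contra hcon
  push Not at hcon
  have hη0 := hm.hη
  have hC10 : 0 ≤ C1 := by
    rw [hC1]
    have : 0 < p := by linarith
    positivity
  have hb0 : 0 < b := by
    have : 0 ≤ 2 * n * κ + 2 * η + C1 * (2 * κ * A') := by positivity
    linarith
  have hm0 : 0 ≤ m := by
    have : 0 ≤ C0 * L ^ (-β) := by
      have := hc.trans_le hcL
      positivity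
    linarith
  set Λ := C1 + 1 with hΛ
  have hΛ1 : 1 ≤ Λ := by linarith
  set K : Set (EuclideanSpace ℝ (Fin n)) := closedBall 0 A' ∩ {x | c ≤ ⟪ν, x⟫ ∧ ⟪ν, x⟫ ≤ L} with hK
  have hKc : IsCompact K := by
    refine (isCompact_closedBall _ _).inter_right ?_
    exact IsClosed.inter (isClosed_le continuous_const (cont_in ν))
      (isClosed_le (cont_in ν) continuous_const)
  have hKS' : ∀ x ∈ K, ∀ t ∈ Icc 0 τ, x + t • e ∈ HB ν A := by
    intro x hx t ht
    have h1 := inner_ge_of_nonneg (x := x) heν ht.1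
    have h2 : ‖x + t • e‖ ≤ ‖x‖ + t := by
      have := norm_add_le x (t • e)
      rwa [norm_smul, he, mul_one, Real.norm_of_nonneg ht.1] at this
    have h3 : ‖x‖ ≤ A' := by simpa using hx.1
    exact ⟨by linarith [hx.2.1], by linarith [ht.2]⟩
  have hKS : K ⊆ HB ν A := by
    intro x hx
    simpa using hKS' x hx 0 ⟨le_rfl, hτ.le⟩
  have hKy : ∀ x ∈ K, x + τ • e ∈ HB ν A := fun x hx => hKS' x hx τ ⟨hτ.le, le_rfl⟩
  have hx0K : x0 ∈ K := ⟨by simpa using hx0A, hx0c, hx0L⟩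
  let D : EuclideanSpace ℝ (Fin n) → ℝ := fun x => v x - v (x + τ • e) -
    (κ * ‖x‖ ^ 2 - b * Real.exp (Λ * ⟪ν, x⟫))
  have hDc : ContinuousOn D K := by
    have c1 : ContinuousOn v K := hm.sol.contv.mono hKS
    have c2 : ContinuousOn (fun x => v (x + τ • e)) K :=
      hm.sol.contv.comp (by fun_prop) hKy
    have c3 : ContinuousOn (fun x : EuclideanSpace ℝ (Fin n) =>
      (κ * ‖x‖ ^ 2 - b * Real.exp (Λ * ⟪ν, x⟫))) K := by fun_prop
    exact (c1.sub c2).sub c3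
  obtain ⟨x1, hx1K, hx1max⟩ := hKc.exists_isMaxOn ⟨x0, hx0K⟩ hDc
  have hD1 : m + κ * ‖x1‖ ^ 2 + b * (Real.exp (Λ * L) - Real.exp (Λ * ⟪ν, x1⟫)) <
      v x1 - v (x1 + τ • e) := by
    have h1 : D x0 ≤ D x1 := hx1max hx0K
    simp only [D] at h1
    linarith
  have hx1S := hKS hx1K
  have hyS := hKy x1 hx1K
  have hx1n : ‖x1‖ ≤ A' := by simpa using hx1K.1
  have hxn1 := hx1K.2.1
  have hxn2 := hx1K.2.2
  have hexp : 0 ≤ b * (Real.exp (Λ * L) - Real.exp (Λ * ⟪ν, x1⟫)) := by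
    apply mul_nonneg hb0.le
    have := Real.exp_le_exp.mpr (mul_le_mul_of_nonneg_left hxn2 (by linarith : 0 ≤ Λ))
    linarith
  have hκn : 0 ≤ κ * ‖x1‖ ^ 2 := by positivity
  have hwb : v x1 - v (x1 + τ • e) ≤ C0 * (⟪ν, x1⟫ + 2 * η) ^ (1 - β) + η := by
    have := hm.hvu x1 hx1S
    have := hm.hvl _ hyS
    linarith
  have hlt1 : c < ⟪ν, x1⟫ := by
    rcases hxn1.lt_or_eq with h | h
    · exact h
    · exfalso
      rw [← h] at hwb
      linarith
  have hlt2 : ⟪ν, x1⟫ < L := by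
    rcases hxn2.lt_or_eq with h | h
    · exact h
    · exfalso
      obtain ⟨t, ht, hteq⟩ := hm.sol.mvt hτ (hKS' x1 hx1K)
      have ht' := Ioo_subset_Icc_self ht
      have hS := hKS' x1 hx1K t ht'
      have h1 := hm.hGb _ hS
      have h2 : L ≤ ⟪ν, x1 + t • e⟫ := by
        rw [← h]; exact inner_ge_of_nonneg heν ht'.1
      have h3 : ‖G (x1 + t • e)‖ ≤ C0 * L ^ (-β) :=
        h1.trans (mul_le_mul_of_nonneg_left (rpow_anti (hc.trans_le hcL) h2 hβ0.le) hC0.le)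
      have h4 : -‖G (x1 + t • e)‖ ≤ ⟪G (x1 + t • e), e⟫ := by
        have := abs_real_inner_le_norm (G (x1 + t • e)) e
        rw [he, mul_one] at this
        exact neg_le_of_abs_le this
      rw [hteq, le_div_iff₀ hτ] at h4
      have h5 : ‖G (x1 + t • e)‖ * τ ≤ ‖G (x1 + t • e)‖ * 1 :=
        mul_le_mul_of_nonneg_left hτ1 (norm_nonneg _)
      linarith
  have hlt3 : ‖x1‖ < A' := by
    rcases hx1n.lt_or_eq with h | h
    · exact h
    · exfalso
      have h1 : (⟪ν, x1⟫ + 2 * η) ^ (1 - β) ≤ (L + 2) ^ (1 - β) :=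
        Real.rpow_le_rpow (by linarith) (by linarith) (by linarith)
      have h2 := mul_le_mul_of_nonneg_left h1 hC0.le
      rw [h] at hD1
      linarith
  have hKn : K ∈ 𝓝 x1 := by
    have o1 : IsOpen {x : EuclideanSpace ℝ (Fin n) | c < ⟪ν, x⟫ ∧ ⟪ν, x⟫ < L ∧ ‖x‖ < A'} :=
      IsOpen.and (isOpen_lt continuous_const (cont_in ν))
        (IsOpen.and (isOpen_lt (cont_in ν) continuous_const) (isOpen_lt continuous_norm continuous_const))
    refine mem_of_superset (o1.mem_nhds ⟨hlt1, hlt2, hlt3⟩) ?_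
    intro x hx
    exact ⟨by simpa using hx.2.2.le, hx.1.le, hx.2.1.le⟩
  have hloc : IsLocalMax D x1 := hx1max.isLocalMax hKn
  set y := x1 + τ • e with hy
  set E := Real.exp (Λ * ⟪ν, x1⟫) with hE
  have hE1 : 1 ≤ E := Real.one_le_exp (by
    have : 0 < ⟪ν, x1⟫ := hx1S.1
    positivity)
  have hlt : ∀ ξ : EuclideanSpace ℝ (Fin n),
      (⟪G x1, ξ⟫ - ⟪G y, ξ⟫ - (κ * (2 * ⟪x1, ξ⟫) - b * (E * (Λ * ⟪ν, ξ⟫))) = 0) ∧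
      (⟪H x1 ξ, ξ⟫ - ⟪H y ξ, ξ⟫ - (κ * (2 * ‖ξ‖ ^ 2) - b * (E * (Λ * ⟪ν, ξ⟫) * (Λ * ⟪ν, ξ⟫))) ≤ 0) := by
    intro ξ
    have hmx : IsLocalMax (fun t : ℝ => D (x1 + t • ξ)) 0 := by
      have := (tendsto_line x1 ξ).eventually hloc
      simpa [IsLocalMax, IsMaxFilter] using this
    have hfun : (fun t : ℝ => D (x1 + t • ξ)) = fun t : ℝ => v (x1 + t • ξ) - v (y + t • ξ) -
        (κ * ‖x1 + t • ξ‖ ^ 2 - b * Real.exp (Λ * ⟪ν, x1 + t • ξ⟫)) := by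
      funext t
      have : x1 + t • ξ + τ • e = y + t • ξ := by rw [hy]; abel
      simp only [D, this]
    rw [hfun] at hmx
    have hexpd : ∀ t : ℝ, HasDerivAt (fun t : ℝ => Real.exp (Λ * ⟪ν, x1 + t • ξ⟫))
        (Real.exp (Λ * ⟪ν, x1 + t • ξ⟫) * (Λ * ⟪ν, ξ⟫)) t := fun t =>
      ((hasDerivAt_inner_line ν x1 ξ t).const_mul Λ).exp
    have := line_test (ψ1 := fun t => ⟪G (x1 + t • ξ), ξ⟫ - ⟪G (y + t • ξ), ξ⟫ -
        (κ * (2 * ⟪x1 + t • ξ, ξ⟫) - b * (Real.exp (Λ * ⟪ν, x1 + t • ξ⟫) * (Λ * ⟪ν, ξ⟫))))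
        (c := ⟪H x1 ξ, ξ⟫ - ⟪H y ξ, ξ⟫ - (κ * (2 * ‖ξ‖ ^ 2)
          - b * (E * (Λ * ⟪ν, ξ⟫) * (Λ * ⟪ν, ξ⟫)))) hmx ?_ ?_
    · simpa using this
    · filter_upwards [hm.sol.line1 hx1S ξ, hm.sol.line1 hyS ξ] with t a1 a2
      exact (a1.sub a2).sub (((hasDerivAt_normsq_line x1 ξ t).const_mul κ).sub
        ((hexpd t).const_mul b))
    · have a1 := hm.sol.line2 hx1S ξ
      have a2 := hm.sol.line2 hyS ξ
      have a3 := ((hasDerivAt_inner_line' x1 ξ 0).const_mul 2).const_mul κ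
      have a4 := ((hexpd 0).mul_const (Λ * ⟪ν, ξ⟫)).const_mul b
      simp only [zero_smul, add_zero, ← hE] at a4
      exact (a1.sub a2).sub (a3.sub a4)
  have hgrad : G x1 - G y = (2 * κ) • x1 - (b * E * Λ) • ν := by
    refine ext_inner_right ℝ fun ξ => ?_
    have := (hlt ξ).1
    simp only [inner_sub_left, inner_smul_left, RCLike.conj_to_real] at this ⊢
    linarith
  have hsum := Finset.sum_le_sum (s := Finset.univ) fun (i : Fin n) _ =>
    (hlt (EuclideanSpace.single i (1:ℝ))).2
  have hlap : -(‖G x1‖ ^ p + g x1) + (‖G y‖ ^ p + g y) - 2 * n * κ + b * E * Λ ^ 2 ≤ 0 := by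
    have s1 := hm.sol.eq y hyS
    have s2 := hm.sol.eq x1 hx1S
    have s3 := sum_inner_sq ν
    rw [hm.hν] at s3
    have : ∀ i : Fin n, ⟪H x1 (EuclideanSpace.single i (1:ℝ)), EuclideanSpace.single i (1:ℝ)⟫
        - ⟪H y (EuclideanSpace.single i (1:ℝ)), EuclideanSpace.single i (1:ℝ)⟫
        - (κ * (2 * ‖(EuclideanSpace.single i (1:ℝ) : EuclideanSpace ℝ (Fin n))‖ ^ 2)
          - b * (E * (Λ * ⟪ν, EuclideanSpace.single i (1:ℝ)⟫) * (Λ * ⟪ν, EuclideanSpace.single i (1:ℝ)⟫)))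
        = ⟪H x1 (EuclideanSpace.single i (1:ℝ)), EuclideanSpace.single i (1:ℝ)⟫
        - ⟪H y (EuclideanSpace.single i (1:ℝ)), EuclideanSpace.single i (1:ℝ)⟫
        - 2 * κ + b * E * Λ ^ 2 * ⟪ν, EuclideanSpace.single i (1:ℝ)⟫ ^ 2 := by
      intro i
      simp only [PiLp.norm_single, norm_one]
      ring
    rw [Finset.sum_congr rfl fun i _ => this i] at hsum
    simp only [Finset.sum_add_distrib, Finset.sum_sub_distrib, ← Finset.mul_sum, s1, s2, s3] at hsum
    simp at hsum
    linarith
  have hgx := abs_le.mp (hm.hgb x1 hx1S)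
  have hgy := abs_le.mp (hm.hgb y hyS)
  have hconv := conv_pow' hp (G x1) (G y)
  have hNn : ‖G x1 - G y‖ ≤ 2 * κ * A' + b * E * Λ := by
    rw [hgrad]
    refine (norm_sub_le _ _).trans ?_
    rw [norm_smul, norm_smul, hm.hν, Real.norm_of_nonneg (by positivity),
      Real.norm_of_nonneg (by positivity), mul_one]
    have := mul_le_mul_of_nonneg_left hx1n (by positivity : 0 ≤ 2 * κ)
    linarith
  have hpb := hm.powbound hp hβ hC0 hx1S hc hxn1
  have hpb2 : p * ‖G x1‖ ^ (p - 1) ≤ C1 := by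
    rw [hC1]; exact mul_le_mul_of_nonneg_left hpb (by linarith)
  have hfin : p * ‖G x1‖ ^ (p - 1) * ‖G x1 - G y‖ ≤ C1 * (2 * κ * A' + b * E * Λ) :=
    mul_le_mul hpb2 hNn (norm_nonneg _) hC10
  have e1 : b * E * Λ ^ 2 = C1 * (b * E * Λ) + b * E * Λ := by rw [hΛ]; ring
  have e2 : b ≤ b * E * Λ := by
    have : 1 ≤ E * Λ := one_le_mul_of_one_le_of_one_le hE1 hΛ1
    have := mul_le_mul_of_nonneg_left this hb0.le
    linarith
  rw [e1] at hlap
  linarith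

end Aux5

section Aux6

open Topology

variable {n : ℕ} {p β C0 A η : ℝ} {ν : EuclideanSpace ℝ (Fin n)}
  {v g : EuclideanSpace ℝ (Fin n) → ℝ}
  {G : EuclideanSpace ℝ (Fin n) → EuclideanSpace ℝ (Fin n)}
  {H : EuclideanSpace ℝ (Fin n) → EuclideanSpace ℝ (Fin n) →L[ℝ] EuclideanSpace ℝ (Fin n)}

/-- the trace is invariant under a reflection -/
lemma trace_reflect (B : EuclideanSpace ℝ (Fin n) →L[ℝ] EuclideanSpace ℝ (Fin n))
    (e : EuclideanSpace ℝ (Fin n)) (he : ‖e‖ = 1) :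
    ∑ i : Fin n, ⟪B (EuclideanSpace.single i (1:ℝ) + (-2 * ⟪e, EuclideanSpace.single i (1:ℝ)⟫) • e),
      EuclideanSpace.single i (1:ℝ) + (-2 * ⟪e, EuclideanSpace.single i (1:ℝ)⟫) • e⟫ =
    ∑ i : Fin n, ⟪B (EuclideanSpace.single i (1:ℝ)), EuclideanSpace.single i (1:ℝ)⟫ := by
  have h1 : ∑ i : Fin n, ⟪e, EuclideanSpace.single i (1:ℝ)⟫ * ⟪B (EuclideanSpace.single i (1:ℝ)), e⟫ = ⟪B e, e⟫ := by
    conv_rhs => rw [← sum_inner_smul e]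
    rw [map_sum, sum_inner_smul e, sum_inner]
    refine Finset.sum_congr rfl fun i _ => ?_
    rw [map_smul, inner_smul_left, RCLike.conj_to_real]
  have h2 : ∑ i : Fin n, ⟪e, EuclideanSpace.single i (1:ℝ)⟫ * ⟪B e, EuclideanSpace.single i (1:ℝ)⟫ = ⟪B e, e⟫ := by
    have : ⟪B e, e⟫ = ⟪B e, ∑ i : Fin n, ⟪e, EuclideanSpace.single i (1:ℝ)⟫ • (EuclideanSpace.single i (1:ℝ))⟫ := by
      rw [sum_inner_smul e]
    rw [this, inner_sum]
    refine Finset.sum_congr rfl fun i _ => ?_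
    rw [inner_smul_right]
  have h3 := sum_inner_sq e
  rw [he] at h3
  have : ∀ i : Fin n, ⟪B (EuclideanSpace.single i (1:ℝ) + (-2 * ⟪e, EuclideanSpace.single i (1:ℝ)⟫) • e),
      EuclideanSpace.single i (1:ℝ) + (-2 * ⟪e, EuclideanSpace.single i (1:ℝ)⟫) • e⟫ =
      ⟪B (EuclideanSpace.single i (1:ℝ)), EuclideanSpace.single i (1:ℝ)⟫
      - 2 * (⟪e, EuclideanSpace.single i (1:ℝ)⟫ * ⟪B (EuclideanSpace.single i (1:ℝ)), e⟫)
      - 2 * (⟪e, EuclideanSpace.single i (1:ℝ)⟫ * ⟪B e, EuclideanSpace.single i (1:ℝ)⟫)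
      + (4 * ⟪B e, e⟫) * ⟪e, EuclideanSpace.single i (1:ℝ)⟫ ^ 2 := by
    intro i
    rw [map_add, map_smul]
    simp only [inner_add_left, inner_add_right, inner_smul_left, inner_smul_right, RCLike.conj_to_real]
    ring
  rw [Finset.sum_congr rfl fun i _ => this i]
  simp only [Finset.sum_add_distrib, Finset.sum_sub_distrib, ← Finset.mul_sum, h1, h2, h3]
  ring

set_option maxHeartbeats 1000000 in
lemma reflect_core (hp : 2 < p) (hβ : β * (p - 1) = 1) (hC0 : 0 < C0)
    (hm : Model p β C0 A η ν v g G H) (hA : 3 ≤ A) {e : EuclideanSpace ℝ (Fin n)} (he : ‖e‖ = 1)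
    (heν : 0 ≤ ⟪ν, e⟫) {m K : ℝ} (hm0 : 0 < m) (hηm : η ≤ m)
    (hK : K = 64 * n + 4 + 22 * p * C0 ^ (p - 1))
    (hw : ∀ x ∈ closedBall ν (1 / 4), ∀ τ : ℝ, 0 < τ → τ ≤ 1 → v x - v (x + τ • e) ≤ 2 * m) :
    -⟪G ν, e⟫ ≤ 2 * m * K := by
  have hK4 : 4 ≤ K := by
    rw [hK]
    have : 0 ≤ 22 * p * C0 ^ (p - 1) := by
      have : 0 < p := by linarith
      positivity
    have : (0:ℝ) ≤ 64 * n := by positivity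
    linarith
  have hνν : ⟪ν, ν⟫ = (1:ℝ) := by rw [real_inner_self_eq_norm_sq, hm.hν]; norm_num
  have hball : ∀ x ∈ closedBall ν (1 / 4 : ℝ), 3 / 4 ≤ ⟪ν, x⟫ ∧ ‖x‖ ≤ 5 / 4 ∧ ‖x - ν‖ ≤ 1 / 4 := by
    intro x hx
    rw [mem_closedBall, dist_eq_norm] at hx
    have h1 : ⟪ν, x⟫ = 1 + ⟪ν, x - ν⟫ := by rw [inner_sub_right, hνν]; ring
    have h2 := abs_real_inner_le_norm ν (x - ν)
    rw [hm.hν, one_mul] at h2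
    have h3 := neg_le_of_abs_le h2
    have h4 : ‖x‖ ≤ ‖x - ν‖ + ‖ν‖ := by
      have := norm_add_le (x - ν) ν
      rwa [sub_add_cancel] at this
    rw [hm.hν] at h4
    exact ⟨by linarith, by linarith, hx⟩
  have hSy : ∀ x ∈ closedBall ν (1 / 4 : ℝ), ∀ t ∈ Icc (0:ℝ) 1, x + t • e ∈ HB ν A := by
    intro x hx t ht
    obtain ⟨b1, b2, b3⟩ := hball x hx
    have h1 := inner_ge_of_nonneg (x := x) heν ht.1
    have h2 : ‖x + t • e‖ ≤ ‖x‖ + t := by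
      have := norm_add_le x (t • e)
      rwa [norm_smul, he, mul_one, Real.norm_of_nonneg ht.1] at this
    exact ⟨by linarith, by linarith [ht.2]⟩
  have hSx : ∀ x ∈ closedBall ν (1 / 4 : ℝ), x ∈ HB ν A := by
    intro x hx
    simpa using hSy x hx 0 ⟨le_rfl, zero_le_one⟩
  have hνb : ν ∈ closedBall ν (1 / 4 : ℝ) := mem_closedBall_self (by norm_num)
  set Q : Set (EuclideanSpace ℝ (Fin n) × ℝ) := closedBall ν (1 / 4 : ℝ) ×ˢ Icc (0:ℝ) 1 with hQ
  have hQc : IsCompact Q := (isCompact_closedBall _ _).prod isCompact_Icc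
  let D : EuclideanSpace ℝ (Fin n) × ℝ → ℝ := fun z => v z.1 - v (z.1 + z.2 • e) -
    2 * m * (16 * ‖z.1 - ν‖ ^ 2 + K * (1 - Real.exp (-z.2)))
  have hDc : ContinuousOn D Q := by
    have c1 : ContinuousOn (fun z : EuclideanSpace ℝ (Fin n) × ℝ => v z.1) Q :=
      hm.sol.contv.comp (by fun_prop) fun z hz => hSx z.1 hz.1
    have c2 : ContinuousOn (fun z : EuclideanSpace ℝ (Fin n) × ℝ => v (z.1 + z.2 • e)) Q :=
      hm.sol.contv.comp (by fun_prop) fun z hz => hSy z.1 hz.1 z.2 hz.2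
    have c3 : ContinuousOn (fun z : EuclideanSpace ℝ (Fin n) × ℝ =>
      2 * m * (16 * ‖z.1 - ν‖ ^ 2 + K * (1 - Real.exp (-z.2)))) Q := by fun_prop
    exact (c1.sub c2).sub c3
  have hmain : ∀ z ∈ Q, D z ≤ 0 := by
    by_contra hcon
    push Not at hcon
    obtain ⟨z0, hz0Q, hz0⟩ := hcon
    obtain ⟨⟨x1, τ1⟩, hx1Q, hx1max⟩ := hQc.exists_isMaxOn ⟨z0, hz0Q⟩ hDc
    have hD1 : 0 < D (x1, τ1) := lt_of_lt_of_le hz0 (hx1max hz0Q)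
    have hx1b : x1 ∈ closedBall ν (1 / 4 : ℝ) := hx1Q.1
    have hτI : τ1 ∈ Icc (0:ℝ) 1 := hx1Q.2
    obtain ⟨b1, b2, b3⟩ := hball x1 hx1b
    have hD1' : 2 * m * (16 * ‖x1 - ν‖ ^ 2 + K * (1 - Real.exp (-τ1))) < v x1 - v (x1 + τ1 • e) := by
      simp only [D] at hD1
      linarith
    have hexp1 : Real.exp (-τ1) ≤ 1 := Real.exp_le_one_iff.mpr (by linarith [hτI.1])
    have hKe : 0 ≤ K * (1 - Real.exp (-τ1)) := mul_nonneg (by linarith) (by linarith)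
    have hτ0 : 0 < τ1 := by
      rcases hτI.1.lt_or_eq with h | h
      · exact h
      · exfalso
        rw [← h] at hD1'
        simp at hD1'
        have : 0 ≤ 2 * m * (16 * ‖x1 - ν‖ ^ 2) := by positivity
        linarith
    have hw1 := hw x1 hx1b τ1 hτ0 hτI.2
    have hexpm1 : Real.exp (-1) ≤ 1 / 2 := by
      rw [Real.exp_neg]
      have := Real.add_one_le_exp (1:ℝ)
      rw [inv_le_comm₀ (Real.exp_pos _) (by norm_num)]
      linarith
    have hle1 : 16 * ‖x1 - ν‖ ^ 2 + K * (1 - Real.exp (-τ1)) < 1 := by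
      by_contra h
      push Not at h
      have := mul_le_mul_of_nonneg_left h (by positivity : 0 ≤ 2 * m)
      linarith
    have hτ1 : τ1 < 1 := by
      rcases hτI.2.lt_or_eq with h | h
      · exact h
      · exfalso
        rw [h] at hle1
        have : 4 * (1 / 2) ≤ K * (1 - Real.exp (-1)) :=
          mul_le_mul hK4 (by linarith) (by norm_num) (by linarith)
        have : 0 ≤ 16 * ‖x1 - ν‖ ^ 2 := by positivity
        linarith
    have hxlt : ‖x1 - ν‖ < 1 / 4 := by
      rcases b3.lt_or_eq with h | h
      · exact h
      · exfalso
        rw [h] at hle1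
        linarith
    have hQn : Q ∈ 𝓝 (x1, τ1) := by
      refine prod_mem_nhds ?_ (Icc_mem_nhds hτ0 hτ1)
      apply closedBall_mem_nhds_of_mem
      rw [mem_ball, dist_eq_norm]; exact hxlt
    have hloc : IsLocalMax D (x1, τ1) := hx1max.isLocalMax hQn
    have hx1S := hSx x1 hx1b
    set y := x1 + τ1 • e with hy
    have hyS : y ∈ HB ν A := hSy x1 hx1b τ1 hτI
    set E := Real.exp (-τ1) with hE
    have hlt : ∀ (ξ : EuclideanSpace ℝ (Fin n)) (s : ℝ),
        (⟪G x1, ξ⟫ - ⟪G y, ξ + s • e⟫ - 2 * m * (16 * (2 * ⟪x1 - ν, ξ⟫) + K * (E * s)) = 0) ∧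
        (⟪H x1 ξ, ξ⟫ - ⟪H y (ξ + s • e), ξ + s • e⟫
          - 2 * m * (16 * (2 * ‖ξ‖ ^ 2) + K * (E * (-s) * s)) ≤ 0) := by
      intro ξ s
      have tl : Tendsto (fun t : ℝ => (x1 + t • ξ, τ1 + t * s)) (𝓝 0) (𝓝 (x1, τ1)) := by
        refine (tendsto_line x1 ξ).prodMk_nhds ?_
        have : ContinuousAt (fun t : ℝ => τ1 + t * s) 0 := by fun_prop
        simpa [ContinuousAt] using this
      have hmx : IsLocalMax (fun t : ℝ => D (x1 + t • ξ, τ1 + t * s)) 0 := by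
        have := tl.eventually hloc
        simpa [IsLocalMax, IsMaxFilter] using this
      have hfun : (fun t : ℝ => D (x1 + t • ξ, τ1 + t * s)) = fun t : ℝ =>
          v (x1 + t • ξ) - v (y + t • (ξ + s • e)) -
          2 * m * (16 * ‖(x1 - ν) + t • ξ‖ ^ 2 + K * (1 - Real.exp (-(τ1 + t * s)))) := by
        funext t
        have e1 : x1 + t • ξ + (τ1 + t * s) • e = y + t • (ξ + s • e) := by rw [hy]; module
        have e2 : x1 + t • ξ - ν = (x1 - ν) + t • ξ := by abel
        simp only [D, e1, e2]
      rw [hfun] at hmx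
      have hexpd : ∀ t : ℝ, HasDerivAt (fun t : ℝ => Real.exp (-(τ1 + t * s)))
          (Real.exp (-(τ1 + t * s)) * (-s)) t := fun t => by
        have : HasDerivAt (fun t : ℝ => -(τ1 + t * s)) (-s) t := by
          have := ((hasDerivAt_id t).mul_const s).const_add τ1
          exact this.fun_neg.congr_deriv (by simp)
        exact this.exp
      have := line_test (ψ1 := fun t => ⟪G (x1 + t • ξ), ξ⟫ - ⟪G (y + t • (ξ + s • e)), ξ + s • e⟫ -
          2 * m * (16 * (2 * ⟪(x1 - ν) + t • ξ, ξ⟫) + K * (Real.exp (-(τ1 + t * s)) * s)))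
          (c := ⟪H x1 ξ, ξ⟫ - ⟪H y (ξ + s • e), ξ + s • e⟫
          - 2 * m * (16 * (2 * ‖ξ‖ ^ 2) + K * (E * (-s) * s))) hmx ?_ ?_
      · simpa using this
      · filter_upwards [hm.sol.line1 hx1S ξ, hm.sol.line1 hyS (ξ + s • e)] with t a1 a2
        have a3 := ((hexpd t).const_sub 1).const_mul K
        have a4 := (((hasDerivAt_normsq_line (x1 - ν) ξ t).const_mul 16).add a3).const_mul (2 * m)
        exact ((a1.sub a2).sub a4).congr_deriv (by ring)
      · have a1 := hm.sol.line2 hx1S ξ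
        have a2 := hm.sol.line2 hyS (ξ + s • e)
        have a3 := ((hasDerivAt_inner_line' (x1 - ν) ξ 0).const_mul 2).const_mul 16
        have a4 := ((hexpd 0).mul_const s).const_mul K
        simp only [zero_mul, add_zero, ← hE] at a4
        exact (a1.sub a2).sub ((a3.add a4).const_mul (2 * m))
    have hgrad : G x1 - G y = (64 * m) • (x1 - ν) := by
      refine ext_inner_right ℝ fun ξ => ?_
      have := (hlt ξ 0).1
      simp only [zero_smul, add_zero, mul_zero] at this
      rw [inner_sub_left, inner_smul_left, RCLike.conj_to_real]
      linarith
    have hsum := Finset.sum_le_sum (s := Finset.univ) fun (i : Fin n) _ =>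
      (hlt (EuclideanSpace.single i (1:ℝ)) (-2 * ⟪e, EuclideanSpace.single i (1:ℝ)⟫)).2
    have hlap : -(‖G x1‖ ^ p + g x1) + (‖G y‖ ^ p + g y) - 64 * m * n + 8 * m * K * E ≤ 0 := by
      have s1 := hm.sol.eq y hyS
      have s2 := hm.sol.eq x1 hx1S
      have s3 := sum_inner_sq e
      rw [he] at s3
      have s4 := trace_reflect (H y) e he
      have : ∀ i : Fin n, 2 * m * (16 * (2 * ‖(EuclideanSpace.single i (1:ℝ) : EuclideanSpace ℝ (Fin n))‖ ^ 2)
          + K * (E * (-(-2 * ⟪e, EuclideanSpace.single i (1:ℝ)⟫)) * (-2 * ⟪e, EuclideanSpace.single i (1:ℝ)⟫)))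
          = 64 * m - 8 * m * K * E * ⟪e, EuclideanSpace.single i (1:ℝ)⟫ ^ 2 := by
        intro i
        simp only [PiLp.norm_single, norm_one]
        ring
      have s5 : ∑ i : Fin n, (64 * m - 8 * m * K * E * ⟪e, EuclideanSpace.single i (1:ℝ)⟫ ^ 2)
          = 64 * m * n - 8 * m * K * E := by
        rw [Finset.sum_sub_distrib, ← Finset.mul_sum (a := 8 * m * K * E), s3]
        simp
        ring
      rw [Finset.sum_sub_distrib, Finset.sum_sub_distrib, Finset.sum_congr rfl fun i _ => this i,
        s4, s1, s2, s5] at hsum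
      simp at hsum
      linarith
    have hgx := abs_le.mp (hm.hgb x1 hx1S)
    have hgy := abs_le.mp (hm.hgb y hyS)
    have hconv := conv_pow' hp (G x1) (G y)
    have hNn : ‖G x1 - G y‖ ≤ 16 * m := by
      rw [hgrad, norm_smul, Real.norm_of_nonneg (by positivity)]
      have := mul_le_mul_of_nonneg_left b3 (by positivity : 0 ≤ 64 * m)
      linarith
    have hpb := hm.powbound hp hβ hC0 hx1S (by norm_num : (0:ℝ) < 3 / 4) b1
    have hp0 : 0 < p := by linarith
    have hCp : 0 < C0 ^ (p - 1) := by positivity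
    have hfin : p * ‖G x1‖ ^ (p - 1) * ‖G x1 - G y‖ ≤ p * (C0 ^ (p - 1) / (3 / 4)) * (16 * m) :=
      mul_le_mul (mul_le_mul_of_nonneg_left hpb hp0.le) hNn (norm_nonneg _) (by positivity)
    have hE3 : 1 / 3 ≤ E := by
      have h1 : Real.exp (-1) ≤ E := Real.exp_le_exp.mpr (by linarith)
      have h2 : 1 / 3 ≤ Real.exp (-1) := by
        rw [Real.exp_neg, one_div]
        apply inv_anti₀ (Real.exp_pos _)
        have := Real.exp_one_lt_d9
        linarith
      linarith
    have h8 : 8 * m * K * (1 / 3) ≤ 8 * m * K * E :=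
      mul_le_mul_of_nonneg_left hE3 (by positivity)
    have h9 : m * K = 64 * m * n + 4 * m + 22 * (m * (p * C0 ^ (p - 1))) := by rw [hK]; ring
    have h10 : p * (C0 ^ (p - 1) / (3 / 4)) * (16 * m) = 64 / 3 * (m * (p * C0 ^ (p - 1))) := by ring
    have h11 : 0 ≤ m * (p * C0 ^ (p - 1)) := by positivity
    have h12 : 0 ≤ m * n := by positivity
    rw [h10] at hfin
    linarith
  -- derivative at τ = 0
  have hder : HasDerivAt (fun t : ℝ => v (ν + t • e)) ⟪G ν, e⟫ 0 := by
    have := (hm.sol.line1 (hSx ν hνb) e).self_of_nhds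
    simpa using this
  have hslope := (hder.tendsto_slope_zero_right).neg
  refine le_of_tendsto hslope ?_
  have hev : ∀ᶠ t : ℝ in 𝓝[>] 0, t ∈ Ioc (0:ℝ) 1 := Ioc_mem_nhdsGT one_pos
  filter_upwards [hev] with t ht
  have h1 := hmain (ν, t) ⟨hνb, ⟨ht.1.le, ht.2⟩⟩
  simp only [D, sub_self, norm_zero] at h1
  have h2 := Real.add_one_le_exp (-t)
  have h3 : K * (1 - Real.exp (-t)) ≤ K * t := mul_le_mul_of_nonneg_left (by linarith) (by linarith)
  have h4 := mul_le_mul_of_nonneg_left h3 (by positivity : 0 ≤ 2 * m)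
  simp only [zero_add, zero_smul, add_zero, smul_eq_mul]
  rw [← mul_neg, inv_mul_le_iff₀ ht.1]
  norm_num at h1
  linarith

end Aux6

section Aux7

open Topology

variable {n : ℕ} {p β C0 : ℝ}

lemma exists_large_rpow (hβ0 : 0 < β) (C0 : ℝ) {s : ℝ} (hs : 0 < s) :
    ∃ L : ℝ, 2 ≤ L ∧ C0 * L ^ (-β) ≤ s := by
  have h : Tendsto (fun L : ℝ => C0 * L ^ (-β)) atTop (𝓝 (C0 * 0)) :=
    (tendsto_rpow_neg_atTop hβ0).const_mul C0
  rw [mul_zero] at h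
  obtain ⟨L, h1, h2⟩ := ((eventually_ge_atTop (2:ℝ)).and (h.eventually_le_const hs)).exists
  exact ⟨L, h1, h2⟩

lemma normal_lim (n : ℕ) (hp : 2 < p) (hβ : β * (p - 1) = 1) (hβ0 : 0 < β) (hC0 : 0 < C0)
    {a σ : ℝ} (ha : 0 < a) (haβ : β < a ^ (p - 1)) (hσ : 0 < σ) :
    ∃ A0 η0 : ℝ, 0 < η0 ∧ ∀ (A η : ℝ) (ν : EuclideanSpace ℝ (Fin n))
      (v g : EuclideanSpace ℝ (Fin n) → ℝ)
      (G : EuclideanSpace ℝ (Fin n) → EuclideanSpace ℝ (Fin n))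
      (H : EuclideanSpace ℝ (Fin n) → EuclideanSpace ℝ (Fin n) →L[ℝ] EuclideanSpace ℝ (Fin n)),
      A0 ≤ A → η ≤ η0 → Model p β C0 A η ν v g G H → ⟪G ν, ν⟫ ≤ a + σ := by
  have hp0 : 0 < p := by linarith
  obtain ⟨τ, hτ0, hτ2, hτ⟩ : ∃ τ : ℝ, 0 < τ ∧ τ ≤ 1 / 2 ∧ a * (1 - τ) ^ (-β) ≤ a + σ / 3 := by
    have h : ContinuousAt (fun τ : ℝ => a * (1 - τ) ^ (-β)) 0 := by
      refine ContinuousAt.const_mul (ContinuousAt.rpow_const (by fun_prop) ?_) a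
      left; norm_num
    have h1 : ∀ᶠ τ : ℝ in 𝓝 0, a * (1 - τ) ^ (-β) < a + σ / 3 := by
      apply h.eventually_lt_const
      simp; linarith
    have h2 : ∀ᶠ τ : ℝ in 𝓝[>] 0, τ ∈ Ioc (0:ℝ) (1 / 2) := Ioc_mem_nhdsGT (by norm_num)
    obtain ⟨τ, h3, h4⟩ := ((h1.filter_mono nhdsWithin_le_nhds).and h2).exists
    exact ⟨τ, h4.1, h4.2, h3.le⟩
  set s : ℝ := min 1 ((a / C0) ^ (1 / β)) with hs
  have hs0 : 0 < s := lt_min one_pos (by positivity)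
  have hqa : C0 * τ ^ (-β) ≤ a * (τ * s) ^ (-β) := by
    rw [Real.mul_rpow hτ0.le hs0.le]
    have h1 : ((a / C0) ^ (1 / β)) ^ (-β) ≤ s ^ (-β) := rpow_anti hs0 (min_le_right _ _) hβ0.le
    have h2 : ((a / C0) ^ (1 / β)) ^ (-β) = C0 / a := by
      rw [← Real.rpow_mul (by positivity)]
      have : 1 / β * -β = -1 := by field_simp
      rw [this, Real.rpow_neg_one, inv_div]
    rw [h2, div_le_iff₀ ha] at h1
    have h3 : 0 ≤ τ ^ (-β) := by positivity
    have := mul_le_mul_of_nonneg_right h1 h3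
    linarith
  have hτq : τ + τ * s ≤ 1 := by
    have := mul_le_mul_of_nonneg_left (min_le_left 1 ((a / C0) ^ (1 / β))) hτ0.le
    rw [← hs] at this
    linarith
  obtain ⟨L, hL2, hL⟩ := exists_large_rpow hβ0 C0 (by positivity : 0 < σ / 3)
  have hL0 : 0 < L := by linarith
  set T := a * (β + 1) * (a ^ (p - 1) - β) * L ^ (-β - 2) with hT
  have hT0 : 0 < T := by
    have : 0 < a ^ (p - 1) - β := by linarith
    positivity
  set B := C0 * τ ^ (-β) with hB
  have hB0 : 0 < B := by positivity
  set Q := 2 * n * B + 2 * B * p * C0 ^ (p - 1) / τ with hQ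
  have hQ0 : 0 ≤ Q := by positivity
  set A' := 1 + 2 * Q / T + 3 * B / σ with hA'
  have hA'1 : 1 ≤ A' := by
    have : 0 ≤ 2 * Q / T := by positivity
    have : 0 ≤ 3 * B / σ := by positivity
    linarith
  have hA'0 : 0 < A' := by linarith
  have hκ1 : B / A' ^ 2 ≤ B / A' := by
    apply div_le_div_of_nonneg_left hB0.le hA'0
    rw [sq]
    exact le_mul_of_one_le_left hA'0.le (by linarith)
  have hQA : Q / A' < T / 2 := by
    rw [div_lt_iff₀ hA'0, hA']
    have e1 : T / 2 * (1 + 2 * Q / T + 3 * B / σ) = T / 2 + Q + T / 2 * (3 * B / σ) := by field_simp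
    have : 0 ≤ T / 2 * (3 * B / σ) := by positivity
    rw [e1]; linarith
  have hBA : B / A' ≤ σ / 3 := by
    rw [div_le_iff₀ hA'0, hA']
    have e1 : σ / 3 * (1 + 2 * Q / T + 3 * B / σ) = σ / 3 + σ / 3 * (2 * Q / T) + B := by field_simp
    have : 0 ≤ σ / 3 * (2 * Q / T) := by positivity
    rw [e1]; linarith
  refine ⟨A' + 1, T / 4, by positivity, fun A η ν v g G H hA hη hm => ?_⟩
  have hfin : 2 * n * (B / A' ^ 2) + 2 * (B / A' ^ 2) * p * C0 ^ (p - 1) * A' / τ + η < T := by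
    have e1 : 2 * (B / A' ^ 2) * p * C0 ^ (p - 1) * A' / τ = (2 * B * p * C0 ^ (p - 1) / τ) / A' := by
      field_simp
    have e2 : 2 * n * (B / A' ^ 2) ≤ 2 * n * (B / A') := mul_le_mul_of_nonneg_left hκ1 (by positivity)
    have e3 : Q / A' = 2 * n * (B / A') + (2 * B * p * C0 ^ (p - 1) / τ) / A' := by
      rw [hQ]; ring
    rw [e1]; linarith
  have := normal_core hp hβ hβ0 hC0 hm ha haβ hτ0 (mul_pos hτ0 hs0) hτq (by linarith) hA'1
    (by linarith) hqa (κ := B / A' ^ 2) (by rw [← hB]; field_simp) hfin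
  linarith

set_option maxHeartbeats 800000 in
lemma shift_lim (n : ℕ) (hp : 2 < p) (hβ : β * (p - 1) = 1) (hβ0 : 0 < β) (hβ1 : β < 1) (hC0 : 0 < C0)
    {m : ℝ} (hm0 : 0 < m) :
    ∃ A0 η0 : ℝ, 0 < η0 ∧ ∀ (A η : ℝ) (ν : EuclideanSpace ℝ (Fin n))
      (v g : EuclideanSpace ℝ (Fin n) → ℝ)
      (G : EuclideanSpace ℝ (Fin n) → EuclideanSpace ℝ (Fin n))
      (H : EuclideanSpace ℝ (Fin n) → EuclideanSpace ℝ (Fin n) →L[ℝ] EuclideanSpace ℝ (Fin n)),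
      A0 ≤ A → η ≤ η0 → Model p β C0 A η ν v g G H → ∀ e : EuclideanSpace ℝ (Fin n),
      ‖e‖ = 1 → 0 ≤ ⟪ν, e⟫ → ∀ x ∈ closedBall ν (1 / 4), ∀ τ : ℝ, 0 < τ → τ ≤ 1 →
      v x - v (x + τ • e) ≤ 2 * m := by
  have hp0 : 0 < p := by linarith
  have h1β : 0 < 1 - β := by linarith
  set t : ℝ := (m / (2 * C0)) ^ (1 / (1 - β)) with ht
  have ht0 : 0 < t := by positivity
  have htm : C0 * t ^ (1 - β) = m / 2 := by
    rw [ht, ← Real.rpow_mul (by positivity), one_div_mul_cancel h1β.ne', Real.rpow_one]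
    field_simp
  set c := min (t / 2) (1 / 2) with hc
  have hc0 : 0 < c := lt_min (by positivity) (by norm_num)
  have hct : c ≤ t / 2 := min_le_left _ _
  have hc2 : c ≤ 1 / 2 := min_le_right _ _
  obtain ⟨L, hL2, hL⟩ := exists_large_rpow hβ0 C0 hm0
  set C1 := p * (C0 ^ (p - 1) / c) with hC1
  have hC10 : 0 ≤ C1 := by positivity
  set E := Real.exp ((C1 + 1) * L) with hE
  have hE0 : 0 < E := Real.exp_pos _
  set B := C0 * (L + 2) ^ (1 - β) + 1 with hB
  have hB0 : 0 < B := by positivity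
  set Q := 4 * B + (2 * n * B + 2 * C1 * B) * E with hQ
  have hQ0 : 0 ≤ Q := by positivity
  set A' := 2 + 4 * Q / m with hA'
  have hA'2 : 2 ≤ A' := by
    have : 0 ≤ 4 * Q / m := by positivity
    linarith
  have hA'0 : 0 < A' := by linarith
  have hκ1 : B / A' ^ 2 ≤ B / A' := by
    apply div_le_div_of_nonneg_left hB0.le hA'0
    rw [sq]
    exact le_mul_of_one_le_left hA'0.le (by linarith)
  have hQA : Q / A' ≤ m / 4 := by
    rw [div_le_iff₀ hA'0, hA']
    have e1 : m / 4 * (2 + 4 * Q / m) = m / 2 + Q := by field_simp; ring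
    rw [e1]; linarith
  refine ⟨A' + 2, min (min (t / 4) (m / 2)) (min 1 (m / (8 * E))),
    lt_min (lt_min (by positivity) (by positivity)) (lt_min one_pos (by positivity)),
    fun A η ν v g G H hA hη hm e he heν x hx τ hτ0 hτ1 => ?_⟩
  have hη1 : η ≤ t / 4 := hη.trans ((min_le_left _ _).trans (min_le_left _ _))
  have hη2 : η ≤ m / 2 := hη.trans ((min_le_left _ _).trans (min_le_right _ _))
  have hη3 : η ≤ 1 := hη.trans ((min_le_right _ _).trans (min_le_left _ _))
  have hη4 : η ≤ m / (8 * E) := hη.trans ((min_le_right _ _).trans (min_le_right _ _))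
  rw [mem_closedBall, dist_eq_norm] at hx
  have hνν : ⟪ν, ν⟫ = (1:ℝ) := by rw [real_inner_self_eq_norm_sq, hm.hν]; norm_num
  have h1 : ⟪ν, x⟫ = 1 + ⟪ν, x - ν⟫ := by rw [inner_sub_right, hνν]; ring
  have h2 := abs_real_inner_le_norm ν (x - ν)
  rw [hm.hν, one_mul] at h2
  obtain ⟨h3, h3'⟩ := abs_le.mp h2
  have h4 : ‖x‖ ≤ ‖x - ν‖ + ‖ν‖ := by
    have := norm_add_le (x - ν) ν
    rwa [sub_add_cancel] at this
  rw [hm.hν] at h4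
  have hm1 : C0 * (c + 2 * η) ^ (1 - β) + η ≤ m := by
    have : (c + 2 * η) ^ (1 - β) ≤ t ^ (1 - β) :=
      Real.rpow_le_rpow (by linarith [hm.hη]) (by linarith) h1β.le
    have := mul_le_mul_of_nonneg_left this hC0.le
    linarith
  have hsc := shift_core hp hβ hβ0 hβ1 hC0 hm he heν hτ0 hτ1 hc0 (by linarith) (A' := A') (L := L)
    (κ := B / A' ^ 2) (C1 := C1)
    (b := 2 * n * (B / A' ^ 2) + 2 * η + C1 * (2 * (B / A' ^ 2) * A') + m / (4 * E)) (m := m) (x0 := x)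
    (by linarith) hη3 (by positivity) (le_of_eq (by rw [← hB]; field_simp)) hA'0.le hC1
    (by have : 0 < m / (4 * E) := by positivity
        linarith) hm1 hL (by linarith) (by linarith) (by linarith)
  refine hsc.trans ?_
  have hx2 : ‖x‖ ^ 2 ≤ 4 := by
    have := pow_le_pow_left₀ (norm_nonneg x) (by linarith : ‖x‖ ≤ 2) 2
    norm_num at this
    exact this
  set b := 2 * n * (B / A' ^ 2) + 2 * η + C1 * (2 * (B / A' ^ 2) * A') + m / (4 * E) with hb
  have hb0 : 0 ≤ b := by
    have := hm.hη
    positivity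
  have hbE : b * (E - Real.exp ((C1 + 1) * ⟪ν, x⟫)) ≤ b * E :=
    mul_le_mul_of_nonneg_left (by linarith [Real.exp_pos ((C1 + 1) * ⟪ν, x⟫)]) hb0
  have hbE2 : b ≤ (2 * n * B + 2 * C1 * B) / A' + 2 * η + m / (4 * E) := by
    have e1 : C1 * (2 * (B / A' ^ 2) * A') = 2 * C1 * B / A' := by field_simp
    have e2 : 2 * n * (B / A' ^ 2) ≤ 2 * n * (B / A') := mul_le_mul_of_nonneg_left hκ1 (by positivity)
    have e3 : (2 * n * B + 2 * C1 * B) / A' = 2 * n * (B / A') + 2 * C1 * B / A' := by ring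
    rw [hb, e1, e3]; linarith
  have hbE3 := mul_le_mul_of_nonneg_right hbE2 hE0.le
  have e4 : ((2 * n * B + 2 * C1 * B) / A' + 2 * η + m / (4 * E)) * E =
      (2 * n * B + 2 * C1 * B) * E / A' + 2 * (η * E) + m / 4 := by
    field_simp
  have e5 : η * E ≤ m / 8 := by
    have := mul_le_mul_of_nonneg_right hη4 hE0.le
    have e : m / (8 * E) * E = m / 8 := by field_simp
    linarith
  have e6 : Q / A' = 4 * (B / A') + (2 * n * B + 2 * C1 * B) * E / A' := by rw [hQ]; ring
  have e7 : B / A' ^ 2 * ‖x‖ ^ 2 ≤ B / A' ^ 2 * 4 := mul_le_mul_of_nonneg_left hx2 (by positivity)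
  linarith

lemma model_concl (n : ℕ) (hp : 2 < p) (hβ : β * (p - 1) = 1) (hβ0 : 0 < β) (hβ1 : β < 1) (hC0 : 0 < C0)
    {ε : ℝ} (hε : 0 < ε) :
    ∃ A η : ℝ, 3 ≤ A ∧ 0 < η ∧ η ≤ 1 ∧ η ≤ ε ∧ ∀ (ν : EuclideanSpace ℝ (Fin n))
      (v g : EuclideanSpace ℝ (Fin n) → ℝ)
      (G : EuclideanSpace ℝ (Fin n) → EuclideanSpace ℝ (Fin n))
      (H : EuclideanSpace ℝ (Fin n) → EuclideanSpace ℝ (Fin n) →L[ℝ] EuclideanSpace ℝ (Fin n)),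
      Model p β C0 A η ν v g G H → ‖G ν‖ ≤ (1 + ε) * β ^ β := by
  have hp0 : 0 < p := by linarith
  have hp1 : 0 < p - 1 := by linarith
  set D := β ^ β with hD
  have hD0 : 0 < D := by positivity
  have hDp : D ^ (p - 1) = β := by rw [hD, ← Real.rpow_mul hβ0.le, hβ, Real.rpow_one]
  have ha : 0 < (1 + ε / 4) * D := by positivity
  have haβ : β < ((1 + ε / 4) * D) ^ (p - 1) := by
    conv_lhs => rw [← hDp]
    exact Real.rpow_lt_rpow hD0.le (by nlinarith) hp1
  set K := 64 * n + 4 + 22 * p * C0 ^ (p - 1) with hK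
  have hK0 : 0 < K := by positivity
  set m := ε * D / (8 * K) with hm
  have hm0 : 0 < m := by positivity
  have hmK : 2 * m * K = ε * D / 4 := by rw [hm]; field_simp; ring
  obtain ⟨A1, η1, hη1, h1⟩ := normal_lim n hp hβ hβ0 hC0 ha haβ (by positivity : 0 < ε * D / 4)
  obtain ⟨A2, η2, hη2, h2⟩ := shift_lim n hp hβ hβ0 hβ1 hC0 hm0
  refine ⟨max 3 (max A1 A2), min (min 1 ε) (min m (min η1 η2)), le_max_left _ _,
    lt_min (lt_min one_pos hε) (lt_min hm0 (lt_min hη1 hη2)), (min_le_left _ _).trans (min_le_left _ _),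
    (min_le_left _ _).trans (min_le_right _ _), fun ν v g G H hM => ?_⟩
  set A := max 3 (max A1 A2) with hA
  set η := min (min 1 ε) (min m (min η1 η2)) with hη
  have hA3 : 3 ≤ A := le_max_left _ _
  have hAA1 : A1 ≤ A := (le_max_left _ _).trans (le_max_right _ _)
  have hAA2 : A2 ≤ A := (le_max_right _ _).trans (le_max_right _ _)
  have hηm : η ≤ m := (min_le_right _ _).trans (min_le_left _ _)
  have hηη1 : η ≤ η1 := (min_le_right _ _).trans ((min_le_right _ _).trans (min_le_left _ _))
  have hηη2 : η ≤ η2 := (min_le_right _ _).trans ((min_le_right _ _).trans (min_le_right _ _))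
  have hz := h1 A η ν v g G H hAA1 hηη1 hM
  have hr : ∀ e : EuclideanSpace ℝ (Fin n), ‖e‖ = 1 → 0 ≤ ⟪ν, e⟫ → -⟪G ν, e⟫ ≤ ε * D / 4 := by
    intro e he heν
    rw [← hmK]
    exact reflect_core hp hβ hC0 hM hA3 he heν hm0 hηm hK (h2 A η ν v g G H hAA2 hηη2 hM e he heν)
  have hνν : ⟪ν, ν⟫ = (1:ℝ) := by rw [real_inner_self_eq_norm_sq, hM.hν]; norm_num
  have hzl := hr ν hM.hν (by rw [hνν]; norm_num)
  set z := ⟪G ν, ν⟫ with hzd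
  set w := G ν - z • ν with hw
  have hνw : ⟪ν, w⟫ = 0 := by
    rw [hw, inner_sub_right, inner_smul_right, hνν, real_inner_comm, ← hzd]; ring
  have hwn : ‖w‖ ≤ ε * D / 4 := by
    rcases eq_or_ne w 0 with h | h
    · rw [h, norm_zero]; positivity
    · have hw0 : 0 < ‖w‖ := norm_pos_iff.mpr h
      have := hr (-(‖w‖⁻¹ • w)) (by rw [norm_neg, norm_smul, norm_inv, norm_norm, inv_mul_cancel₀ hw0.ne'])
        (by rw [inner_neg_right, inner_smul_right, hνw]; simp)
      have hg : ⟪G ν, w⟫ = ‖w‖ ^ 2 := by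
        have : G ν = w + z • ν := by rw [hw]; abel
        rw [this, inner_add_left, inner_smul_left, hνw, real_inner_self_eq_norm_sq]; simp
      rw [inner_neg_right, inner_smul_right, hg, neg_neg] at this
      have e : ‖w‖⁻¹ * ‖w‖ ^ 2 = ‖w‖ := by field_simp
      rwa [e] at this
  have hGn : ‖G ν‖ ≤ ‖w‖ + |z| := by
    have : G ν = w + z • ν := by rw [hw]; abel
    rw [this]
    refine (norm_add_le _ _).trans ?_
    rw [norm_smul, hM.hν, mul_one, Real.norm_eq_abs]
  have hza : |z| ≤ (1 + ε / 4) * D + ε * D / 4 := by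
    rw [abs_le]
    refine ⟨?_, hz⟩
    linarith
  have : 0 < ε * D := by positivity
  linarith

end Aux7

section Aux8

open Topology

variable {n : ℕ} {p β M : ℝ} {S Ω : Set (EuclideanSpace ℝ (Fin n))}
  {v g u f : EuclideanSpace ℝ (Fin n) → ℝ}
  {G : EuclideanSpace ℝ (Fin n) → EuclideanSpace ℝ (Fin n)}
  {H : EuclideanSpace ℝ (Fin n) → EuclideanSpace ℝ (Fin n) →L[ℝ] EuclideanSpace ℝ (Fin n)}

lemma Sol.of_C2 (hΩ : IsOpen Ω) (hu : ContDiffOn ℝ 2 u Ω)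
    (heq : ∀ x ∈ Ω, -lap u x = ‖gradient u x‖ ^ p + f x) :
    Sol p Ω u f (gradient u) (fun x => fderiv ℝ (gradient u) x) := by
  have hgd : ∀ x ∈ Ω, DifferentiableAt ℝ (gradient u) x := by
    intro x hx
    have h1 : ContDiffAt ℝ 2 u x := hu.contDiffAt (hΩ.mem_nhds hx)
    have h2 : DifferentiableAt ℝ (fderiv ℝ u) x :=
      (h1.fderiv_right (m := 1) (by norm_num)).differentiableAt (by norm_num)
    have : gradient u = fun x => (InnerProductSpace.toDual ℝ (EuclideanSpace ℝ (Fin n))).symm (fderiv ℝ u x) := rfl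
    rw [this]
    exact ((InnerProductSpace.toDual ℝ (EuclideanSpace ℝ (Fin n))).symm.toContinuousLinearEquiv.differentiableAt).comp x h2
  refine ⟨hΩ, ?_, fun x hx => (hgd x hx).hasFDerivAt, ?_⟩
  · intro x hx
    have h1 : ContDiffAt ℝ 2 u x := hu.contDiffAt (hΩ.mem_nhds hx)
    exact (h1.differentiableAt (by norm_num)).hasGradientAt
  · intro x hx
    rw [← heq x hx, neg_neg, lap]
    refine Finset.sum_congr rfl fun i _ => ?_
    have : (fun y => fderiv ℝ u y (EuclideanSpace.single i (1:ℝ))) = fun y => ⟪gradient u y, EuclideanSpace.single i (1:ℝ)⟫ := by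
      funext y
      rw [gradient, InnerProductSpace.toDual_symm_apply]
    rw [this]
    have h3 := (hgd x hx).hasFDerivAt.inner ℝ (hasFDerivAt_const (EuclideanSpace.single i (1:ℝ)) x)
    rw [h3.fderiv]
    simp

lemma Sol.mono {S' : Set (EuclideanSpace ℝ (Fin n))} (h : Sol p S v g G H) (ho : IsOpen S') (hs : S' ⊆ S) :
    Sol p S' v g G H :=
  ⟨ho, fun x hx => h.hv x (hs hx), fun x hx => h.hG x (hs hx), fun x hx => h.eq x (hs hx)⟩

lemma Sol.scale (h : Sol p S v g G H) (hβ : β * (p - 1) = 1) {l : ℝ} (hl : 0 < l)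
    (z : EuclideanSpace ℝ (Fin n)) :
    Sol p ((fun x => z + l • x) ⁻¹' S) (fun x => l ^ (β - 1) * v (z + l • x))
      (fun x => l ^ (1 + β) * g (z + l • x)) (fun x => l ^ β • G (z + l • x))
      (fun x => l ^ (1 + β) • H (z + l • x)) := by
  have hd : ∀ x : EuclideanSpace ℝ (Fin n), HasFDerivAt (fun x : EuclideanSpace ℝ (Fin n) => z + l • x)
      (l • ContinuousLinearMap.id ℝ (EuclideanSpace ℝ (Fin n))) x := fun x =>
    ((hasFDerivAt_id x).const_smul l).const_add z
  have e1 : l ^ (β - 1) * l = l ^ β := by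
    rw [← Real.rpow_add_one hl.ne']; ring_nf
  have e2 : l ^ β * l = l ^ (1 + β) := by
    rw [← Real.rpow_add_one hl.ne']; ring_nf
  refine ⟨h.isOpen.preimage (by fun_prop), ?_, ?_, ?_⟩
  · intro x hx
    have := ((h.hv _ hx).comp x (hd x)).const_mul (l ^ (β - 1))
    refine this.congr_fderiv ?_
    ext y
    simp
    rw [← e1]; ring
  · intro x hx
    have := ((h.hG _ hx).comp x (hd x)).const_smul (l ^ β)
    refine this.congr_fderiv ?_
    ext1 y
    simp
    rw [smul_smul, e2]
  · intro x hx
    have := h.eq _ hx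
    have e3 : ∀ i : Fin n, ⟪(l ^ (1 + β) • H (z + l • x)) (EuclideanSpace.single i (1:ℝ)), EuclideanSpace.single i (1:ℝ)⟫
        = l ^ (1 + β) * ⟪H (z + l • x) (EuclideanSpace.single i (1:ℝ)), EuclideanSpace.single i (1:ℝ)⟫ := by
      intro i
      rw [smul_apply, inner_smul_left]; simp
    rw [Finset.sum_congr rfl fun i _ => e3 i, ← Finset.mul_sum, this, norm_smul,
      Real.norm_of_nonneg (by positivity), Real.mul_rpow (by positivity) (norm_nonneg _),
      ← Real.rpow_mul hl.le]
    have : β * p = 1 + β := by linarith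
    rw [this]; ring

lemma crude (n : ℕ) {p β M D : ℝ} (hp : 2 < p) (hβ : β = 1 / (p - 1)) (hM : 0 ≤ M) (hD : 0 < D) :
    ∃ C > 0, ∀ (S : Set (EuclideanSpace ℝ (Fin n))) (v g : EuclideanSpace ℝ (Fin n) → ℝ)
      (G : EuclideanSpace ℝ (Fin n) → EuclideanSpace ℝ (Fin n))
      (H : EuclideanSpace ℝ (Fin n) → EuclideanSpace ℝ (Fin n) →L[ℝ] EuclideanSpace ℝ (Fin n)),
      Sol p S v g G H → (∀ x ∈ S, |g x| ≤ M) →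
      (∀ x ∈ S, ∀ y ∈ S, |g x - g y| ≤ M * ‖x - y‖) → ∀ x d, 0 < d → d ≤ D → ball x d ⊆ S →
      ‖G x‖ ≤ C * d ^ (-β) := by
  obtain ⟨C, hC, hb⟩ := bernstein_bound n hp hβ hM
  have hp1 : 0 < p - 1 := by linarith
  have hβ0 : 0 < β := by rw [hβ]; positivity
  have hββ : β * (p - 1) = 1 := by rw [hβ]; field_simp
  set c := min (1 / 2) (1 / D) with hc
  have hc0 : 0 < c := lt_min (by norm_num) (by positivity)
  refine ⟨C * c ^ (-β), by positivity, fun S v g G H hS hg1 hg2 x d hd hdD hbS => ?_⟩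
  set l := c * d with hl
  have hl0 : 0 < l := by positivity
  have hl1 : l ≤ 1 := by
    have : c * d ≤ 1 / D * D := mul_le_mul (min_le_right _ _) hdD hd.le (by positivity)
    rwa [one_div_mul_cancel hD.ne'] at this
  have hld : l < d := by
    have : c * d ≤ 1 / 2 * d := mul_le_mul_of_nonneg_right (min_le_left _ _) hd.le
    linarith
  have hlb : l ^ (1 + β) ≤ 1 := Real.rpow_le_one hl0.le hl1 (by linarith)
  have hlb0 : 0 < l ^ (1 + β) := by positivity
  have := hb _ _ _ _ _ (hS.scale hββ hl0 x) ?_ ?_ ?_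
  · simp only [smul_zero, add_zero, norm_smul] at this
    rw [Real.norm_of_nonneg (by positivity), Real.rpow_def_of_pos hl0] at this
    rw [mul_assoc, ← Real.mul_rpow hc0.le hd.le, ← hl, Real.rpow_neg hl0.le, ← div_eq_mul_inv, le_div_iff₀ (by positivity),
      Real.rpow_def_of_pos hl0]
    linarith
  · intro y hy
    apply hbS
    have : ‖y‖ ≤ 1 := by simpa using hy
    rw [mem_ball, dist_eq_norm, add_sub_cancel_left, norm_smul, Real.norm_of_nonneg hl0.le]
    have := mul_le_mul_of_nonneg_left this hl0.le
    linarith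
  · intro y hy
    rw [abs_mul, abs_of_pos hlb0]
    have := mul_le_mul hlb (hg1 _ hy) (abs_nonneg _) zero_le_one
    linarith
  · intro y hy w hw
    rw [← mul_sub, abs_mul, abs_of_pos hlb0]
    have h1 := hg2 _ hy _ hw
    have e : x + l • y - (x + l • w) = l • (y - w) := by module
    rw [e, norm_smul, Real.norm_of_nonneg hl0.le] at h1
    have h2 := mul_le_mul hlb h1 (abs_nonneg _) zero_le_one
    have h3 : M * (l * ‖y - w‖) ≤ M * (1 * ‖y - w‖) := by gcongr
    linarith

lemma preconn_frontier {s : Set (EuclideanSpace ℝ (Fin n))} (hs : IsPreconnected s) (hΩ : IsOpen Ω)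
    {x y : EuclideanSpace ℝ (Fin n)} (hxs : x ∈ s) (hx : x ∈ Ω) (hys : y ∈ s) (hy : y ∉ Ω) :
    ∃ w ∈ s, w ∈ frontier Ω := by
  by_contra hcon
  push Not at hcon
  have hcl : ∀ w ∈ s, w ∉ Ω → w ∉ closure Ω := by
    intro w hw hwΩ hwc
    apply hcon w hw
    rw [hΩ.frontier_eq]
    exact ⟨hwc, hwΩ⟩
  obtain ⟨w, hw, hw1, hw2⟩ := hs Ω (closure Ω)ᶜ hΩ isClosed_closure.isOpen_compl
    (fun w hw => by
      by_cases h : w ∈ Ω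
      · exact Or.inl h
      · exact Or.inr (hcl w hw h)) ⟨x, hxs, hx⟩ ⟨y, hys, hcl y hys hy⟩
  exact hw2 (subset_closure hw1)

/-- balls of radius the distance to the frontier stay inside -/
lemma ball_subset_of_frontier (hΩ : IsOpen Ω) {x : EuclideanSpace ℝ (Fin n)} (hx : x ∈ Ω) :
    ball x (infDist x (frontier Ω)) ⊆ Ω := by
  intro y hy
  by_contra hyn
  have hc : IsPreconnected (ball x (infDist x (frontier Ω))) := (convex_ball _ _).isPreconnected
  have hpos : 0 < infDist x (frontier Ω) := lt_of_le_of_lt dist_nonneg (mem_ball.mp hy)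
  obtain ⟨w, hw, hwf⟩ := preconn_frontier hc hΩ (mem_ball_self hpos) hx hy hyn
  have := infDist_le_dist_of_mem hwf (x := x)
  rw [mem_ball, dist_comm] at hw
  linarith

lemma frontier_nonempty' (hn : 1 ≤ n) (hb : Bornology.IsBounded Ω) (hne : Ω.Nonempty) :
    (frontier Ω).Nonempty := by
  by_contra h
  rw [not_nonempty_iff_eq_empty] at h
  have h1 := frontier_eq_empty_iff.mp h
  rcases h1 with h1 | h1
  · rw [h1] at hne; exact not_nonempty_empty hne
  · have : Nonempty (Fin n) := ⟨⟨0, hn⟩⟩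
    have : Nontrivial (EuclideanSpace ℝ (Fin n)) := inferInstance
    rw [h1] at hb
    exact NormedSpace.unbounded_univ ℝ (EuclideanSpace ℝ (Fin n)) hb

end Aux8

section Aux9

open Topology

variable {n : ℕ} {Ω : Set (EuclideanSpace ℝ (Fin n))}

/-- two-sided ball condition at `z` -/
def BallCond (Ω : Set (EuclideanSpace ℝ (Fin n))) (R : ℝ) (z ν : EuclideanSpace ℝ (Fin n)) : Prop :=
  ‖ν‖ = 1 ∧ (∀ x, ‖x - z‖ ^ 2 < 2 * R * ⟪x - z, ν⟫ → x ∈ Ω) ∧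
    (∀ x, ‖x - z‖ ^ 2 < -(2 * R * ⟪x - z, ν⟫) → x ∉ Ω)

lemma BallCond.mono {R R' : ℝ} {z ν : EuclideanSpace ℝ (Fin n)} (h : BallCond Ω R z ν) (hR' : 0 < R')
    (hR : R' ≤ R) : BallCond Ω R' z ν := by
  refine ⟨h.1, fun x hx => h.2.1 x (hx.trans_le ?_), fun x hx => h.2.2 x (hx.trans_le ?_)⟩
  · have h1 : 0 < 2 * R' * ⟪x - z, ν⟫ := lt_of_le_of_lt (by positivity) hx
    have h2 : 0 < ⟪x - z, ν⟫ := pos_of_mul_pos_right h1 (by positivity)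
    exact mul_le_mul_of_nonneg_right (by linarith) h2.le
  · have h1 : 0 < -(2 * R' * ⟪x - z, ν⟫) := lt_of_le_of_lt (by positivity) hx
    rw [← mul_neg] at h1 ⊢
    rw [← mul_neg]
    have h2 : 0 < -⟪x - z, ν⟫ := pos_of_mul_pos_right h1 (by positivity)
    exact mul_le_mul_of_nonneg_right (by linarith) h2.le

lemma geo_local (hΩ : IsC2Boundary Ω) {z0 : EuclideanSpace ℝ (Fin n)} (hz0 : z0 ∈ frontier Ω) :
    ∃ ρ > 0, ∃ R > 0, ∀ z ∈ frontier Ω, z ∈ ball z0 ρ → ∃ ν, BallCond Ω R z ν := by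
  obtain ⟨f, U, hU, hf, hf0, hfΩ, hfF⟩ := hΩ z0 hz0
  have hfc : ContDiffAt ℝ 2 f z0 := hf.contDiffAt hU
  have hfd : ContDiffAt ℝ 1 (fderiv ℝ f) z0 := hfc.fderiv_right (by norm_num)
  obtain ⟨K, t, ht, hK⟩ := hfd.exists_lipschitzOnWith
  have hm : 0 < ‖fderiv ℝ f z0‖ := norm_pos_iff.mpr (hf0 z0 (mem_of_mem_nhds hU))
  have hev1 : ∀ᶠ y in 𝓝 z0, ‖fderiv ℝ f z0‖ / 2 < ‖fderiv ℝ f y‖ :=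
    hfd.continuousAt.norm.eventually_const_lt (by linarith)
  have hev2 : ∀ᶠ y in 𝓝 z0, U ∈ 𝓝 y := eventually_mem_nhds_iff.mpr hU
  set m0 := ‖fderiv ℝ f z0‖ / 2 with hm0
  have hm00 : 0 < m0 := by positivity
  obtain ⟨r, hr, hrs⟩ := Metric.eventually_nhds_iff_ball.mp ((hev1.and hev2).and ht)
  have hKn : (0:ℝ) ≤ K := K.2
  set R := min (r / 4) (m0 / (2 * (K + 1))) with hR
  have hR0 : 0 < R := lt_min (by positivity) (by positivity)
  have hRr : R ≤ r / 4 := min_le_left _ _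
  have hRK : 2 * R * K ≤ m0 := by
    have h1 : R ≤ m0 / (2 * (K + 1)) := min_le_right _ _
    rw [le_div_iff₀ (by positivity)] at h1
    nlinarith
  refine ⟨r / 2, by positivity, R, hR0, fun z hz hzb => ?_⟩
  have hzr : z ∈ ball z0 r := ball_subset_ball (by linarith) hzb
  have hzU : z ∈ U := mem_of_mem_nhds (hrs z hzr).1.2
  have hfz : f z = 0 := by
    have : z ∈ U ∩ frontier Ω := ⟨hzU, hz⟩
    rw [hfF] at this
    exact this.2
  set gr := gradient f z with hgr
  have hgi : ∀ y, fderiv ℝ f z y = ⟪gr, y⟫ := fun y => by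
    rw [hgr, gradient, InnerProductSpace.toDual_symm_apply]
  have hgn : ‖gr‖ = ‖fderiv ℝ f z‖ := by
    rw [hgr, gradient, LinearIsometryEquiv.norm_map]
  have hgm : m0 < ‖gr‖ := by rw [hgn]; exact (hrs z hzr).1.1
  have hg0 : 0 < ‖gr‖ := by linarith
  have hloc : ∀ x, ‖x - z‖ < r / 2 → x ∈ U ∧ |f x - ⟪gr, x - z⟫| ≤ K * ‖x - z‖ ^ 2 := by
    intro x hx
    have hsub : closedBall z ‖x - z‖ ⊆ ball z0 r := by
      intro y hy
      rw [mem_closedBall] at hy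
      rw [mem_ball] at hzb ⊢
      have := dist_triangle y z z0
      linarith
    have hxb : x ∈ closedBall z ‖x - z‖ := by rw [mem_closedBall, dist_eq_norm]
    have hzz : z ∈ closedBall z ‖x - z‖ := mem_closedBall_self (norm_nonneg _)
    refine ⟨mem_of_mem_nhds (hrs x (hsub hxb)).1.2, ?_⟩
    have := (convex_closedBall z ‖x - z‖).norm_image_sub_le_of_norm_hasFDerivWithin_le' (f := f)
      (f' := fderiv ℝ f) (φ := fderiv ℝ f z) (C := K * ‖x - z‖) (x := z) (y := x)
      (fun y hy => ((hf.contDiffAt (hrs y (hsub hy)).1.2).differentiableAt (by norm_num)).hasFDerivAt.hasFDerivWithinAt)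
      (fun y hy => by
        have := hK.dist_le_mul y (hrs y (hsub hy)).2 z (hrs z hzr).2
        rw [dist_eq_norm] at this
        refine this.trans (mul_le_mul_of_nonneg_left (mem_closedBall.mp hy) hKn)) hzz hxb
    rw [hfz, hgi, sub_zero, Real.norm_eq_abs] at this
    refine this.trans (le_of_eq (by ring))
  set ν := -(‖gr‖⁻¹ • gr) with hν
  have hνi : ∀ y : EuclideanSpace ℝ (Fin n), ⟪gr, y⟫ = -(‖gr‖ * ⟪y, ν⟫) := by
    intro y
    rw [hν, inner_neg_right, inner_smul_right, real_inner_comm]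
    field_simp
  have hν1 : ‖ν‖ = 1 := by rw [hν, norm_neg, norm_smul, norm_inv, norm_norm, inv_mul_cancel₀ hg0.ne']
  have hsmall : ∀ x : EuclideanSpace ℝ (Fin n), ‖x - z‖ ^ 2 < 2 * R * |⟪x - z, ν⟫| → ‖x - z‖ < r / 2 := by
    intro x hx
    have h1 := abs_real_inner_le_norm (x - z) ν
    rw [hν1, mul_one] at h1
    have h2 : ‖x - z‖ ^ 2 < 2 * R * ‖x - z‖ := hx.trans_le (mul_le_mul_of_nonneg_left h1 (by positivity))
    rw [sq] at h2
    have h3 : ‖x - z‖ < 2 * R := lt_of_mul_lt_mul_right h2 (norm_nonneg _)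
    linarith
  refine ⟨ν, hν1, ?_, ?_⟩
  · intro x hx
    have h1 : 0 < 2 * R * ⟪x - z, ν⟫ := lt_of_le_of_lt (by positivity) hx
    have h2 : 0 < ⟪x - z, ν⟫ := pos_of_mul_pos_right h1 (by positivity)
    obtain ⟨hxU, hxf⟩ := hloc x (hsmall x (by rwa [abs_of_pos h2]))
    have hx3 := (abs_le.mp hxf).2
    rw [hνi] at hx3
    have h4 : K * ‖x - z‖ ^ 2 ≤ K * (2 * R * ⟪x - z, ν⟫) := mul_le_mul_of_nonneg_left hx.le hKn
    have h5 : 2 * R * K * ⟪x - z, ν⟫ ≤ m0 * ⟪x - z, ν⟫ := mul_le_mul_of_nonneg_right hRK h2.le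
    have h6 : m0 * ⟪x - z, ν⟫ < ‖gr‖ * ⟪x - z, ν⟫ := mul_lt_mul_of_pos_right hgm h2
    have h7 : f x < 0 := by linarith
    have : x ∈ U ∩ {y | f y < 0} := ⟨hxU, h7⟩
    rw [← hfΩ] at this
    exact this.2
  · intro x hx hxΩ
    have h1 : 0 < 2 * R * (-⟪x - z, ν⟫) := by
      have : 0 ≤ ‖x - z‖ ^ 2 := by positivity
      linarith
    have h2 : 0 < -⟪x - z, ν⟫ := pos_of_mul_pos_right h1 (by positivity)
    obtain ⟨hxU, hxf⟩ := hloc x (hsmall x (by rw [abs_of_neg (by linarith)]; linarith))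
    have hx3 := (abs_le.mp hxf).1
    rw [hνi] at hx3
    have h4 : K * ‖x - z‖ ^ 2 ≤ K * (-(2 * R * ⟪x - z, ν⟫)) := mul_le_mul_of_nonneg_left hx.le hKn
    have h5 : 2 * R * K * (-⟪x - z, ν⟫) ≤ m0 * (-⟪x - z, ν⟫) := mul_le_mul_of_nonneg_right hRK h2.le
    have h6 : m0 * (-⟪x - z, ν⟫) < ‖gr‖ * (-⟪x - z, ν⟫) := mul_lt_mul_of_pos_right hgm h2
    have : x ∈ U ∩ Ω := ⟨hxU, hxΩ⟩
    rw [hfΩ] at this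
    have h8 : f x < 0 := this.2
    linarith

lemma geo (hΩ : IsC2Boundary Ω) (hb : Bornology.IsBounded Ω) :
    ∃ R > 0, ∀ z ∈ frontier Ω, ∃ ν, BallCond Ω R z ν := by
  have hc : IsCompact (frontier Ω) :=
    Metric.isCompact_of_isClosed_isBounded isClosed_frontier (hb.closure.subset frontier_subset_closure)
  have := hc.induction_on (p := fun s => ∃ R > 0, ∀ z ∈ s, z ∈ frontier Ω → ∃ ν, BallCond Ω R z ν)
    ⟨1, one_pos, fun z hz => absurd hz (notMem_empty z)⟩
    (fun s t hst ⟨R, hR, h⟩ => ⟨R, hR, fun z hz => h z (hst hz)⟩)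
    (fun s t ⟨R, hR, h⟩ ⟨R', hR', h'⟩ => ⟨min R R', lt_min hR hR', fun z hz hzf => by
      rcases hz with hz | hz
      · obtain ⟨ν, hν⟩ := h z hz hzf
        exact ⟨ν, hν.mono (lt_min hR hR') (min_le_left _ _)⟩
      · obtain ⟨ν, hν⟩ := h' z hz hzf
        exact ⟨ν, hν.mono (lt_min hR hR') (min_le_right _ _)⟩⟩)
    (fun z0 hz0 => by
      obtain ⟨ρ, hρ, R, hR, h⟩ := geo_local hΩ hz0
      exact ⟨ball z0 ρ, mem_nhdsWithin_of_mem_nhds (ball_mem_nhds z0 hρ), R, hR, fun z hz hzf => h z hzf hz⟩)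
  obtain ⟨R, hR, h⟩ := this
  exact ⟨R, hR, fun z hz => h z hz hz⟩

end Aux9

section Aux10

open Topology

variable {n : ℕ} {Ω : Set (EuclideanSpace ℝ (Fin n))}

set_option maxHeartbeats 1000000 in
lemma lower_bound (hn : 1 ≤ n) {p M R D : ℝ} (hM : 0 ≤ M) (hR : 0 < R) (hD : 0 < D)
    (hΩo : IsOpen Ω) (hb : Bornology.IsBounded Ω)
    (hΩD : ∀ x ∈ Ω, ∀ z ∈ frontier Ω, ‖x - z‖ ≤ D) :
    ∃ C > 0, ∀ (u f : EuclideanSpace ℝ (Fin n) → ℝ)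
      (G : EuclideanSpace ℝ (Fin n) → EuclideanSpace ℝ (Fin n))
      (H : EuclideanSpace ℝ (Fin n) → EuclideanSpace ℝ (Fin n) →L[ℝ] EuclideanSpace ℝ (Fin n)),
      Sol p Ω u f G H → (∀ x ∈ Ω, |f x| ≤ M) → ContinuousOn u (closure Ω) →
      (∀ x ∈ frontier Ω, u x = 0) → ∀ z ∈ frontier Ω, ∀ ν, BallCond Ω R z ν → ∀ x ∈ Ω,
      -(C * ‖x - z‖) ≤ u x := by
  have hn0 : (0:ℝ) < n := by exact_mod_cast hn
  set α : ℝ := n / R ^ 2 with hα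
  have hα0 : 0 < α := by positivity
  have hαR : α * R ^ 2 = n := by rw [hα]; field_simp
  set E0 := Real.exp (-(α * (D + R) ^ 2)) with hE0
  have hE00 : 0 < E0 := Real.exp_pos _
  set K := (M + 1) / (2 * n * α * E0) with hK
  have hK0 : 0 < K := by positivity
  have hKE : K * (2 * n * α * E0) = M + 1 := by rw [hK]; field_simp
  refine ⟨K * α * (D + 2 * R), by positivity, fun u f G H hS hf huc hu0 z hz ν hν x hx => ?_⟩
  set c := z - R • ν with hc
  have hrz : ∀ y, ‖y - c‖ ^ 2 = ‖y - z‖ ^ 2 + 2 * R * ⟪y - z, ν⟫ + R ^ 2 := by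
    intro y
    have : y - c = (y - z) + R • ν := by rw [hc]; abel
    rw [this, norm_add_sq_real, inner_smul_right, norm_smul, hν.1, Real.norm_of_nonneg hR.le]
    ring
  have hrle : ∀ y, ‖y - c‖ ≤ ‖y - z‖ + R := by
    intro y
    have : y - c = (y - z) + R • ν := by rw [hc]; abel
    rw [this]
    refine (norm_add_le _ _).trans ?_
    rw [norm_smul, hν.1, Real.norm_of_nonneg hR.le, mul_one]
  have hrΩ : ∀ y ∈ Ω, R ^ 2 ≤ ‖y - c‖ ^ 2 := by
    intro y hy
    by_contra h
    push Not at h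
    rw [hrz] at h
    exact hν.2.2 y (by linarith) hy
  have hrcl : ∀ y ∈ closure Ω, R ^ 2 ≤ ‖y - c‖ ^ 2 := by
    have hcl : IsClosed {y : EuclideanSpace ℝ (Fin n) | R ^ 2 ≤ ‖y - c‖ ^ 2} :=
      isClosed_le continuous_const (by fun_prop)
    exact fun y hy => closure_minimal hrΩ hcl hy
  let φ : EuclideanSpace ℝ (Fin n) → ℝ := fun y =>
    K * (Real.exp (-(α * R ^ 2)) - Real.exp (-(α * ‖y - c‖ ^ 2)))
  have hφ0 : ∀ y ∈ closure Ω, 0 ≤ φ y := by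
    intro y hy
    refine mul_nonneg hK0.le ?_
    rw [sub_nonneg]
    apply Real.exp_le_exp.mpr
    have := mul_le_mul_of_nonneg_left (hrcl y hy) hα0.le
    linarith
  have hcc : IsCompact (closure Ω) := hb.isCompact_closure
  have hDc : ContinuousOn (fun y => u y + φ y) (closure Ω) := by
    refine huc.add (Continuous.continuousOn ?_)
    fun_prop
  have hmain : ∀ y ∈ closure Ω, 0 ≤ u y + φ y := by
    by_contra hcon
    push Not at hcon
    obtain ⟨y0, hy0, hy0l⟩ := hcon
    obtain ⟨y, hyc, hymin⟩ := hcc.exists_isMinOn ⟨y0, hy0⟩ hDc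
    have hyl : u y + φ y < 0 := lt_of_le_of_lt (hymin hy0) hy0l
    have hyΩ : y ∈ Ω := by
      by_contra h
      have hyf : y ∈ frontier Ω := by rw [hΩo.frontier_eq]; exact ⟨hyc, h⟩
      rw [hu0 y hyf] at hyl
      linarith [hφ0 y hyc]
    have hloc : IsLocalMin (fun y => u y + φ y) y :=
      hymin.isLocalMin (Filter.mem_of_superset (hΩo.mem_nhds hyΩ) subset_closure)
    set w := y - c with hw
    set E := Real.exp (-(α * ‖w‖ ^ 2)) with hE
    have hlt : ∀ ξ : EuclideanSpace ℝ (Fin n),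
        -(⟪H y ξ, ξ⟫ + 2 * K * α * E * (‖ξ‖ ^ 2 - 2 * α * ⟪w, ξ⟫ ^ 2)) ≤ 0 := by
      intro ξ
      have hmx : IsLocalMax (fun t : ℝ => -(u (y + t • ξ) + φ (y + t • ξ))) 0 := by
        have := (tendsto_line y ξ).eventually hloc
        have h2 : ∀ᶠ t : ℝ in 𝓝 0, -(u (y + t • ξ) + φ (y + t • ξ)) ≤ -(u (y + (0:ℝ) • ξ) + φ (y + (0:ℝ) • ξ)) := by
          filter_upwards [this] with t ht
          rw [zero_smul, add_zero]
          linarith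
        exact h2
      have hfun : (fun t : ℝ => -(u (y + t • ξ) + φ (y + t • ξ))) = fun t : ℝ =>
          -(u (y + t • ξ) + K * (Real.exp (-(α * R ^ 2)) - Real.exp (-(α * ‖w + t • ξ‖ ^ 2)))) := by
        funext t
        have e2 : y + t • ξ - c = w + t • ξ := by rw [hw]; abel
        simp only [φ, e2]
      rw [hfun] at hmx
      have hexpd : ∀ t : ℝ, HasDerivAt (fun t : ℝ => Real.exp (-(α * ‖w + t • ξ‖ ^ 2)))
          (Real.exp (-(α * ‖w + t • ξ‖ ^ 2)) * (-(α * (2 * ⟪w + t • ξ, ξ⟫)))) t := fun t => by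
        have : HasDerivAt (fun t : ℝ => -(α * ‖w + t • ξ‖ ^ 2)) (-(α * (2 * ⟪w + t • ξ, ξ⟫))) t :=
          ((hasDerivAt_normsq_line w ξ t).const_mul α).fun_neg
        exact this.exp
      have := line_test (ψ1 := fun t => -(⟪G (y + t • ξ), ξ⟫ +
            (2 * K * α) * (Real.exp (-(α * ‖w + t • ξ‖ ^ 2)) * ⟪w + t • ξ, ξ⟫)))
          (c := -(⟪H y ξ, ξ⟫ + 2 * K * α * E * (‖ξ‖ ^ 2 - 2 * α * ⟪w, ξ⟫ ^ 2))) hmx ?_ ?_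
      · exact this.2
      · filter_upwards [hS.line1 hyΩ ξ] with t a1
        have a3 := ((hexpd t).const_sub (Real.exp (-(α * R ^ 2)))).const_mul K
        exact (a1.add a3).fun_neg.congr_deriv (by ring)
      · have a1 := hS.line2 hyΩ ξ
        have a3 := (((hexpd 0).mul (hasDerivAt_inner_line' w ξ 0)).const_mul (2 * K * α))
        refine (a1.add a3).fun_neg.congr_deriv ?_
        simp only [zero_smul, add_zero, ← hE]
        ring
    have hsum := Finset.sum_le_sum (s := Finset.univ) fun (i : Fin n) _ =>
      hlt (EuclideanSpace.single i (1:ℝ))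
    have s1 := hS.eq y hyΩ
    have s2 := sum_inner_sq w
    have hlap : -(-(‖G y‖ ^ p + f y) + 2 * K * α * E * (n - 2 * α * ‖w‖ ^ 2)) ≤ 0 := by
      simp only [Finset.sum_neg_distrib, Finset.sum_add_distrib, ← Finset.mul_sum, Finset.sum_sub_distrib,
        s1, s2, PiLp.norm_single, norm_one] at hsum
      simpa using hsum
    have hwR : R ^ 2 ≤ ‖w‖ ^ 2 := hrΩ y hyΩ
    have hwD : ‖w‖ ≤ D + R := (hrle y).trans (by linarith [hΩD y hyΩ z hz])
    have hEE : E0 ≤ E := by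
      apply Real.exp_le_exp.mpr
      have := mul_le_mul_of_nonneg_left (pow_le_pow_left₀ (norm_nonneg w) hwD 2) hα0.le
      linarith
    have hGp : 0 ≤ ‖G y‖ ^ p := by positivity
    have hfy := (abs_le.mp (hf y hyΩ)).1
    have h5 : (n:ℝ) ≤ 2 * α * ‖w‖ ^ 2 - n := by
      have := mul_le_mul_of_nonneg_left hwR hα0.le
      linarith
    have h6 : 2 * K * α * E0 * n ≤ 2 * K * α * E * (2 * α * ‖w‖ ^ 2 - n) :=
      mul_le_mul (mul_le_mul_of_nonneg_left hEE (by positivity)) h5 hn0.le (by positivity)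
    linarith
  have h1 := hmain x (subset_closure hx)
  have h2 : φ x ≤ K * (α * (‖x - c‖ ^ 2 - R ^ 2)) := by
    refine mul_le_mul_of_nonneg_left ?_ hK0.le
    have e1 : Real.exp (-(α * ‖x - c‖ ^ 2)) = Real.exp (-(α * R ^ 2)) * Real.exp (-(α * (‖x - c‖ ^ 2 - R ^ 2))) := by
      rw [← Real.exp_add]; ring_nf
    have e2 := Real.add_one_le_exp (-(α * (‖x - c‖ ^ 2 - R ^ 2)))
    have e3 : Real.exp (-(α * R ^ 2)) ≤ 1 := Real.exp_le_one_iff.mpr (by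
      have : 0 ≤ α * R ^ 2 := by positivity
      linarith)
    have e4 : 0 ≤ α * (‖x - c‖ ^ 2 - R ^ 2) := mul_nonneg hα0.le (by linarith [hrΩ x hx])
    have e5 := mul_le_mul_of_nonneg_left e2 (Real.exp_pos (-(α * R ^ 2))).le
    have e6 := mul_le_mul_of_nonneg_right e3 e4
    rw [e1]
    linarith
  have h3 : ‖x - c‖ ^ 2 ≤ (‖x - z‖ + R) ^ 2 := pow_le_pow_left₀ (norm_nonneg _) (hrle x) 2
  have h4 : ‖x - z‖ * ‖x - z‖ ≤ D * ‖x - z‖ := mul_le_mul_of_nonneg_right (hΩD x hx z hz) (norm_nonneg _)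
  have h5 : ‖x - c‖ ^ 2 - R ^ 2 ≤ (D + 2 * R) * ‖x - z‖ := by linarith
  have h6 : K * α * (‖x - c‖ ^ 2 - R ^ 2) ≤ K * α * ((D + 2 * R) * ‖x - z‖) :=
    mul_le_mul_of_nonneg_left h5 (by positivity)
  linarith

end Aux10

section Aux11

open Topology

variable {n : ℕ} {Ω : Set (EuclideanSpace ℝ (Fin n))} {p β C0 R : ℝ}
  {u f : EuclideanSpace ℝ (Fin n) → ℝ}
  {G : EuclideanSpace ℝ (Fin n) → EuclideanSpace ℝ (Fin n)}
  {H : EuclideanSpace ℝ (Fin n) → EuclideanSpace ℝ (Fin n) →L[ℝ] EuclideanSpace ℝ (Fin n)}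

lemma infDist_frontier_pos (hΩ : IsOpen Ω) (hne : (frontier Ω).Nonempty)
    {x : EuclideanSpace ℝ (Fin n)} (hx : x ∈ Ω) : 0 < infDist x (frontier Ω) := by
  rw [← isClosed_frontier.notMem_iff_infDist_pos hne]
  intro h
  rw [hΩ.frontier_eq] at h
  exact h.2 hx

lemma upper_bound (hβ0 : 0 < β) (hβ1 : β < 1) (hC0 : 0 < C0) (hΩ : IsOpen Ω)
    (hne : (frontier Ω).Nonempty) (hS : Sol p Ω u f G H)
    (hG : ∀ x ∈ Ω, ‖G x‖ ≤ C0 * (infDist x (frontier Ω)) ^ (-β)) (huc : ContinuousOn u (closure Ω))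
    (hu0 : ∀ x ∈ frontier Ω, u x = 0) {x : EuclideanSpace ℝ (Fin n)} (hx : x ∈ Ω) :
    u x ≤ C0 / (1 - β) * (infDist x (frontier Ω)) ^ (1 - β) := by
  have h1β : 0 < 1 - β := by linarith
  obtain ⟨z, hz, hzd⟩ := isClosed_frontier.exists_infDist_eq_dist hne x
  set d := infDist x (frontier Ω) with hd
  have hd0 : 0 < d := infDist_frontier_pos hΩ hne hx
  have hxz : ‖x - z‖ = d := by rw [hzd, dist_eq_norm]
  have hdist : ∀ t ∈ Icc (0:ℝ) 1, dist (z + t • (x - z)) x = (1 - t) * d := by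
    intro t ht
    have : z + t • (x - z) - x = (-(1 - t)) • (x - z) := by module
    rw [dist_eq_norm, this, norm_smul, hxz, norm_neg, Real.norm_of_nonneg (by linarith [ht.2])]
  have hmem : ∀ t ∈ Ioc (0:ℝ) 1, z + t • (x - z) ∈ Ω := by
    intro t ht
    apply ball_subset_of_frontier hΩ hx
    rw [mem_ball, hdist t ⟨ht.1.le, ht.2⟩, ← hd]
    have := mul_pos ht.1 hd0
    linarith
  have hdl : ∀ t ∈ Ioc (0:ℝ) 1, t * d ≤ infDist (z + t • (x - z)) (frontier Ω) := by
    intro t ht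
    have := infDist_le_infDist_add_dist (s := frontier Ω) (x := x) (y := z + t • (x - z))
    rw [dist_comm, hdist t ⟨ht.1.le, ht.2⟩, ← hd] at this
    linarith
  have hmc : ∀ t ∈ Icc (0:ℝ) 1, z + t • (x - z) ∈ closure Ω := by
    intro t ht
    rcases ht.1.lt_or_eq with h | h
    · exact subset_closure (hmem t ⟨h, ht.2⟩)
    · rw [← h, zero_smul, add_zero]; exact frontier_subset_closure hz
  have hder : ∀ t ∈ Ioo (0:ℝ) 1, HasDerivAt (fun t : ℝ => u (z + t • (x - z)) - C0 / (1 - β) * (t * d) ^ (1 - β))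
      (⟪G (z + t • (x - z)), x - z⟫ - C0 * (t * d) ^ (-β) * d) t := by
    intro t ht
    have h1 : HasDerivAt (fun t : ℝ => u (z + t • (x - z))) ⟪G (z + t • (x - z)), x - z⟫ t := by
      have := (hS.hv _ (hmem t ⟨ht.1, ht.2.le⟩)).comp_hasDerivAt t (hasDerivAt_line z (x - z) t)
      rw [innerSL_apply_apply] at this
      exact this
    have htd : 0 < t * d := mul_pos ht.1 hd0
    have h2 := (((hasDerivAt_id t).mul_const d).rpow_const (p := 1 - β) (Or.inl htd.ne')).const_mul (C0 / (1 - β))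
    refine (h1.sub h2).congr_deriv ?_
    have e : 1 - β - 1 = -β := by ring
    simp only [id, e]
    field_simp
  have hanti : AntitoneOn (fun t : ℝ => u (z + t • (x - z)) - C0 / (1 - β) * (t * d) ^ (1 - β)) (Icc 0 1) := by
    refine antitoneOn_of_deriv_nonpos (convex_Icc 0 1) ?_ ?_ ?_
    · refine ContinuousOn.sub (huc.comp (by fun_prop) hmc) ?_
      refine ContinuousOn.mul continuousOn_const (ContinuousOn.rpow_const (by fun_prop) fun t _ => Or.inr h1β.le)
    · rw [interior_Icc]
      exact fun t ht => (hder t ht).differentiableAt.differentiableWithinAt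
    · rw [interior_Icc]
      intro t ht
      rw [(hder t ht).deriv]
      have htd : 0 < t * d := mul_pos ht.1 hd0
      have h1 := real_inner_le_norm (G (z + t • (x - z))) (x - z)
      rw [hxz] at h1
      have h2 := hG _ (hmem t ⟨ht.1, ht.2.le⟩)
      have h3 := rpow_anti htd (hdl t ⟨ht.1, ht.2.le⟩) hβ0.le
      have h4 := mul_le_mul_of_nonneg_left h3 hC0.le
      have h5 := mul_le_mul_of_nonneg_right (h2.trans h4) hd0.le
      linarith
  have := hanti (left_mem_Icc.mpr zero_le_one) (right_mem_Icc.mpr zero_le_one) zero_le_one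
  simp only [zero_smul, add_zero, one_smul, add_sub_cancel, zero_mul, one_mul, hu0 z hz,
    Real.zero_rpow h1β.ne', mul_zero, sub_zero] at this
  linarith

/-- the inner normal at a nearest boundary point -/
lemma nearest_eq (hΩ : IsOpen Ω) (hR : 0 < R) {x z ν : EuclideanSpace ℝ (Fin n)} (hx : x ∈ Ω)
    (hB : BallCond Ω R z ν) {d : ℝ} (hd : d = infDist x (frontier Ω)) (hd0 : 0 < d) (hxz : ‖x - z‖ = d) :
    x = z + d • ν := by
  set e := d⁻¹ • (x - z) with he
  have he1 : ‖e‖ = 1 := by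
    rw [he, norm_smul, hxz, norm_inv, Real.norm_of_nonneg hd0.le, inv_mul_cancel₀ hd0.ne']
  have hxe : x - z = d • e := by rw [he, smul_smul, mul_inv_cancel₀ hd0.ne', one_smul]
  have hxe' : x = z + d • e := by rw [← hxe]; abel
  by_cases hcase : ⟪e, ν⟫ = (1:ℝ)
  · have : e = ν := (inner_eq_one_iff_of_norm_eq_one he1 hB.1).mp hcase
    rw [hxe', this]
  · exfalso
    have hlt : ⟪e, ν⟫ < (1:ℝ) := by
      have := real_inner_le_norm e ν
      rw [he1, hB.1, mul_one] at this
      exact lt_of_le_of_ne this hcase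
    set c : ℝ := ⟪e, ν⟫ with hc
    set s := min d R / 2 with hs
    have hm0 : 0 < min d R := lt_min hd0 hR
    have hs0 : 0 < s := by positivity
    have hsd : s < d := by have := min_le_left d R; linarith
    have hsR : s < R := by have := min_le_right d R; linarith
    have hee : ⟪e, e⟫ = (1:ℝ) := by rw [real_inner_self_eq_norm_sq, he1]; norm_num
    have hνν : ⟪ν, ν⟫ = (1:ℝ) := by rw [real_inner_self_eq_norm_sq, hB.1]; norm_num
    have hw2 : ‖e - ν‖ ^ 2 = 2 * (1 - c) := by
      rw [norm_sub_sq_real, he1, hB.1]; ring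
    set y := z + s • (e - ν) with hy
    have hyz : y - z = s • (e - ν) := by rw [hy]; abel
    have hy1 : y ∉ Ω := by
      apply hB.2.2
      rw [hyz, norm_smul, Real.norm_of_nonneg hs0.le, mul_pow, hw2, inner_smul_left, inner_sub_left, hνν, ← hc]
      simp only [RCLike.conj_to_real]
      have h1 : 0 < s * (1 - c) := mul_pos hs0 (by linarith)
      have h2 := mul_lt_mul_of_pos_right hsR h1
      linarith
    have hy2 : y ∈ Ω := by
      apply ball_subset_of_frontier hΩ hx
      rw [mem_ball, dist_eq_norm, ← hd]
      apply lt_of_pow_lt_pow_left₀ 2 hd0.le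
      have : y - x = s • (e - ν) - d • e := by rw [hy, hxe']; abel
      rw [this, norm_sub_sq_real, norm_smul, norm_smul, Real.norm_of_nonneg hs0.le, Real.norm_of_nonneg hd0.le,
        mul_pow, hw2, he1, inner_smul_left, inner_smul_right, inner_sub_left, hee, real_inner_comm, ← hc]
      simp only [RCLike.conj_to_real]
      have h1 : 0 < s * (1 - c) := mul_pos hs0 (by linarith)
      have h2 := mul_lt_mul_of_pos_right hsd h1
      linarith
    exact hy1 hy2

/-- points in the rescaled half ball -/
lemma halfball_geo (hΩ : IsOpen Ω) (hR : 0 < R) (hne : (frontier Ω).Nonempty)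
    {z ν : EuclideanSpace ℝ (Fin n)} (hB : BallCond Ω R z ν) {A η l : ℝ} (hA : 1 ≤ A) (hη : 0 < η) (hη1 : η ≤ 1)
    (hl : 0 < l) (hlA : l * (A + 1) ^ 2 ≤ R * η) {x : EuclideanSpace ℝ (Fin n)} (hx : x ∈ HB ν A) :
    z + (l * η) • ν + l • x ∈ Ω ∧ l * ⟪ν, x⟫ ≤ infDist (z + (l * η) • ν + l • x) (frontier Ω) ∧
    infDist (z + (l * η) • ν + l • x) (frontier Ω) ≤ l * (⟪ν, x⟫ + 2 * η) ∧
    ‖z + (l * η) • ν + l • x - z‖ ≤ l * (A + 1) := by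
  obtain ⟨hs0, hxA⟩ := hx
  set s : ℝ := ⟪ν, x⟫ with hs
  set y := z + (l * η) • ν + l • x with hy
  have hνν : ⟪ν, ν⟫ = (1:ℝ) := by rw [real_inner_self_eq_norm_sq, hB.1]; norm_num
  set X := x + η • ν with hX
  have hyz : y - z = l • X := by rw [hy, hX]; module
  have hXn : ‖X‖ ≤ A + 1 := by
    refine (norm_add_le _ _).trans ?_
    rw [norm_smul, hB.1, Real.norm_of_nonneg hη.le]
    linarith
  have hXν : ⟪X, ν⟫ = s + η := by
    rw [hX, inner_add_left, inner_smul_left, hνν, real_inner_comm, ← hs]; simp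
  have hX2 : ‖X‖ ^ 2 ≤ (A + 1) ^ 2 := pow_le_pow_left₀ (norm_nonneg _) hXn 2
  have hX2' : l * ‖X‖ ^ 2 ≤ R * η := (mul_le_mul_of_nonneg_left hX2 hl.le).trans hlA
  have hsA : s ≤ A := by
    have := real_inner_le_norm ν x
    rw [hB.1, one_mul] at this
    linarith
  have hyn : ‖y - z‖ ≤ l * (A + 1) := by
    rw [hyz, norm_smul, Real.norm_of_nonneg hl.le]
    exact mul_le_mul_of_nonneg_left hXn hl.le
  have hyn2 : ‖y - z‖ ^ 2 = l * (l * ‖X‖ ^ 2) := by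
    rw [hyz, norm_smul, Real.norm_of_nonneg hl.le]; ring
  have hyn3 : ‖y - z‖ ^ 2 ≤ l * (R * η) := by rw [hyn2]; exact mul_le_mul_of_nonneg_left hX2' hl.le
  have hyν : ⟪y - z, ν⟫ = l * (s + η) := by rw [hyz, inner_smul_left, hXν]; simp
  have hRls : 0 < R * (l * s) := by positivity
  have hRlη : 0 < R * (l * η) := by positivity
  have hyΩ : y ∈ Ω := by
    apply hB.2.1
    rw [hyν]
    linarith
  refine ⟨hyΩ, ?_, ?_, hyn⟩
  · -- interior ball
    set c := z + R • ν with hc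
    have hball : ∀ w, ‖w - c‖ < R → w ∈ Ω := by
      intro w hw
      apply hB.2.1
      have h1 : ‖w - c‖ ^ 2 < R ^ 2 := pow_lt_pow_left₀ hw (norm_nonneg _) (by norm_num)
      have h2 : w - c = (w - z) - R • ν := by rw [hc]; abel
      rw [h2, norm_sub_sq_real, inner_smul_right, norm_smul, hB.1, Real.norm_of_nonneg hR.le] at h1
      linarith
    have hls : l * s ≤ R := by
      have h1 : l * s ≤ l * (A + 1) ^ 2 := mul_le_mul_of_nonneg_left (by nlinarith) hl.le
      have h2 : R * η ≤ R * 1 := mul_le_mul_of_nonneg_left hη1 hR.le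
      linarith
    have hyc : ‖y - c‖ ≤ R - l * s := by
      apply le_of_sq_le_sq _ (by linarith)
      have h2 : y - c = (y - z) - R • ν := by rw [hc]; abel
      rw [h2, norm_sub_sq_real, inner_smul_right, norm_smul, hB.1, Real.norm_of_nonneg hR.le, hyν]
      have : 0 ≤ (l * s) ^ 2 := by positivity
      linarith
    refine (le_infDist hne).mpr fun w hw => ?_
    by_contra hcon
    push Not at hcon
    rw [hΩ.frontier_eq] at hw
    apply hw.2
    apply hball
    have : w - c = (w - y) + (y - c) := by abel
    rw [this]
    refine (norm_add_le _ _).trans_lt ?_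
    rw [dist_comm, dist_eq_norm] at hcon
    linarith
  · set t := l * (s + 2 * η) with ht
    have ht0 : 0 ≤ t := by positivity
    have hw : y - t • ν ∉ Ω := by
      apply hB.2.2
      have h1 : y - t • ν - z = l • (X - (s + 2 * η) • ν) := by
        have : y - t • ν - z = (y - z) - t • ν := by abel
        rw [this, hyz, ht]; module
      have h2 : ‖X - (s + 2 * η) • ν‖ ^ 2 = ‖X‖ ^ 2 - (s + 2 * η) * s := by
        rw [norm_sub_sq_real, inner_smul_right, hXν, norm_smul, hB.1, Real.norm_of_nonneg (by positivity)]
        ring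
      rw [h1, norm_smul, mul_pow, h2, inner_smul_left, inner_sub_left, inner_smul_left, hXν, hνν,
        Real.norm_of_nonneg hl.le]
      simp only [RCLike.conj_to_real]
      have h3 : 0 ≤ l ^ 2 * ((s + 2 * η) * s) := by positivity
      have h4 := mul_le_mul_of_nonneg_left hX2' hl.le
      linarith
    obtain ⟨w, hws, hwf⟩ := preconn_frontier (convex_segment y (y - t • ν)).isPreconnected hΩ
      (left_mem_segment ℝ _ _) hyΩ (right_mem_segment ℝ _ _) hw
    have h5 := infDist_le_dist_of_mem hwf (x := y)
    refine h5.trans ?_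
    obtain ⟨a, b, ha, hb, hab, rfl⟩ := hws
    have h6 : y - (a • y + b • (y - t • ν)) = (b * t) • ν := by
      have : a = 1 - b := by linarith
      rw [this]; module
    rw [dist_eq_norm, h6, norm_smul, hB.1, mul_one, Real.norm_of_nonneg (by positivity)]
    have : b * t ≤ 1 * t := mul_le_mul_of_nonneg_right (by linarith) ht0
    linarith

end Aux11

section Aux12

open Topology

set_option maxHeartbeats 1000000 in
lemma main_aux {n : ℕ} (hn : 1 ≤ n)
    (p β dp : ℝ) (hp : 2 < p) (hβ : β = 1 / (p - 1)) (hdp : dp = β ^ β)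
    (Ω : Set (EuclideanSpace ℝ (Fin n))) (hΩo : IsOpen Ω) (hΩb : Bornology.IsBounded Ω) (hΩc2 : IsC2Boundary Ω)
    (M : ℝ) (hM : 0 < M) (ε : ℝ) (hε : 0 < ε) :
    ∃ C > 0, ∀ (f u : EuclideanSpace ℝ (Fin n) → ℝ)
      (G : EuclideanSpace ℝ (Fin n) → EuclideanSpace ℝ (Fin n))
      (H : EuclideanSpace ℝ (Fin n) → EuclideanSpace ℝ (Fin n) →L[ℝ] EuclideanSpace ℝ (Fin n)),
      (∀ x ∈ Ω, |f x| ≤ M) → (∀ x ∈ Ω, ∀ y ∈ Ω, |f x - f y| ≤ M * ‖x - y‖) →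
      ContinuousOn u (closure Ω) → Sol p Ω u f G H →
      (∀ x ∈ frontier Ω, u x = 0) →
      ∀ x ∈ Ω, ‖G x‖ ≤ (1 + ε) * dp * (infDist x (frontier Ω)) ^ (-β) + C := by
  have hp1 : 0 < p - 1 := by linarith
  have hβ0 : 0 < β := by rw [hβ]; positivity
  have hβ1 : β < 1 := by rw [hβ, div_lt_one hp1]; linarith
  have h1β : 0 < 1 - β := by linarith
  have hββ : β * (p - 1) = 1 := by rw [hβ]; field_simp
  have hdp0 : 0 < dp := by rw [hdp]; positivity
  obtain ⟨R, hR, hgeo⟩ := geo hΩc2 hΩb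
  obtain ⟨D, hD, hΩD⟩ : ∃ D > 0, ∀ x ∈ Ω, ∀ z ∈ frontier Ω, ‖x - z‖ ≤ D := by
    obtain ⟨D, hD⟩ := Metric.isBounded_iff.mp hΩb.closure
    refine ⟨max D 1, lt_max_of_lt_right one_pos, fun x hx z hz => ?_⟩
    rw [← dist_eq_norm]
    exact (hD (subset_closure hx) (frontier_subset_closure hz)).trans (le_max_left _ _)
  obtain ⟨C0, hC0, hcrude⟩ := crude n hp hβ hM.le hD
  obtain ⟨C1, hC1, hlow⟩ := lower_bound (p := p) hn hM.le hR hD hΩo hΩb hΩD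
  set C2 := max C0 (C0 / (1 - β)) with hC2
  have hC20 : 0 < C2 := lt_max_of_lt_left hC0
  set ε' := min 1 (ε / 3) with hε'
  have hε'0 : 0 < ε' := lt_min one_pos (by positivity)
  have hε'1 : ε' ≤ 1 := min_le_left _ _
  have hε'2 : ε' ≤ ε / 3 := min_le_right _ _
  obtain ⟨A, η, hA, hη, hη1, hηε, hmodel⟩ := model_concl n hp hββ hβ0 hβ1 hC20 hε'0
  set Q := C1 * (A + 1) + M with hQ
  have hQ0 : 0 < Q := by positivity
  set d0 := min 1 (min (R * η / (A + 1) ^ 2) ((η / Q) ^ (1 / β))) with hd0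
  have hd00 : 0 < d0 := lt_min one_pos (lt_min (by positivity) (by positivity))
  refine ⟨C0 * d0 ^ (-β), by positivity, fun f u G H hf1 hf2 huc hS hu0 x0 hx0 => ?_⟩
  have hne : (frontier Ω).Nonempty := frontier_nonempty' hn hΩb ⟨x0, hx0⟩
  have hcr : ∀ x ∈ Ω, ‖G x‖ ≤ C0 * (infDist x (frontier Ω)) ^ (-β) := by
    intro x hx
    refine hcrude Ω u f G H hS hf1 hf2 x _ (infDist_frontier_pos hΩo hne hx) ?_ (ball_subset_of_frontier hΩo hx)
    obtain ⟨z, hz⟩ := hne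
    have := infDist_le_dist_of_mem hz (x := x)
    rw [dist_eq_norm] at this
    exact this.trans (hΩD x hx z hz)
  obtain ⟨z, hz, hzd⟩ := isClosed_frontier.exists_infDist_eq_dist hne x0
  have hd1 := infDist_frontier_pos hΩo hne hx0
  have hcr0 := hcr x0 hx0
  set d := infDist x0 (frontier Ω) with hd
  have hdβ : 0 < d ^ (-β) := by positivity
  rcases le_total d0 d with hcase | hcase
  · have h1 := rpow_anti hd00 hcase hβ0.le
    have h2 := mul_le_mul_of_nonneg_left h1 hC0.le
    have h3 : 0 < (1 + ε) * dp * d ^ (-β) := by positivity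
    linarith
  · have hxz : ‖x0 - z‖ = d := by rw [hzd, dist_eq_norm]
    obtain ⟨ν, hB⟩ := hgeo z hz
    have hx0e := nearest_eq hΩo hR hx0 hB hd hd1 hxz
    set l := d / (1 + η) with hl
    have hl0 : 0 < l := by positivity
    have hld : l * (1 + η) = d := by rw [hl]; field_simp
    have hld' : l ≤ d := by
      have := mul_pos hl0 hη
      linarith
    have hld0 : l ≤ d0 := hld'.trans hcase
    have hl1 : l ≤ 1 := hld0.trans (min_le_left _ _)
    have hlA : l * (A + 1) ^ 2 ≤ R * η := by
      have : l ≤ R * η / (A + 1) ^ 2 := hld0.trans ((min_le_right _ _).trans (min_le_left _ _))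
      rwa [le_div_iff₀ (by positivity)] at this
    have hlβ : l ^ β * Q ≤ η := by
      have h1 : l ≤ (η / Q) ^ (1 / β) := hld0.trans ((min_le_right _ _).trans (min_le_right _ _))
      have h2 := Real.rpow_le_rpow hl0.le h1 hβ0.le
      rw [← Real.rpow_mul (by positivity), one_div_mul_cancel hβ0.ne', Real.rpow_one,
        le_div_iff₀ hQ0] at h2
      exact h2
    have hlβ0 : 0 < l ^ β := by positivity
    have hQ1 : l ^ β * (C1 * (A + 1)) ≤ η := by
      have : l ^ β * (C1 * (A + 1)) ≤ l ^ β * Q := mul_le_mul_of_nonneg_left (by linarith) hlβ0.le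
      linarith
    have hQ2 : l ^ β * M ≤ η := by
      have : l ^ β * M ≤ l ^ β * Q := mul_le_mul_of_nonneg_left (by
        have : 0 < C1 * (A + 1) := by positivity
        linarith) hlβ0.le
      linarith
    have e1 : l ^ (β - 1) * l = l ^ β := by
      rw [← Real.rpow_add_one hl0.ne']; ring_nf
    have e2 : l ^ β * l = l ^ (1 + β) := by
      rw [← Real.rpow_add_one hl0.ne']; ring_nf
    have hl1β : l ^ (1 + β) * M ≤ η := by
      rw [← e2]
      have : l ^ β * l ≤ l ^ β * 1 := mul_le_mul_of_nonneg_left hl1 hlβ0.le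
      have := mul_le_mul_of_nonneg_right this hM.le
      linarith
    have hl1β0 : 0 < l ^ (1 + β) := by positivity
    have hg : ∀ x ∈ HB ν A, _ := fun x hx =>
      halfball_geo hΩo hR hne hB (by linarith) hη hη1 hl0 hlA hx
    set z' := z + (l * η) • ν with hz'
    have hsub : HB ν A ⊆ (fun x => z' + l • x) ⁻¹' Ω := fun x hx => (hg x hx).1
    have hMod : Model p β C2 A η ν (fun x => l ^ (β - 1) * u (z' + l • x))
      (fun x => l ^ (1 + β) * f (z' + l • x)) (fun x => l ^ β • G (z' + l • x))
      (fun x => l ^ (1 + β) • H (z' + l • x)) := by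
      refine ⟨(hS.scale hββ hl0 z').mono (isOpen_HB ν A) hsub, hB.1, hη.le, ?_, ?_, ?_, ?_, ?_⟩
      · intro x hx
        simp only [abs_mul, abs_of_pos hl1β0]
        exact (mul_le_mul_of_nonneg_left (hf1 _ (hg x hx).1) hl1β0.le).trans hl1β
      · intro x hx y hy
        rw [← mul_sub, abs_mul, abs_of_pos hl1β0]
        have h1 := hf2 _ (hg x hx).1 _ (hg y hy).1
        have e : z' + l • x - (z' + l • y) = l • (x - y) := by module
        rw [e, norm_smul, Real.norm_of_nonneg hl0.le] at h1
        have h2 := mul_le_mul_of_nonneg_left h1 hl1β0.le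
        have h3 : l * ‖x - y‖ ≤ 1 * ‖x - y‖ := mul_le_mul_of_nonneg_right hl1 (norm_nonneg _)
        have h4 := mul_le_mul_of_nonneg_left h3 (by positivity : 0 ≤ l ^ (1 + β) * M)
        have h5 := mul_le_mul_of_nonneg_right hl1β (norm_nonneg (x - y))
        linarith
      · intro x hx
        obtain ⟨g1, g2, g3, g4⟩ := hg x hx
        have hs0 : 0 < ⟪ν, x⟫ := hx.1
        rw [norm_smul, Real.norm_of_nonneg hlβ0.le]
        have h1 := hcr _ g1
        have h2 := rpow_anti (mul_pos hl0 hs0) g2 hβ0.le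
        rw [Real.mul_rpow hl0.le hs0.le] at h2
        have h3 := h1.trans (mul_le_mul_of_nonneg_left h2 hC0.le)
        have h4 := mul_le_mul_of_nonneg_left h3 hlβ0.le
        have e3 : l ^ β * l ^ (-β) = 1 := by
          rw [← Real.rpow_add hl0, add_neg_cancel, Real.rpow_zero]
        have e4 : l ^ β * (C0 * (l ^ (-β) * ⟪ν, x⟫ ^ (-β))) = C0 * ⟪ν, x⟫ ^ (-β) := by
          linear_combination (C0 * ⟪ν, x⟫ ^ (-β)) * e3
        rw [e4] at h4
        exact h4.trans (mul_le_mul_of_nonneg_right (le_max_left _ _) (by positivity))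
      · intro x hx
        obtain ⟨g1, g2, g3, g4⟩ := hg x hx
        have hs0 : 0 < ⟪ν, x⟫ := hx.1
        have h1 := upper_bound hβ0 hβ1 hC0 hΩo hne hS hcr huc hu0 g1
        have h2 := Real.rpow_le_rpow infDist_nonneg g3 h1β.le
        rw [Real.mul_rpow hl0.le (by positivity)] at h2
        have h3 := h1.trans (mul_le_mul_of_nonneg_left h2 (by positivity))
        have h4 := mul_le_mul_of_nonneg_left h3 (by positivity : 0 ≤ l ^ (β - 1))
        have e3 : l ^ (β - 1) * l ^ (1 - β) = 1 := by
          rw [← Real.rpow_add hl0]; ring_nf; exact Real.rpow_zero l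
        have e4 : l ^ (β - 1) * (C0 / (1 - β) * (l ^ (1 - β) * (⟪ν, x⟫ + 2 * η) ^ (1 - β)))
            = C0 / (1 - β) * (⟪ν, x⟫ + 2 * η) ^ (1 - β) := by
          linear_combination (C0 / (1 - β) * (⟪ν, x⟫ + 2 * η) ^ (1 - β)) * e3
        rw [e4] at h4
        exact h4.trans (mul_le_mul_of_nonneg_right (le_max_right _ _) (by positivity))
      · intro x hx
        obtain ⟨g1, g2, g3, g4⟩ := hg x hx
        have h1 := hlow u f G H hS hf1 huc hu0 z hz ν hB _ g1
        have h2 := mul_le_mul_of_nonneg_left g4 hC1.le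
        have h3 : -(C1 * (l * (A + 1))) ≤ u (z' + l • x) := by linarith
        have h4 := mul_le_mul_of_nonneg_left h3 (by positivity : 0 ≤ l ^ (β - 1))
        have e4 : l ^ (β - 1) * -(C1 * (l * (A + 1))) = -(l ^ β * (C1 * (A + 1))) := by
          linear_combination (-(C1 * (A + 1))) * e1
        rw [e4] at h4
        linarith
    have hfinal := hmodel ν _ _ _ _ hMod
    have hzν : z' + l • ν = x0 := by rw [hx0e, hz', ← hld]; module
    rw [hzν, norm_smul, Real.norm_of_nonneg hlβ0.le, ← hdp] at hfinal
    have hlm : l ^ (-β) = (1 + η) ^ β * d ^ (-β) := by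
      rw [hl, Real.div_rpow hd1.le (by positivity), Real.rpow_neg (by positivity : 0 ≤ 1 + η), div_inv_eq_mul, mul_comm]
    have h1η : (1 + η) ^ β ≤ 1 + ε' := by
      have : (1 + η) ^ β ≤ (1 + η) ^ (1:ℝ) := Real.rpow_le_rpow_of_exponent_le (by linarith) hβ1.le
      rw [Real.rpow_one] at this
      linarith
    have e3 : l ^ (-β) * l ^ β = 1 := by
      rw [← Real.rpow_add hl0, neg_add_cancel, Real.rpow_zero]
    have h5 := mul_le_mul_of_nonneg_left hfinal (by positivity : 0 ≤ l ^ (-β))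
    have e4 : l ^ (-β) * (l ^ β * ‖G x0‖) = ‖G x0‖ := by linear_combination ‖G x0‖ * e3
    rw [e4, hlm] at h5
    have h6 : (1 + η) ^ β * (1 + ε') ≤ 1 + ε := by
      have : (1 + η) ^ β * (1 + ε') ≤ (1 + ε') * (1 + ε') := mul_le_mul_of_nonneg_right h1η (by linarith)
      have h7 : ε' * ε' ≤ 1 * ε' := mul_le_mul_of_nonneg_right hε'1 hε'0.le
      linarith
    have h7 := mul_le_mul_of_nonneg_right h6 (by positivity : 0 ≤ dp * d ^ (-β))
    have h8 : 0 < C0 * d0 ^ (-β) := by positivity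
    linarith

end Aux12

theorem stmt12 {n : ℕ} (hn : 1 ≤ n)
    (p β dp : ℝ) (hp : 2 < p) (hβ : β = 1 / (p - 1)) (hdp : dp = β ^ β)
    (Ω : Set (EuclideanSpace ℝ (Fin n))) (hΩo : IsOpen Ω) (hΩb : Bornology.IsBounded Ω) (hΩc2 : IsC2Boundary Ω)
    (δ : EuclideanSpace ℝ (Fin n) → ℝ) (hδ : ∀ x, δ x = infDist x (frontier Ω))
    (M : ℝ) (hM : 0 < M) :
    ∀ ε > 0, ∃ C > 0, ∀ f u : EuclideanSpace ℝ (Fin n) → ℝ,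
      (∀ x ∈ Ω, |f x| ≤ M) → LipschitzOnWith (Real.toNNReal M) f Ω →
      ContDiffOn ℝ 2 u Ω → ContinuousOn u (closure Ω) →
      (∀ x ∈ Ω, -lap u x = ‖gradient u x‖ ^ p + f x) →
      (∀ x ∈ frontier Ω, u x = 0) →
      ∀ x ∈ Ω, ‖gradient u x‖ ≤ (1 + ε) * dp * (δ x) ^ (-β) + C := by
  intro ε hε
  obtain ⟨C, hC, h⟩ := main_aux hn p β dp hp hβ hdp Ω hΩo hΩb hΩc2 M hM ε hε
  refine ⟨C, hC, fun f u hf hfl hu huc heq hu0 x hx => ?_⟩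
  rw [hδ]
  refine h f u (gradient u) _ hf ?_ huc (Sol.of_C2 hΩo hu heq) hu0 x hx
  intro y hy w hw
  have := hfl.dist_le_mul y hy w hw
  rwa [Real.dist_eq, dist_eq_norm, Real.coe_toNNReal M hM.le] at this
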